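/- arXiv:1901.02409 — 6 statements merged into one kernel-verified Lean document; each statement's English description precedes it below -/
import Mathlib

section
/- Let u be a semi-stable radial classical solution. Then for every continuously differentiable function η : (0,1) → ℝ with compact support in (0,1) one has ∫₀¹ |u'(r)|^p [ (p−1) η'(r)² + (d/dr)( (N−1) ψ'(r)/ψ(r) ) η(r)² ] ψ(r)^{N−1} dr ≥ 0. In particular this second-variation inequality does not involve the nonlinearity f. -/
open MeasureTheory Set Filter

/-! Write `v = -u' > 0`, `H = (N-1) ψ'/ψ` and `W = ψ^(N-1)`, so that `W' = H W`. The equation reads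
`(v^(p-1))' = f(u) - H v^(p-1)`; its right-hand side `E` is `C¹`, with derivative
`f'(u) u' - (H v^(p-1))'`, although `u` is only `C²`.

Semi-stability is tested with `ξ = u' η`, which is `C¹` and supported in `(0,1)`. Expanding
`ξ' = u'' η + u' η'` and eliminating `f'(u)` through `E'` shows that the stability integrand equals
the second-variation integrand plus the exact derivative of `F = W v E η²`
(`stability_integrand_eq`). Since `F` is `C¹` with compact support in `(0,1)`, this derivative
integrates to zero, and the second-variation integral equals the stability integral of `ξ`. -/

/-- A product with a factor supported in an open set `s` is globally `C^n` as soon as both factors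
are `C^n` on `s`. -/
lemma contDiff_mul_of_tsupport_subset {n : WithTop ℕ∞} {s : Set ℝ} (hs : IsOpen s) {g k : ℝ → ℝ}
    (hg : ContDiffOn ℝ n g s) (hk : ContDiffOn ℝ n k s) (hsupp : tsupport k ⊆ s) :
    ContDiff ℝ n (fun r => g r * k r) := by
  rw [contDiff_iff_contDiffAt]
  intro r
  by_cases hr : r ∈ tsupport k
  · exact (hg.mul hk).contDiffAt (hs.mem_nhds (hsupp hr))
  · rw [notMem_tsupport_iff_eventuallyEq] at hr
    refine (contDiffAt_const (c := (0 : ℝ))).congr_of_eventuallyEq ?_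
    filter_upwards [hr] with x hx
    simp [hx]

/-- Off the support of `η`, a quadratic form in `(η, η')` vanishes; hence it is continuous once its
coefficients are continuous on an open set containing that support. -/
lemma continuous_quadratic_of_tsupport_subset {s : Set ℝ} (hs : IsOpen s) {a b η : ℝ → ℝ}
    (ha : ContinuousOn a s) (hb : ContinuousOn b s) (hη : ContDiff ℝ 1 η)
    (hsupp : tsupport η ⊆ s) :
    Continuous (fun r => a r * deriv η r ^ 2 + b r * η r ^ 2) := by
  have hη' : Continuous (deriv η) := hη.continuous_deriv le_rfl
  refine ContinuousOn.continuous_of_tsupport_subset (s := s) ?_ hs ?_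
  · exact (ha.mul (hη'.pow 2).continuousOn).add (hb.mul (hη.continuous.pow 2).continuousOn)
  · refine (closure_minimal (fun r hr => ?_) (isClosed_tsupport η)).trans hsupp
    by_contra h
    apply hr
    simp [image_eq_zero_of_notMem_tsupport h, deriv_of_notMem_tsupport h]

/-- The pointwise identity behind the second-variation formula: at a point `r` where `u' < 0`
and the radial equation holds, the stability integrand for `ξ = u' η` is the second-variation
integrand plus the derivative of `W v E η²`, where `v = -u'`, `W = ψ^(n-1)`,
`H = (n-1) ψ'/ψ` and `E = f(u) - H v^(p-1)`. -/
lemma stability_integrand_eq {n p : ℝ} {ψ f u η H : ℝ → ℝ} {r : ℝ}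
    (hψ : DifferentiableAt ℝ ψ r) (hψpos : 0 < ψ r)
    (hHr : H r = (n - 1) * deriv ψ r / ψ r) (hH : DifferentiableAt ℝ H r)
    (hf : DifferentiableAt ℝ f (u r))
    (hu : DifferentiableAt ℝ u r) (hu2 : DifferentiableAt ℝ (deriv u) r) (hu' : deriv u r < 0)
    (heq : -(p - 1) * |deriv u r| ^ (p - 2) * deriv (deriv u) r
        - (n - 1) * (deriv ψ r / ψ r) * |deriv u r| ^ (p - 2) * deriv u r = f (u r))
    (hη : DifferentiableAt ℝ η r) :
    ((p - 1) * |deriv u r| ^ (p - 2) * (deriv (fun s => deriv u s * η s) r) ^ 2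
        - deriv f (u r) * (deriv u r * η r) ^ 2) * ψ r ^ (n - 1)
      = |deriv u r| ^ p * ((p - 1) * (deriv η r) ^ 2 + deriv H r * η r ^ 2) * ψ r ^ (n - 1)
        + deriv (fun s => ψ s ^ (n - 1) * (-deriv u s) *
            (f (u s) - H s * (-deriv u s) ^ (p - 1)) * η s ^ 2) r := by
  have hv : 0 < -deriv u r := neg_pos.mpr hu'
  have hW := hψ.hasDerivAt.rpow_const (p := n - 1) (Or.inl hψpos.ne')
  have hv' := hu2.hasDerivAt.neg
  have hvp := hv'.rpow_const (p := p - 1) (Or.inl hv.ne')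
  have hfu := hf.hasDerivAt.comp r hu.hasDerivAt
  have hF := ((hW.mul hv').mul (hfu.sub (hH.hasDerivAt.mul hvp))).mul (hη.hasDerivAt.pow 2)
  have hξ := (hu2.hasDerivAt.mul hη.hasDerivAt).deriv
  have hF' : deriv (fun s => ψ s ^ (n - 1) * (-deriv u s) *
      (f (u s) - H s * (-deriv u s) ^ (p - 1)) * η s ^ 2) r = _ := hF.deriv
  change deriv (fun s => deriv u s * η s) r = _ at hξ
  rw [hF', hξ]
  simp only [Pi.mul_apply, Pi.sub_apply, Pi.neg_apply, Pi.pow_apply, Function.comp_apply]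
  rw [abs_of_neg hu'] at heq ⊢
  have e1 : (-deriv u r) ^ (p - 1) = (-deriv u r) ^ (p - 2) * (-deriv u r) := by
    rw [← Real.rpow_add_one hv.ne']; congr 1; ring
  have e2 : (-deriv u r) ^ p = (-deriv u r) ^ (p - 2) * (-deriv u r) ^ 2 := by
    rw [← Real.rpow_add_natCast hv.ne']; congr 1; push_cast; ring
  have e3 : p - 1 - 1 = p - 2 := by ring
  -- Replacing `f(u)` by the equation turns `E` into `(p-1) v^(p-2) v'`, and every power of `v`
  -- is now `v^(p-2)` times a monomial, so only an algebraic identity remains.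
  rw [e3, e1, e2, Real.rpow_sub_one hψpos.ne' (n - 1), ← heq, hHr]
  have := hψpos.ne'
  field_simp
  ring

/-- Second variation inequality for semi-stable radial classical
solutions: for every C¹ test function η with compact support in (0,1),
∫₀¹ |u'|^p [ (p−1) η'² + ((N−1)ψ'/ψ)' η² ] ψ^{N−1} dr ≥ 0. -/
theorem second_variation_nonneg
    (N : ℕ) (hN : 2 ≤ N) (p : ℝ) (hp1 : 1 < p) (hpN : p ≤ N)
    (ψ : ℝ → ℝ) (hψ : ContDiffOn ℝ (⊤ : ℕ∞) ψ (Set.Ico 0 1))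
    (hψ0 : ψ 0 = 0) (hψ'0 : deriv ψ 0 = 1) (hψ''0 : deriv (deriv ψ) 0 = 0)
    (hψpos : ∀ r ∈ Set.Ioo (0:ℝ) 1, 0 < ψ r)
    (f : ℝ → ℝ) (hf : ContDiff ℝ 1 f)
    (u : ℝ → ℝ) (hu : ContDiffOn ℝ 2 u (Set.Ioo 0 1))
    (hu' : ∀ r ∈ Set.Ioo (0:ℝ) 1, deriv u r < 0)
    (heq : ∀ r ∈ Set.Ioo (0:ℝ) 1,
      -(p - 1) * |deriv u r| ^ (p - 2) * deriv (deriv u) r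
        - ((N : ℝ) - 1) * (deriv ψ r / ψ r) * |deriv u r| ^ (p - 2) * deriv u r
        = f (u r))
    (hstab : ∀ ξ : ℝ → ℝ, ContDiff ℝ 1 ξ → tsupport ξ ⊆ Set.Ioo (0:ℝ) 1 →
      0 ≤ ∫ r in (0:ℝ)..1,
        ((p - 1) * |deriv u r| ^ (p - 2) * (deriv ξ r) ^ 2
          - deriv f (u r) * ξ r ^ 2) * ψ r ^ ((N : ℝ) - 1)) :
    ∀ η : ℝ → ℝ, ContDiff ℝ 1 η → tsupport η ⊆ Set.Ioo (0:ℝ) 1 →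
      0 ≤ ∫ r in (0:ℝ)..1,
        |deriv u r| ^ p *
          ((p - 1) * (deriv η r) ^ 2
            + deriv (fun s => ((N : ℝ) - 1) * deriv ψ s / ψ s) r * η r ^ 2)
          * ψ r ^ ((N : ℝ) - 1) := by
  intro η hη hsupp
  set I : Set ℝ := Set.Ioo 0 1 with hI
  have hIo : IsOpen I := isOpen_Ioo
  set H : ℝ → ℝ := fun s => ((N : ℝ) - 1) * deriv ψ s / ψ s with hHdef
  have hψI : ContDiffOn ℝ (⊤ : ℕ∞) ψ I := hψ.mono Ioo_subset_Ico_self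
  have hψ1 : ContDiffOn ℝ 1 ψ I := hψI.of_le (by exact_mod_cast le_top)
  have hψ' : ContDiffOn ℝ 1 (deriv ψ) I := hψI.deriv_of_isOpen hIo
    (WithTop.coe_le_coe.mpr (le_top : (1 + 1 : ℕ∞) ≤ ⊤))
  have hHI : ContDiffOn ℝ 1 H I :=
    (contDiffOn_const.mul hψ').div hψ1 fun r hr => (hψpos r hr).ne'
  have hu2 : ContDiffOn ℝ 1 (deriv u) I := hu.deriv_of_isOpen hIo (by norm_num)
  have hW : ContDiffOn ℝ 1 (fun s => ψ s ^ ((N : ℝ) - 1)) I :=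
    hψ1.rpow_const_of_ne fun r hr => (hψpos r hr).ne'
  have hvp : ContDiffOn ℝ 1 (fun s => (-deriv u s) ^ (p - 1)) I :=
    hu2.neg.rpow_const_of_ne fun r hr => (neg_pos.mpr (hu' r hr)).ne'
  have hfu : ContDiffOn ℝ 1 (fun s => f (u s)) I :=
    hf.comp_contDiffOn (hu.of_le (by norm_num))
  have hη2 : tsupport (fun s => η s ^ 2) ⊆ I := by
    refine Subset.trans ?_ hsupp
    exact tsupport_comp_subset (g := fun x : ℝ => x ^ 2) (by norm_num) η
  set F : ℝ → ℝ := fun s => ψ s ^ ((N : ℝ) - 1) * (-deriv u s) *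
    (f (u s) - H s * (-deriv u s) ^ (p - 1)) * η s ^ 2 with hFdef
  have hF : ContDiff ℝ 1 F :=
    contDiff_mul_of_tsupport_subset hIo ((hW.mul hu2.neg).mul (hfu.sub (hHI.mul hvp)))
      (hη.pow 2).contDiffOn hη2
  have hF' : Continuous (deriv F) := hF.continuous_deriv le_rfl
  have hFint : ∫ r in (0:ℝ)..1, deriv F r = 0 := by
    have h0 : η 0 = 0 := image_eq_zero_of_notMem_tsupport fun h => lt_irrefl _ (hsupp h).1
    have h1 : η 1 = 0 := image_eq_zero_of_notMem_tsupport fun h => lt_irrefl _ (hsupp h).2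
    rw [intervalIntegral.integral_deriv_eq_sub
      (fun x _ => (hF.differentiable one_ne_zero) x) (hF'.intervalIntegrable _ _)]
    simp [hFdef, h0, h1]
  have hξ : ContDiff ℝ 1 (fun s => deriv u s * η s) :=
    contDiff_mul_of_tsupport_subset hIo hu2 hη.contDiffOn hsupp
  have key := hstab _ hξ (tsupport_mul_subset_right.trans hsupp)
  have hT : Continuous (fun r => |deriv u r| ^ p *
      ((p - 1) * (deriv η r) ^ 2 + deriv H r * η r ^ 2) * ψ r ^ ((N : ℝ) - 1)) := by
    have hvp' : ContinuousOn (fun s => |deriv u s| ^ p) I :=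
      hu2.continuousOn.abs.rpow_const fun r hr => Or.inl (abs_pos.mpr (hu' r hr).ne).ne'
    have hH' : ContinuousOn (deriv H) I := hHI.continuousOn_deriv_of_isOpen hIo le_rfl
    refine (continuous_quadratic_of_tsupport_subset hIo
      (a := fun r => |deriv u r| ^ p * (p - 1) * ψ r ^ ((N : ℝ) - 1))
      (b := fun r => |deriv u r| ^ p * deriv H r * ψ r ^ ((N : ℝ) - 1))
      ((hvp'.mul continuousOn_const).mul hW.continuousOn)
      ((hvp'.mul hH').mul hW.continuousOn) hη hsupp).congr fun r => ?_
    ring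
  have hpt : ∀ r ∈ I, _ := fun r hr =>
    have hn := hIo.mem_nhds hr
    stability_integrand_eq (n := N) (p := p) (f := f) (η := η) (H := H)
      ((hψ1.contDiffAt hn).differentiableAt one_ne_zero) (hψpos r hr) rfl
      ((hHI.contDiffAt hn).differentiableAt one_ne_zero)
      (hf.differentiable one_ne_zero _) ((hu.contDiffAt hn).differentiableAt two_ne_zero)
      ((hu2.contDiffAt hn).differentiableAt one_ne_zero) (hu' r hr) (heq r hr)
      (hη.differentiable one_ne_zero r)
  rw [intervalIntegral.integral_congr_Ioo_of_le zero_le_one hpt,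
    intervalIntegral.integral_add (hT.intervalIntegrable _ _) (hF'.intervalIntegrable _ _),
    hFint, add_zero] at key
  exact key
end

section
/- Let u be a semi-stable radial classical solution and let δ ∈ (0,1/2) be such that ψ'(r) > 0 for all r ∈ [0,δ]. Then for each real α with 1 ≤ α < 1 + √((N−1)/(p−1)) there exists a constant C, depending only on N, p, α and ψ, such that ∫₀^δ |u'(r)|^p ψ(r)^{N−1−2α} dr ≤ C ∫₀^δ |u'(r)|^p ψ(r)^{N−1−α} (1 + ψ(r)^{1−α}) dr, where both sides are Lebesgue integrals of nonnegative functions and may equal +∞. -/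
open MeasureTheory Set Filter

/-!
Write `v = -u'` and `n = N - 1`. Testing semi-stability with `ξ = v η` and using the equation
differentiated once gives, for every `C¹` function `η` with compact support in `(0, 1)`,
`n ∫ v^p ψ^n (ψ'² - ψ ψ'') / ψ² η² ≤ (p - 1) ∫ v^p ψ^n η'²` (`reduced_stability`).

Formally one takes `η = ψ^(1-α)` near `0`. The terms in `ψ'²` then leave
`(n - (p - 1)(α - 1)²) ∫ v^p ψ^(n-2α) ψ'²`, with a positive coefficient by the hypothesis on `α`,
while the term in `ψ''` is controlled by `∫ v^p ψ^(n-2α+1)`, part of the right-hand side. Since `u`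
may be singular at `0`, this `η` has to be cut off there, and an ordinary cutoff at scale `η₀` costs
a piece of the left-hand side, not known to be finite. The remedy is the weight
`ψ^(1-α) (ψ / (ψ + ε))^(1/2)`. The coefficient of its logarithmic slope lies in `[1 - α, 3/2 - α]`,
which is still admissible because `p ≤ N` makes `√((N-1)/(p-1))` at least `1` (`exists_margin`). For
fixed `ε`, its cutoff at scale `η₀` costs only `ε⁻¹ ∫ v^p ψ^(n-2α+1)` over `(0, 2η₀)`, which tends
to `0` with `η₀` as soon as the right-hand side is finite. With `ε` comparable to `t` this bounds
the left-hand side over `[t, δ/2]` uniformly in `t` (`interior_estimate`); then `t` tends to `0`,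
and on `(δ/2, δ)` the two weights are comparable.
-/

/-! ### Elimination of the nonlinearity -/

/-- With `v = -u'`, the stability form at `ξ = v η` differs from the reduced form by the derivative
of `ψ^n v (f(u) - n (ψ'/ψ) v^(p-1)) η²`. By the equation this function equals
`(p-1) ψ^n v^(p-1) v' η²`, but the former expression is visibly differentiable when `u` is only
`C²`. -/
lemma identity_integral {n p a b : ℝ} (hab : a ≤ b)
    {ψ ψ₁ ψ₂ u v v₁ f f₁ η η₁ : ℝ → ℝ}
    (hψ : ∀ r ∈ Icc a b, HasDerivAt ψ (ψ₁ r) r)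
    (hψ₁ : ∀ r ∈ Icc a b, HasDerivAt ψ₁ (ψ₂ r) r)
    (hψ₂ : ContinuousOn ψ₂ (Icc a b))
    (hu : ∀ r ∈ Icc a b, HasDerivAt u (-v r) r)
    (hv : ∀ r ∈ Icc a b, HasDerivAt v (v₁ r) r)
    (hv₁ : ContinuousOn v₁ (Icc a b))
    (hf : ∀ x, HasDerivAt f (f₁ x) x) (hf₁ : Continuous f₁)
    (hη : ∀ r ∈ Icc a b, HasDerivAt η (η₁ r) r)
    (hη₁ : ContinuousOn η₁ (Icc a b))
    (hψpos : ∀ r ∈ Icc a b, 0 < ψ r) (hvpos : ∀ r ∈ Icc a b, 0 < v r)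
    (heq : ∀ r ∈ Icc a b,
      (p - 1) * v r ^ (p - 2) * v₁ r + n * (ψ₁ r / ψ r) * v r ^ (p - 2) * v r = f (u r))
    (ha : η a = 0) (hb : η b = 0) :
    ∫ r in a..b, ((p - 1) * v r ^ (p - 2) * (v₁ r * η r + v r * η₁ r) ^ 2
        - f₁ (u r) * (v r * η r) ^ 2) * ψ r ^ n
      = ∫ r in a..b, v r ^ p * ψ r ^ n *
          ((p - 1) * η₁ r ^ 2 + n * ((ψ₂ r * ψ r - ψ₁ r ^ 2) / ψ r ^ 2) * η r ^ 2) := by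
  have cψ : ContinuousOn ψ (Icc a b) := fun r hr => (hψ r hr).continuousAt.continuousWithinAt
  have cψ₁ : ContinuousOn ψ₁ (Icc a b) := fun r hr => (hψ₁ r hr).continuousAt.continuousWithinAt
  have cu : ContinuousOn u (Icc a b) := fun r hr => (hu r hr).continuousAt.continuousWithinAt
  have cv : ContinuousOn v (Icc a b) := fun r hr => (hv r hr).continuousAt.continuousWithinAt
  have cη : ContinuousOn η (Icc a b) := fun r hr => (hη r hr).continuousAt.continuousWithinAt
  have cf₁ : ContinuousOn (fun r => f₁ (u r)) (Icc a b) := hf₁.comp_continuousOn cu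
  have cvp : ∀ q : ℝ, ContinuousOn (fun r => v r ^ q) (Icc a b) := fun q =>
    cv.rpow_const fun r hr => Or.inl (hvpos r hr).ne'
  have cψp : ∀ q : ℝ, ContinuousOn (fun r => ψ r ^ q) (Icc a b) := fun q =>
    cψ.rpow_const fun r hr => Or.inl (hψpos r hr).ne'
  have c1 : ContinuousOn (fun r => ((p - 1) * v r ^ (p - 2) * (v₁ r * η r + v r * η₁ r) ^ 2
        - f₁ (u r) * (v r * η r) ^ 2) * ψ r ^ n) (Icc a b) := by
    have := cvp (p - 2)
    have := cψp n
    fun_prop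
  have c2 : ContinuousOn (fun r => v r ^ p * ψ r ^ n *
      ((p - 1) * η₁ r ^ 2 + n * ((ψ₂ r * ψ r - ψ₁ r ^ 2) / ψ r ^ 2) * η r ^ 2)) (Icc a b) := by
    have := cvp p
    have := cψp n
    have : ContinuousOn (fun r => (ψ₂ r * ψ r - ψ₁ r ^ 2) / ψ r ^ 2) (Icc a b) :=
      ContinuousOn.div (by fun_prop) (by fun_prop) fun r hr => pow_ne_zero 2 (hψpos r hr).ne'
    fun_prop
  rw [← uIcc_of_le hab] at c1 c2
  rw [← sub_eq_zero, ← intervalIntegral.integral_sub c1.intervalIntegrable c2.intervalIntegrable]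
  refine (intervalIntegral.integral_eq_sub_of_hasDerivAt
    (f := fun r => ψ r ^ n * v r * (f (u r) - n * (ψ₁ r / ψ r) * v r ^ (p - 1)) * η r ^ 2)
    ?_ (c1.sub c2).intervalIntegrable).trans ?_
  rotate_left
  · simp [ha, hb]
  intro r hr
  rw [uIcc_of_le hab] at hr
  have hp := hψpos r hr
  have hq := hvpos r hr
  have e := heq r hr
  have d1 := (hψ r hr).rpow_const (p := n) (Or.inl hp.ne')
  have d2 := (hv r hr).rpow_const (p := p - 1) (Or.inl hq.ne')
  have d3 := (hf (u r)).comp r (hu r hr)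
  have d4 := ((hψ₁ r hr).div (hψ r hr) hp.ne').const_mul n
  have d5 := ((d1.mul (hv r hr)).mul (d3.sub (d4.mul d2))).mul ((hη r hr).pow 2)
  refine d5.congr_deriv ?_
  have e1 : ψ r ^ (n - 1) = ψ r ^ n / ψ r := by
    rw [Real.rpow_sub_one hp.ne']
  have e2 : v r ^ (p - 1) = v r ^ (p - 2) * v r := by
    rw [← Real.rpow_add_one hq.ne']; ring_nf
  have e3 : v r ^ p = v r ^ (p - 2) * v r * v r := by
    rw [← Real.rpow_add_one hq.ne', ← Real.rpow_add_one hq.ne']; ring_nf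
  have e4 : p - 1 - 1 = p - 2 := by ring
  simp only [Function.comp, Pi.mul_apply, Pi.div_apply, Pi.sub_apply, Pi.pow_apply]
  rw [e4, e1, e2, e3, ← e]
  field_simp
  ring

/-! ### Cutoffs and bounds on the warping function -/

/-- Cutoffs equal to `1` on `[2ε, δ/2]` and vanishing off `(ε, 3δ/4)`, with scale-invariant bounds
on the derivative. -/
lemma exists_cutoff : ∃ M : ℝ, 0 < M ∧ ∀ δ ε : ℝ, 0 < ε → 4 * ε < δ → ∃ χ : ℝ → ℝ,
    ContDiff ℝ 1 χ ∧ (∀ r, 0 ≤ χ r) ∧ (∀ r, χ r ≤ 1) ∧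
    (∀ r, r ∉ Ioo ε (3 * δ / 4) → χ r = 0) ∧
    (∀ r ∈ Icc (2 * ε) (δ / 2), χ r = 1) ∧
    (∀ r ∈ Ioc 0 (2 * ε), |r * deriv χ r| ≤ M) ∧
    (∀ r, 2 * ε ≤ r → |deriv χ r| ≤ M / δ) := by
  have hS : ContDiff ℝ 1 Real.smoothTransition := Real.smoothTransition.contDiff
  have hS' : ∀ x, HasDerivAt Real.smoothTransition (deriv Real.smoothTransition x) x := fun x =>
    (hS.differentiable (by norm_num) x).hasDerivAt
  have hc : Continuous (deriv Real.smoothTransition) := hS.continuous_deriv (by norm_num)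
  obtain ⟨M, hM⟩ := isCompact_Icc.exists_bound_of_continuousOn (s := Icc (0:ℝ) 1) hc.continuousOn
  have z0 : ∀ x : ℝ, x ≤ 0 → deriv Real.smoothTransition x = 0 := fun x hx => by
    have hmin : IsLocalMin Real.smoothTransition x := by
      filter_upwards with y
      rw [Real.smoothTransition.zero_of_nonpos hx]; exact Real.smoothTransition.nonneg y
    exact hmin.deriv_eq_zero
  have z1 : ∀ x : ℝ, 1 ≤ x → deriv Real.smoothTransition x = 0 := fun x hx => by
    have hmax : IsLocalMax Real.smoothTransition x := by
      filter_upwards with y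
      rw [Real.smoothTransition.one_of_one_le hx]; exact Real.smoothTransition.le_one y
    exact hmax.deriv_eq_zero
  have hM0 : 0 ≤ M := (norm_nonneg _).trans (hM 0 (by simp))
  have hb : ∀ x, |deriv Real.smoothTransition x| ≤ M := fun x => by
    by_cases h0 : x ≤ 0
    · simpa [z0 x h0] using hM0
    by_cases h1 : 1 ≤ x
    · simpa [z1 x h1] using hM0
    · exact hM x ⟨by linarith, by linarith⟩
  refine ⟨4 * M + 1, by linarith, fun δ ε hε hδ => ?_⟩
  have hδ0 : 0 < δ := by linarith
  have k1 : ∀ r, HasDerivAt (fun r => Real.smoothTransition (r / ε - 1))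
      (deriv Real.smoothTransition (r / ε - 1) * (1 / ε)) r := fun r =>
    (hS' _).comp r (((hasDerivAt_id r).div_const ε).sub_const 1)
  have k2 : ∀ r, HasDerivAt (fun r => Real.smoothTransition (3 - 4 * r / δ))
      (deriv Real.smoothTransition (3 - 4 * r / δ) * (-(4 * 1 / δ))) r := fun r =>
    (hS' _).comp r ((((hasDerivAt_id r).const_mul 4).div_const δ).const_sub 3)
  have k3 := fun r => ((k1 r).mul (k2 r)).deriv
  refine ⟨(fun r => Real.smoothTransition (r / ε - 1)) *
    (fun r => Real.smoothTransition (3 - 4 * r / δ)), ?_, ?_, ?_, ?_, ?_, ?_, ?_⟩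
  · exact (hS.comp (by fun_prop)).mul (hS.comp (by fun_prop))
  · exact fun r => mul_nonneg (Real.smoothTransition.nonneg _) (Real.smoothTransition.nonneg _)
  · exact fun r => mul_le_one₀ (Real.smoothTransition.le_one _) (Real.smoothTransition.nonneg _)
      (Real.smoothTransition.le_one _)
  · intro r hr
    rw [mem_Ioo, not_and_or, not_lt, not_lt] at hr
    rcases hr with hr | hr
    · have : Real.smoothTransition (r / ε - 1) = 0 :=
        Real.smoothTransition.zero_of_nonpos (by rw [sub_nonpos, div_le_one hε]; exact hr)
      simp [this]
    · have : Real.smoothTransition (3 - 4 * r / δ) = 0 :=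
        Real.smoothTransition.zero_of_nonpos (by rw [sub_nonpos, le_div_iff₀ hδ0]; linarith)
      simp [this]
  · intro r hr
    have h1 : Real.smoothTransition (r / ε - 1) = 1 :=
      Real.smoothTransition.one_of_one_le (by
        rw [le_sub_iff_add_le, le_div_iff₀ hε]; linarith [hr.1])
    have h2 : Real.smoothTransition (3 - 4 * r / δ) = 1 :=
      Real.smoothTransition.one_of_one_le (by
        rw [le_sub_comm, div_le_iff₀ hδ0]; linarith [hr.2])
    simp [h1, h2]
  · intro r hr
    have h2 : 1 ≤ 3 - 4 * r / δ := by
      rw [le_sub_comm, div_le_iff₀ hδ0]; linarith [hr.2]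
    rw [k3, z1 _ h2, Real.smoothTransition.one_of_one_le h2]
    have h3 : |r / ε| ≤ 2 := by
      rw [abs_of_pos (div_pos hr.1 hε), div_le_iff₀ hε]; exact hr.2
    have h4 := mul_le_mul h3 (hb (r / ε - 1)) (abs_nonneg _) (by norm_num)
    rw [← abs_mul] at h4
    calc _ = |r / ε * deriv Real.smoothTransition (r / ε - 1)| := by congr 1; ring
      _ ≤ 2 * M := h4
      _ ≤ _ := by linarith
  · intro r hr
    have h1 : 1 ≤ r / ε - 1 := by
      rw [le_sub_iff_add_le, le_div_iff₀ hε]; linarith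
    rw [k3, z1 _ h1, Real.smoothTransition.one_of_one_le h1]
    simp only [zero_mul, one_mul, zero_add, mul_one]
    rw [abs_mul, abs_neg, abs_of_pos (by positivity : 0 < 4 / δ), mul_div_assoc', mul_comm]
    gcongr
    linarith [hb (3 - 4 * r / δ)]

/-- Up to the pole, `ψ` is comparable to `r`, and its second derivative is bounded. Since `ψ` is only
prescribed on `[0, 1)`, continuity at `0` is that of the derivatives within `[0, 1)`; they agree
with `deriv` at `0` to first order because `deriv ψ 0 ≠ 0` forces differentiability there. -/
lemma warping_bounds {ψ : ℝ → ℝ} (hψ : ContDiffOn ℝ (⊤ : ℕ∞) ψ (Ico 0 1))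
    (hψ0 : ψ 0 = 0) (hψ'0 : deriv ψ 0 = 1) {δ : ℝ} (hδ : δ ∈ Ioo (0:ℝ) (1 / 2))
    (hψ' : ∀ r ∈ Icc (0:ℝ) δ, 0 < deriv ψ r) :
    ∃ a L B : ℝ, 0 < a ∧ 0 < L ∧ 0 < B ∧ ∀ r ∈ Ioc 0 δ, a ≤ deriv ψ r ∧ a * r ≤ ψ r ∧
      ψ r ≤ L * r ∧ |deriv (deriv ψ) r| ≤ B := by
  have huniq : UniqueDiffOn ℝ (Ico (0:ℝ) 1) := uniqueDiffOn_Ico 0 1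
  have h1 : ContDiffOn ℝ 1 (derivWithin ψ (Ico 0 1)) (Ico 0 1) :=
    hψ.derivWithin huniq (by norm_cast)
  have h2 : ContinuousOn (derivWithin (derivWithin ψ (Ico 0 1)) (Ico 0 1)) (Ico 0 1) :=
    h1.continuousOn_derivWithin huniq le_rfl
  have hsub : Icc 0 δ ⊆ Ico (0:ℝ) 1 := fun r hr => ⟨hr.1, by linarith [hr.2, hδ.2]⟩
  have heq1 : EqOn (derivWithin ψ (Ico 0 1)) (deriv ψ) (Ico 0 1) := by
    intro r hr
    rcases hr.1.eq_or_lt with h | h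
    · subst h
      exact (differentiableAt_of_deriv_ne_zero (by rw [hψ'0]; norm_num)).derivWithin
        (huniq 0 hr)
    · exact derivWithin_of_mem_nhds (Ico_mem_nhds h hr.2)
  have heq2 : ∀ r ∈ Ioo (0:ℝ) 1,
      derivWithin (derivWithin ψ (Ico 0 1)) (Ico 0 1) r = deriv (deriv ψ) r := by
    intro r hr
    rw [derivWithin_of_mem_nhds (Ico_mem_nhds hr.1 hr.2)]
    exact (heq1.eventuallyEq_of_mem (Ico_mem_nhds hr.1 hr.2)).deriv_eq
  have c1 : ContinuousOn (deriv ψ) (Icc 0 δ) :=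
    (h1.continuousOn.congr heq1.symm).mono hsub
  have hne : (Icc (0:ℝ) δ).Nonempty := ⟨0, by simp [hδ.1.le]⟩
  obtain ⟨x, hx, hxmin⟩ := isCompact_Icc.exists_isMinOn hne c1
  obtain ⟨y, hy, hymax⟩ := isCompact_Icc.exists_isMaxOn hne c1
  obtain ⟨B, hB⟩ := isCompact_Icc.exists_bound_of_continuousOn (h2.mono hsub)
  have hB0 : 0 ≤ B := (norm_nonneg _).trans (hB 0 (by simp [hδ.1.le]))
  have cψ : ContinuousOn ψ (Icc 0 δ) := hψ.continuousOn.mono hsub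
  have dψ : DifferentiableOn ℝ ψ (interior (Icc 0 δ)) :=
    (hψ.differentiableOn (by simp)).mono (interior_subset.trans hsub)
  refine ⟨deriv ψ x, deriv ψ y, B + 1, hψ' x hx, hψ' y hy, by linarith, fun r hr => ?_⟩
  have hr' : r ∈ Icc 0 δ := Ioc_subset_Icc_self hr
  have l1 := (convex_Icc 0 δ).mul_sub_le_image_sub_of_le_deriv cψ dψ
    (fun z hz => hxmin (interior_subset hz)) 0 (by simp [hδ.1.le]) r hr' hr.1.le
  have l2 := (convex_Icc 0 δ).image_sub_le_mul_sub_of_deriv_le cψ dψ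
    (fun z hz => hymax (interior_subset hz)) 0 (by simp [hδ.1.le]) r hr' hr.1.le
  rw [hψ0, sub_zero, sub_zero] at l1 l2
  refine ⟨hxmin hr', l1, l2, ?_⟩
  rw [← heq2 r ⟨hr.1, (hsub hr').2⟩]
  exact (hB r hr').trans (by linarith)

/-! ### The reduced stability inequality -/

/-- Semi-stability tested with `ξ = u' η`: the nonlinearity `f` disappears, and what remains is a
Hardy-type inequality for `η` with the weight `|u'|^p ψ^n`. -/
lemma reduced_stability {n p : ℝ} {ψ f u η : ℝ → ℝ}
    (hψ : ContDiffOn ℝ 2 ψ (Ioo 0 1)) (hψpos : ∀ r ∈ Ioo (0:ℝ) 1, 0 < ψ r)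
    (hf : ContDiff ℝ 1 f) (hu : ContDiffOn ℝ 2 u (Ioo 0 1))
    (hu' : ∀ r ∈ Ioo (0:ℝ) 1, deriv u r < 0)
    (heq : ∀ r ∈ Ioo (0:ℝ) 1,
      -(p - 1) * |deriv u r| ^ (p - 2) * deriv (deriv u) r
        - n * (deriv ψ r / ψ r) * |deriv u r| ^ (p - 2) * deriv u r = f (u r))
    (hstab : ∀ ξ : ℝ → ℝ, ContDiff ℝ 1 ξ → tsupport ξ ⊆ Ioo (0:ℝ) 1 →
      0 ≤ ∫ r in (0:ℝ)..1, ((p - 1) * |deriv u r| ^ (p - 2) * (deriv ξ r) ^ 2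
        - deriv f (u r) * ξ r ^ 2) * ψ r ^ n)
    {a b : ℝ} (ha : 0 < a) (hab : a ≤ b) (hb : b < 1)
    (hη : ContDiffOn ℝ 1 η (Ioo 0 1)) (hη0 : ∀ r, r ∉ Ioo a b → η r = 0) :
    0 ≤ ∫ r in a..b, |deriv u r| ^ p * ψ r ^ n * ((p - 1) * deriv η r ^ 2
      + n * ((deriv (deriv ψ) r * ψ r - deriv ψ r ^ 2) / ψ r ^ 2) * η r ^ 2) := by
  have hI : ∀ r ∈ Icc a b, r ∈ Ioo (0:ℝ) 1 := fun r hr =>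
    ⟨ha.trans_le hr.1, hr.2.trans_lt hb⟩
  have diff : ∀ {g : ℝ → ℝ}, ContDiffOn ℝ 1 g (Ioo 0 1) → ∀ r ∈ Ioo (0:ℝ) 1,
      HasDerivAt g (deriv g r) r := fun hg r hr =>
    ((hg.differentiableOn (by norm_num)).differentiableAt (isOpen_Ioo.mem_nhds hr)).hasDerivAt
  have hu1 : ContDiffOn ℝ 1 (deriv u) (Ioo 0 1) :=
    ((contDiffOn_succ_iff_deriv_of_isOpen (n := 1) isOpen_Ioo).1
      (by norm_num; exact hu)).2.2
  have hψ1 : ContDiffOn ℝ 1 (deriv ψ) (Ioo 0 1) :=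
    ((contDiffOn_succ_iff_deriv_of_isOpen (n := 1) isOpen_Ioo).1
      (by norm_num; exact hψ)).2.2
  have hη1 : ContinuousOn (deriv η) (Ioo 0 1) :=
    hη.continuousOn_deriv_of_isOpen isOpen_Ioo le_rfl
  have hξ0 : ∀ r, r ∉ Ioo a b → deriv u r * η r = 0 := fun r hr => by simp [hη0 r hr]
  have hξ : ContDiff ℝ 1 fun r => deriv u r * η r := by
    rw [contDiff_iff_contDiffAt]
    intro x
    by_cases hx : x ∈ Icc a b
    · exact (hu1.mul hη).contDiffAt (isOpen_Ioo.mem_nhds (hI x hx))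
    · refine (contDiffAt_const (c := (0:ℝ))).congr_of_eventuallyEq ?_
      filter_upwards [isClosed_Icc.isOpen_compl.mem_nhds hx] with y hy
      exact hξ0 y fun h => hy (Ioo_subset_Icc_self h)
  have hsupp : tsupport (fun r => deriv u r * η r) ⊆ Icc a b := by
    refine closure_minimal (fun x hx => ?_) isClosed_Icc
    by_contra h
    exact hx (hξ0 x fun h' => h (Ioo_subset_Icc_self h'))
  have key := hstab _ hξ (hsupp.trans hI)
  rw [intervalIntegral.integral_of_le zero_le_one,
    setIntegral_eq_of_subset_of_forall_sdiff_eq_zero (s := Icc a b) measurableSet_Ioc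
      (fun r hr => ⟨(hI r hr).1, (hI r hr).2.le⟩), integral_Icc_eq_integral_Ioc,
    ← intervalIntegral.integral_of_le hab] at key
  swap
  · intro x hx
    have h1 : x ∉ tsupport (fun r => deriv u r * η r) := fun h => hx.2 (hsupp h)
    have h2 : deriv (fun r => deriv u r * η r) x = 0 :=
      Function.notMem_support.1 fun h => h1 (support_deriv_subset h)
    rw [h2, image_eq_zero_of_notMem_tsupport (f := fun r => deriv u r * η r) h1]
    simp
  have id := identity_integral (n := n) (p := p) hab (ψ := ψ) (ψ₁ := deriv ψ)
    (ψ₂ := deriv (deriv ψ)) (u := u) (v := fun r => -deriv u r)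
    (v₁ := fun r => -deriv (deriv u) r) (f := f) (f₁ := deriv f) (η := η) (η₁ := deriv η)
    (fun r hr => diff (hψ.of_le (by norm_num)) r (hI r hr)) (fun r hr => diff hψ1 r (hI r hr))
    ((hψ1.continuousOn_deriv_of_isOpen isOpen_Ioo le_rfl).mono hI)
    (fun r hr => by simpa using diff (hu.of_le (by norm_num)) r (hI r hr))
    (fun r hr => (diff hu1 r (hI r hr)).neg)
    ((hu1.continuousOn_deriv_of_isOpen isOpen_Ioo le_rfl).mono hI).neg
    (fun x => (hf.differentiable (by norm_num) x).hasDerivAt) (hf.continuous_deriv le_rfl)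
    (fun r hr => diff hη r (hI r hr)) (hη1.mono hI)
    (fun r hr => hψpos r (hI r hr)) (fun r hr => neg_pos.2 (hu' r (hI r hr)))
    (fun r hr => by
      rw [← heq r (hI r hr), abs_of_neg (hu' r (hI r hr))]; ring)
    (hη0 a (by simp)) (hη0 b (by simp))
  have e1 : ∀ r ∈ Icc a b, |deriv u r| = -deriv u r := fun r hr =>
    abs_of_neg (hu' r (hI r hr))
  rw [intervalIntegral.integral_congr (g := fun r => (-deriv u r) ^ p * ψ r ^ n *
      ((p - 1) * deriv η r ^ 2
      + n * ((deriv (deriv ψ) r * ψ r - deriv ψ r ^ 2) / ψ r ^ 2) * η r ^ 2)), ← id]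
  · convert key using 1
    refine intervalIntegral.integral_congr fun r hr => ?_
    rw [uIcc_of_le hab] at hr
    have := ((diff hu1 r (hI r hr)).mul (diff hη r (hI r hr))).deriv
    change deriv (fun r => deriv u r * η r) r = _ at this
    simp only [this, e1 r hr]
    ring
  · intro r hr
    rw [uIcc_of_le hab] at hr
    simp only [e1 r hr]

/-! ### The weighted test function -/

/-- Young's inequality with parameter `θ` for the bracket that remains after factoring out the
weight: the logarithmic slope `b` costs at most `(p - 1)(1 + θ)m²P²`, which the curvature term
`-nP²` absorbs with margin `c`. -/
lemma bracket_le {n p m θ c a B b P Q s χ X : ℝ} (hp : 1 < p) (hn : 0 < n) (hθ : 0 < θ)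
    (hc : c = n - (p - 1) * (1 + θ) * m ^ 2) (hc0 : 0 < c) (ha : 0 < a) (haP : a ≤ P)
    (hQ : |Q| ≤ B) (hs : 0 < s) (hb : |b| ≤ m) (hχ0 : 0 ≤ χ) (hχ1 : χ ≤ 1) :
    (p - 1) * (b * P * χ + s * X) ^ 2 + n * (Q * s - P ^ 2) * χ ^ 2
      ≤ -(c * a ^ 2 * χ ^ 2) + n * B * s + (p - 1) * (1 + 1 / θ) * (s * X) ^ 2 := by
  have young : (b * P * χ + s * X) ^ 2
      ≤ (1 + θ) * (b * P * χ) ^ 2 + (1 + 1 / θ) * (s * X) ^ 2 := by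
    have : (1 + θ) * (b * P * χ) ^ 2 + (1 + 1 / θ) * (s * X) ^ 2 - (b * P * χ + s * X) ^ 2
        = (θ * (b * P * χ) - s * X) ^ 2 / θ := by field_simp; ring
    have : 0 ≤ (θ * (b * P * χ) - s * X) ^ 2 / θ := by positivity
    linarith
  have hbm : b ^ 2 ≤ m ^ 2 := sq_le_sq' (abs_le.1 hb).1 (abs_le.1 hb).2
  have h1 : (b * P * χ) ^ 2 ≤ m ^ 2 * (P * χ) ^ 2 := by
    rw [mul_assoc, mul_pow]; gcongr
  have h2 : (a * χ) ^ 2 ≤ (P * χ) ^ 2 := by gcongr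
  have hχ2 : χ ^ 2 ≤ 1 := pow_le_one₀ hχ0 hχ1
  have hB : 0 ≤ B := (abs_nonneg Q).trans hQ
  have h3 : Q * χ ^ 2 ≤ B := by
    calc Q * χ ^ 2 ≤ B * χ ^ 2 := by gcongr; exact (le_abs_self Q).trans hQ
      _ ≤ B * 1 := by gcongr
      _ = B := mul_one B
  have h4 : n * s * (Q * χ ^ 2) ≤ n * s * B := by gcongr
  have h5 := mul_le_mul_of_nonneg_left young (by linarith : 0 ≤ p - 1)
  have h6 := mul_le_mul_of_nonneg_left h1 (by nlinarith : 0 ≤ (p - 1) * (1 + θ))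
  have h7 := mul_le_mul_of_nonneg_left h2 hc0.le
  have h8 : c * (P * χ) ^ 2 = n * (P * χ) ^ 2 - (p - 1) * (1 + θ) * (m ^ 2 * (P * χ) ^ 2) := by
    rw [hc]; ring
  linarith

/-- The test function is `ψ^(1-α) (ψ / (ψ + ε))^(1/2) χ`, written with a single power of `ψ`. The
logarithmic slope of its weight is `(3/2 - α - ψ / (2(ψ + ε))) ψ' / ψ`, whose coefficient moves from
`3/2 - α` to `1 - α` as `ψ` passes the scale `ε`. -/
lemma weight_deriv {α ε r χ₁ ψ₁ : ℝ} {ψ χ : ℝ → ℝ} (hε : 0 < ε) (hs : 0 < ψ r)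
    (hψ : HasDerivAt ψ ψ₁ r) (hχ : HasDerivAt χ χ₁ r) :
    HasDerivAt (fun r => ψ r ^ (3 / 2 - α) * (ψ r + ε) ^ (-(1 / 2) : ℝ) * χ r)
      (ψ r ^ (3 / 2 - α) * (ψ r + ε) ^ (-(1 / 2) : ℝ) / ψ r *
        ((3 / 2 - α - ψ r / (2 * (ψ r + ε))) * ψ₁ * χ r + ψ r * χ₁)) r := by
  have hsε : 0 < ψ r + ε := by linarith
  have d := ((hψ.rpow_const (p := 3 / 2 - α) (Or.inl hs.ne')).mul
    ((hψ.add_const ε).rpow_const (p := -(1 / 2)) (Or.inl hsε.ne'))).mul hχ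
  refine d.congr_deriv ?_
  rw [Real.rpow_sub_one hs.ne', Real.rpow_sub_one hsε.ne']
  simp only [Pi.mul_apply]
  field_simp
  ring

/-- Factorization of the reduced integrand for the test function `W * χ`, with `W` the weight of
`weight_deriv`. -/
lemma integrand_eq {n p α ε s V W P Q χ X b : ℝ} (hε : 0 < ε) (hs : 0 < s)
    (hW : W = s ^ (3 / 2 - α) * (s + ε) ^ (-(1 / 2) : ℝ)) :
    V * s ^ n * ((p - 1) * (W / s * (b * P * χ + s * X)) ^ 2
        + n * ((Q * s - P ^ 2) / s ^ 2) * (W * χ) ^ 2)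
      = V * s ^ (n - 2 * α) * (s / (s + ε)) *
        ((p - 1) * (b * P * χ + s * X) ^ 2 + n * (Q * s - P ^ 2) * χ ^ 2) := by
  have hsε : 0 < s + ε := by linarith
  have h1 : W ^ 2 = s ^ (3 - 2 * α) * (s + ε)⁻¹ := by
    rw [hW, mul_pow, ← Real.rpow_natCast, ← Real.rpow_natCast, ← Real.rpow_mul hs.le,
      ← Real.rpow_mul hsε.le, ← Real.rpow_neg_one]
    norm_num
    left; ring_nf
  have h2 : s ^ n * s ^ (3 - 2 * α) = s ^ (n - 2 * α) * s ^ 3 := by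
    rw [← Real.rpow_natCast s 3, ← Real.rpow_add hs, ← Real.rpow_add hs]; congr 1; push_cast; ring
  calc _ = V * (s ^ n * W ^ 2) / s ^ 2 *
        ((p - 1) * (b * P * χ + s * X) ^ 2 + n * (Q * s - P ^ 2) * χ ^ 2) := by
        field_simp
    _ = _ := by
        rw [h1, ← mul_assoc (s ^ n), h2]; field_simp

/-- The hypothesis on `α` leaves a positive margin `c` in the stability inequality. The maximum
with `1 / 2` is harmless because `p - 1 ≤ n` makes the threshold `√(n / (p - 1))` at least `1`. -/
lemma exists_margin {n p α : ℝ} (hp : 1 < p) (hn : p - 1 ≤ n)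
    (hα2 : α < 1 + Real.sqrt (n / (p - 1))) :
    ∃ θ c : ℝ, 0 < θ ∧ 0 < c ∧ c = n - (p - 1) * (1 + θ) * max (α - 1) (1 / 2) ^ 2 := by
  have hp' : 0 < p - 1 := by linarith
  set m := max (α - 1) (1 / 2) with hm
  have hm0 : 0 < m := lt_max_of_lt_right (by norm_num)
  have hK : 1 ≤ n / (p - 1) := by rwa [le_div_iff₀ hp', one_mul]
  have h1 : m < Real.sqrt (n / (p - 1)) := by
    refine max_lt (by linarith) (lt_of_lt_of_le (by norm_num) (Real.one_le_sqrt.2 hK))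
  have h2 : m ^ 2 < n / (p - 1) := (Real.lt_sqrt hm0.le).1 h1
  rw [lt_div_iff₀ hp'] at h2
  have h3 : 0 < (p - 1) * m ^ 2 := by positivity
  refine ⟨(n - m ^ 2 * (p - 1)) / (2 * ((p - 1) * m ^ 2)), (n - m ^ 2 * (p - 1)) / 2,
    div_pos (by linarith) (by linarith), by linarith, ?_⟩
  field_simp
  ring

/-- Pointwise bound on the integrand of `reduced_stability`, where `s`, `χ`, `X` are the values at
`r` of the warping function, of the cutoff and of its derivative, and `g * s` is the weight of the
right-hand side. Where the cutoff is flat and `ε ≤ s`, the factor `s / (s + ε)` is at least `1 / 2`.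
The derivative of the inner cutoff costs a multiple of `g * s / ε` on `(0, 2η]`, a coefficient that
does not depend on `η`; that of the outer cutoff costs a multiple of `g * s`. -/
lemma pointwise_estimate {g n B K L M δ ε η t r c a s χ X br : ℝ}
    (hg : 0 ≤ g) (hn : 0 ≤ n) (hB : 0 ≤ B) (hK : 0 ≤ K) (hL : 0 ≤ L)
    (hc : 0 ≤ c) (hδ : 0 < δ) (hη : 0 < η) (ha : 0 < a) (hs : 0 < s) (hr : 0 < r) (hrδ : r ≤ δ)
    (hsa : a * r ≤ s) (hsL : s ≤ L * r) (hε : ε = a * t) (ht : 2 * η < t)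
    (hχ1 : r ∈ Icc (2 * η) (δ / 2) → χ = 1)
    (hX1 : r ∈ Ioc 0 (2 * η) → |r * X| ≤ M) (hX2 : 2 * η ≤ r → |X| ≤ M / δ)
    (hbr : br ≤ -(c * a ^ 2 * χ ^ 2) + n * B * s + K * (s * X) ^ 2) :
    g * (s / (s + ε)) * br ≤ -(c * a ^ 2 / 2) * (Icc t (δ / 2)).indicator (fun _ => g) r
      + (n * B + K * L * (M ^ 2 / δ)) * (g * s)
      + K * (L * M) ^ 2 / ε * (Iic (2 * η)).indicator (fun _ => g * s) r := by
  have ht0 : 0 < t := by linarith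
  have hε0 : 0 < ε := hε ▸ mul_pos ha ht0
  have hw0 : 0 ≤ s / (s + ε) := by positivity
  have hw1 : s / (s + ε) ≤ 1 := by rw [div_le_one (by linarith)]; linarith
  have hwε : s / (s + ε) ≤ s / ε := by gcongr; linarith
  have h1 : g * (s / (s + ε)) * br ≤ g * (s / (s + ε)) *
      (-(c * a ^ 2 * χ ^ 2) + n * B * s + K * (s * X) ^ 2) := by gcongr
  have h2 : g * (s / (s + ε)) * (n * B * s) ≤ n * B * (g * s) := by
    calc g * (s / (s + ε)) * (n * B * s) ≤ g * 1 * (n * B * s) := by gcongr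
      _ = _ := by ring
  have h3 : 0 ≤ K * L * (M ^ 2 / δ) * (g * s) := by positivity
  refine h1.trans ?_
  by_cases hc1 : r ≤ 2 * η
  · rw [indicator_of_notMem (fun h => by linarith [h.1]), indicator_of_mem (by exact hc1)]
    have h4 : (s * X) ^ 2 ≤ (L * M) ^ 2 := by
      rw [sq_le_sq, abs_mul, abs_of_pos hs]
      calc s * |X| ≤ L * r * |X| := by gcongr
        _ = L * |r * X| := by rw [abs_mul, abs_of_pos hr]; ring
        _ ≤ L * M := by gcongr; exact hX1 ⟨hr, hc1⟩
        _ ≤ _ := le_abs_self _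
    have h5 : g * (s / (s + ε)) * (K * (s * X) ^ 2) ≤ K * (L * M) ^ 2 / ε * (g * s) := by
      calc g * (s / (s + ε)) * (K * (s * X) ^ 2) ≤ g * (s / ε) * (K * (L * M) ^ 2) := by gcongr
        _ = _ := by ring
    have h6 : 0 ≤ g * (s / (s + ε)) * (c * a ^ 2 * χ ^ 2) := by positivity
    linarith
  · push Not at hc1
    rw [indicator_of_notMem (s := Iic _) (fun h => absurd (mem_Iic.1 h) (by linarith))]
    have h4 : (s * X) ^ 2 ≤ L * (M ^ 2 / δ) * s := by
      have hX : X ^ 2 ≤ (M / δ) ^ 2 := by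
        rw [← sq_abs X]; gcongr; exact hX2 hc1.le
      calc (s * X) ^ 2 = s * s * X ^ 2 := by ring
        _ ≤ s * (L * δ) * (M / δ) ^ 2 := by
          gcongr; exact hsL.trans (by gcongr)
        _ = _ := by field_simp
    have h5 : g * (s / (s + ε)) * (K * (s * X) ^ 2) ≤ K * L * (M ^ 2 / δ) * (g * s) := by
      calc g * (s / (s + ε)) * (K * (s * X) ^ 2) ≤ g * 1 * (K * (L * (M ^ 2 / δ) * s)) := by
            gcongr
        _ = _ := by ring
    by_cases hc2 : r ∈ Icc t (δ / 2)
    · rw [indicator_of_mem hc2, hχ1 ⟨by linarith [hc2.1], hc2.2⟩]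
      have hw2 : 1 / 2 ≤ s / (s + ε) := by
        rw [le_div_iff₀ (by linarith)]
        have : ε ≤ s := by rw [hε]; exact le_trans (by gcongr; exact hc2.1) hsa
        linarith
      have h6 : g * (1 / 2) * (c * a ^ 2) ≤ g * (s / (s + ε)) * (c * a ^ 2) := by gcongr
      rw [hχ1 ⟨by linarith [hc2.1], hc2.2⟩] at *
      linarith
    · rw [indicator_of_notMem hc2]
      have h6 : 0 ≤ g * (s / (s + ε)) * (c * a ^ 2 * χ ^ 2) := by positivity
      linarith

/-! ### Estimates away from the pole -/

/-- The estimate on `[t, δ / 2]`, with a constant independent of `t`. The scale `ε = a * t` of the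
weight is fixed by `t`; only afterwards is the inner cutoff scale `η` sent to `0`. -/
lemma interior_estimate {n p α δ : ℝ} {ψ : ℝ → ℝ} (hp : 1 < p) (hn : p - 1 ≤ n)
    (hψ : ContDiffOn ℝ (⊤ : ℕ∞) ψ (Ico 0 1))
    (hψ0 : ψ 0 = 0) (hψ'0 : deriv ψ 0 = 1) (hψpos : ∀ r ∈ Ioo (0:ℝ) 1, 0 < ψ r)
    (hδ : δ ∈ Ioo (0:ℝ) (1 / 2)) (hψ' : ∀ r ∈ Icc (0:ℝ) δ, 0 < deriv ψ r)
    (hα1 : 1 ≤ α) (hα2 : α < 1 + Real.sqrt (n / (p - 1))) :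
    ∃ C : ℝ, 0 < C ∧ ∀ f u : ℝ → ℝ, ContDiff ℝ 1 f → ContDiffOn ℝ 2 u (Ioo 0 1) →
      (∀ r ∈ Ioo (0:ℝ) 1, deriv u r < 0) →
      (∀ r ∈ Ioo (0:ℝ) 1,
        -(p - 1) * |deriv u r| ^ (p - 2) * deriv (deriv u) r
          - n * (deriv ψ r / ψ r) * |deriv u r| ^ (p - 2) * deriv u r = f (u r)) →
      (∀ ξ : ℝ → ℝ, ContDiff ℝ 1 ξ → tsupport ξ ⊆ Ioo (0:ℝ) 1 →
        0 ≤ ∫ r in (0:ℝ)..1, ((p - 1) * |deriv u r| ^ (p - 2) * (deriv ξ r) ^ 2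
          - deriv f (u r) * ξ r ^ 2) * ψ r ^ n) →
      IntegrableOn (fun r => |deriv u r| ^ p * ψ r ^ (n - 2 * α) * ψ r) (Ioo 0 δ) →
      ∀ t ∈ Ioo 0 (δ / 2), ∫ r in Icc t (δ / 2), |deriv u r| ^ p * ψ r ^ (n - 2 * α)
        ≤ C * ∫ r in Ioo 0 δ, |deriv u r| ^ p * ψ r ^ (n - 2 * α) * ψ r := by
  obtain ⟨a, L, B, ha, hL, hB, hbd⟩ := warping_bounds hψ hψ0 hψ'0 hδ hψ'
  obtain ⟨θ, c, hθ, hc, hceq⟩ := exists_margin hp hn hα2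
  obtain ⟨M, hM, hcut⟩ := exists_cutoff
  have hp' : 0 < p - 1 := by linarith
  have hn0 : 0 < n := by linarith
  have hδ0 := hδ.1
  have hδ1 := hδ.2
  set K := (p - 1) * (1 + 1 / θ) with hK
  have hK0 : 0 < K := by positivity
  set C₁ := n * B + K * L * (M ^ 2 / δ) with hC₁
  have hC₁0 : 0 < C₁ := by positivity
  have hc1 : 0 < c * a ^ 2 / 2 := by positivity
  refine ⟨C₁ / (c * a ^ 2 / 2), by positivity, fun f u hf hu hu' heq hstab hint t ht => ?_⟩
  have hψ2 : ContDiffOn ℝ 2 ψ (Ioo 0 1) := (hψ.mono Ioo_subset_Ico_self).of_le (by norm_cast)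
  set g : ℝ → ℝ := fun r => |deriv u r| ^ p * ψ r ^ (n - 2 * α) with hg
  set H : ℝ → ℝ := fun r => g r * ψ r with hH
  set J := ∫ r in Ioo 0 δ, H r with hJ
  change ∫ r in Icc t (δ / 2), g r ≤ C₁ / (c * a ^ 2 / 2) * J
  have hu1 : ContDiffOn ℝ 1 (deriv u) (Ioo 0 1) :=
    ((contDiffOn_succ_iff_deriv_of_isOpen (n := 1) isOpen_Ioo).1
      (by norm_num; exact hu)).2.2
  have cg : ContinuousOn g (Ioo 0 1) :=
    (hu1.continuousOn.abs.rpow_const fun r hr => Or.inl (abs_pos.2 (hu' r hr).ne).ne').mul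
      (hψ2.continuousOn.rpow_const fun r hr => Or.inl (hψpos r hr).ne')
  have cH : ContinuousOn H (Ioo 0 1) := cg.mul hψ2.continuousOn
  have hg0 : ∀ r ∈ Ioo (0:ℝ) 1, 0 ≤ g r := fun r hr =>
    mul_nonneg (Real.rpow_nonneg (abs_nonneg _) _) (Real.rpow_nonneg (hψpos r hr).le _)
  have hH0 : ∀ r ∈ Ioo (0:ℝ) 1, 0 ≤ H r := fun r hr => mul_nonneg (hg0 r hr) (hψpos r hr).le
  have hδI : ∀ r ∈ Ioo 0 δ, r ∈ Ioo (0:ℝ) 1 := fun r hr => ⟨hr.1, by linarith [hr.2]⟩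
  rw [div_mul_eq_mul_div, le_div_iff₀ hc1]
  set ε := a * t with hε
  have hε0 : 0 < ε := mul_pos ha ht.1
  set C₂ := K * (L * M) ^ 2 / ε with hC₂
  have hC₂0 : 0 < C₂ := by positivity
  refine le_of_forall_pos_le_add fun σ hσ => ?_
  -- The inner cutoff costs at most `σ`, by absolute continuity of the integral of `H` at `0`.
  obtain ⟨η, hη0, hηt, hησ⟩ : ∃ η, 0 < η ∧ 2 * η < t ∧ ∫ r in Ioc 0 (2 * η), H r < σ / C₂ := by
    have hint' : IntegrableOn H (Icc 0 (δ / 2)) := by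
      rw [integrableOn_Icc_iff_integrableOn_Ioc]
      exact hint.mono_set fun r hr => ⟨hr.1, by linarith [hr.2]⟩
    have h0 := (intervalIntegral.continuousOn_primitive hint') 0 (by simp; linarith)
    have h1 : ∀ᶠ x in nhdsWithin 0 (Icc 0 (δ / 2)), ∫ r in Ioc 0 x, H r < σ / C₂ :=
      h0.eventually_lt_const (by simp; positivity)
    have h2 : ∀ᶠ x in nhdsWithin (0:ℝ) (Ioi 0), ∫ r in Ioc 0 x, H r < σ / C₂ := by
      rw [nhdsWithin_Icc_eq_nhdsGE (by linarith)] at h1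
      exact h1.filter_mono (nhdsWithin_mono _ Ioi_subset_Ici_self)
    have h3 : ∀ᶠ x in nhdsWithin (0:ℝ) (Ioi 0), x ∈ Ioo 0 t := Ioo_mem_nhdsGT ht.1
    obtain ⟨x, hx, hx'⟩ := (h2.and h3).exists
    exact ⟨x / 2, by linarith [hx'.1], by linarith [hx'.2], by
      rwa [mul_div_cancel₀ x two_ne_zero]⟩
  obtain ⟨χ, hχ, hχ0, hχ1, hχz, hχo, hχa, hχb⟩ := hcut δ η hη0 (by linarith [ht.2])
  set φ : ℝ → ℝ := fun r => ψ r ^ (3 / 2 - α) * (ψ r + ε) ^ (-(1 / 2) : ℝ) with hφ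
  have hφη : ContDiffOn ℝ 1 (fun r => φ r * χ r) (Ioo 0 1) := by
    have hψ1 : ContDiffOn ℝ 1 ψ (Ioo 0 1) := hψ2.of_le (by norm_num)
    exact ((hψ1.rpow_const_of_ne fun r hr => (hψpos r hr).ne').mul
      ((hψ1.add contDiffOn_const).rpow_const_of_ne fun r hr =>
        (add_pos (hψpos r hr) hε0).ne')).mul hχ.contDiffOn
  have hab : η ≤ 3 * δ / 4 := by linarith [ht.2]
  have stab := reduced_stability hψ2 hψpos hf hu hu' heq hstab hη0 hab
    (by linarith) hφη (fun r hr => by simp [hχz r hr])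
  have hI : ∀ r ∈ Icc η (3 * δ / 4), r ∈ Ioo 0 δ := fun r hr =>
    ⟨hη0.trans_le hr.1, by linarith [hr.2]⟩
  have gI : IntegrableOn g (Icc η (3 * δ / 4)) :=
    (cg.mono fun r hr => hδI r (hI r hr)).integrableOn_Icc
  have HI : IntegrableOn H (Icc η (3 * δ / 4)) := hint.mono_set hI
  rw [intervalIntegral.integral_of_le hab, ← integral_Icc_eq_integral_Ioc] at stab
  have hsub1 : Icc t (δ / 2) ⊆ Icc η (3 * δ / 4) := fun r hr =>
    ⟨by linarith [hr.1], by linarith [hr.2]⟩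
  set maj : ℝ → ℝ := fun r => -(c * a ^ 2 / 2) * (Icc t (δ / 2)).indicator g r
      + C₁ * H r + C₂ * (Iic (2 * η)).indicator H r with hmaj
  have i1 : IntegrableOn (fun r => -(c * a ^ 2 / 2) * (Icc t (δ / 2)).indicator g r)
      (Icc η (3 * δ / 4)) := (gI.indicator measurableSet_Icc).const_mul _
  have i2 : IntegrableOn (fun r => C₁ * H r) (Icc η (3 * δ / 4)) := HI.const_mul _
  have i3 : IntegrableOn (fun r => C₂ * (Iic (2 * η)).indicator H r)
      (Icc η (3 * δ / 4)) := (HI.indicator measurableSet_Iic).const_mul _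
  have hle : 0 ≤ ∫ r in Icc η (3 * δ / 4), maj r := by
    refine stab.trans (setIntegral_mono_on ?_ ((i1.add i2).add i3) measurableSet_Icc ?_)
    · have hcont : ContinuousOn (fun r => |deriv u r| ^ p * ψ r ^ n *
          ((p - 1) * deriv (fun r => φ r * χ r) r ^ 2 + n * ((deriv (deriv ψ) r * ψ r
            - deriv ψ r ^ 2) / ψ r ^ 2) * (φ r * χ r) ^ 2)) (Ioo 0 1) := by
        have hψ1 : ContDiffOn ℝ 1 (deriv ψ) (Ioo 0 1) :=
          ((contDiffOn_succ_iff_deriv_of_isOpen (n := 1) isOpen_Ioo).1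
            (by norm_num; exact hψ2)).2.2
        have k1 := hψ2.continuousOn
        have k2 := hψ1.continuousOn
        have k3 := hψ1.continuousOn_deriv_of_isOpen isOpen_Ioo le_rfl
        have k4 := hφη.continuousOn
        have k5 := hφη.continuousOn_deriv_of_isOpen isOpen_Ioo le_rfl
        have k6 : ContinuousOn (fun r => |deriv u r| ^ p) (Ioo 0 1) :=
          hu1.continuousOn.abs.rpow_const fun r hr => Or.inl (abs_pos.2 (hu' r hr).ne).ne'
        have k7 : ContinuousOn (fun r => ψ r ^ n) (Ioo 0 1) :=
          k1.rpow_const fun r hr => Or.inl (hψpos r hr).ne'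
        have k8 : ContinuousOn (fun r => (deriv (deriv ψ) r * ψ r
            - deriv ψ r ^ 2) / ψ r ^ 2) (Ioo 0 1) :=
          ContinuousOn.div (by fun_prop) (by fun_prop) fun r hr => pow_ne_zero 2 (hψpos r hr).ne'
        exact (k6.mul k7).mul ((continuousOn_const.mul (k5.pow 2)).add
          ((continuousOn_const.mul k8).mul (k4.pow 2)))
      exact (hcont.mono fun r hr => hδI r (hI r hr)).integrableOn_Icc
    · intro r hr
      have hrδ := hI r hr
      have hr1 := hδI r hrδ
      have hs := hψpos r hr1
      obtain ⟨b1, b2, b3, b4⟩ := hbd r ⟨hrδ.1, hrδ.2.le⟩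
      have dψ : HasDerivAt ψ (deriv ψ r) r :=
        ((hψ2.differentiableOn (by norm_num)).differentiableAt
          (isOpen_Ioo.mem_nhds hr1)).hasDerivAt
      have dχ : HasDerivAt χ (deriv χ r) r := (hχ.differentiable (by norm_num) r).hasDerivAt
      have hd := (weight_deriv (α := α) hε0 hs dψ dχ).deriv
      change deriv (fun r => φ r * χ r) r = φ r / ψ r * _ at hd
      rw [hd, integrand_eq hε0 hs rfl]
      have hind : ∀ (S : Set ℝ) (k : ℝ → ℝ), S.indicator k r = S.indicator (fun _ => k r) r :=
        fun S k => by by_cases h : r ∈ S <;> simp [h]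
      simp only [hmaj]
      rw [hind _ g, hind _ H]
      refine pointwise_estimate (hg0 r hr1) hn0.le hB.le hK0.le hL.le hc.le hδ0 hη0 ha hs
        hrδ.1 hrδ.2.le b2 b3 hε hηt (hχo r) (hχa r) (hχb r)
        (bracket_le hp hn0 hθ hceq hc ha b1 b4 hs ?_ (hχ0 r) (hχ1 r))
      have q0 : 0 ≤ ψ r / (2 * (ψ r + ε)) := by positivity
      have q1 : ψ r / (2 * (ψ r + ε)) ≤ 1 / 2 := by
        rw [div_le_div_iff₀ (by positivity) (by norm_num)]; linarith
      rw [abs_le]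
      constructor
      · linarith [le_max_left (α - 1) (1 / 2)]
      · linarith [le_max_right (α - 1) (1 / 2)]
  have hsplit : ∫ r in Icc η (3 * δ / 4), maj r
      = -(c * a ^ 2 / 2) * (∫ r in Icc t (δ / 2), g r) + C₁ * (∫ r in Icc η (3 * δ / 4), H r)
        + C₂ * ∫ r in Icc η (3 * δ / 4) ∩ Iic (2 * η), H r := by
    simp only [hmaj]
    have i12 : IntegrableOn (fun r => -(c * a ^ 2 / 2) * (Icc t (δ / 2)).indicator g r + C₁ * H r)
        (Icc η (3 * δ / 4)) := i1.add i2
    rw [integral_add i12 i3, integral_add i1 i2, integral_const_mul, integral_const_mul,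
      integral_const_mul, setIntegral_indicator measurableSet_Icc,
      setIntegral_indicator measurableSet_Iic, inter_eq_right.2 hsub1]
  have hJle : ∫ r in Icc η (3 * δ / 4), H r ≤ J :=
    setIntegral_mono_set hint ((ae_restrict_iff' measurableSet_Ioo).2
      (Eventually.of_forall fun r hr => hH0 r (hδI r hr))) (LE.le.eventuallyLE hI)
  have hsub2 : Ioc 0 (2 * η) ⊆ Ioo 0 δ := fun r hr =>
    ⟨hr.1, by linarith [hr.2, ht.2]⟩
  have htail : ∫ r in Icc η (3 * δ / 4) ∩ Iic (2 * η), H r ≤ σ / C₂ :=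
    (setIntegral_mono_set (hint.mono_set hsub2) ((ae_restrict_iff' measurableSet_Ioc).2
      (Eventually.of_forall fun r hr => hH0 r (hδI r (hsub2 hr))))
      (LE.le.eventuallyLE fun r hr => ⟨hη0.trans_le hr.1.1, hr.2⟩)).trans hησ.le
  have h1 := mul_le_mul_of_nonneg_left hJle hC₁0.le
  have h2 := mul_le_mul_of_nonneg_left htail hC₂0.le
  rw [mul_div_cancel₀ σ hC₂0.ne'] at h2
  rw [hsplit] at hle
  linarith

/-! ### The integral estimate -/

/-- For a semi-stable radial classical solution u and
1 ≤ α < 1 + √((N−1)/(p−1)), there is C = C(N,p,α,ψ) such that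
∫₀^δ |u'|^p ψ^{N−1−2α} ≤ C ∫₀^δ |u'|^p ψ^{N−1−α}(1 + ψ^{1−α}),
as Lebesgue integrals of nonnegative functions (possibly +∞). -/
theorem stability_integral_estimate
    (N : ℕ) (hN : 2 ≤ N) (p : ℝ) (hp1 : 1 < p) (hpN : p ≤ N)
    (ψ : ℝ → ℝ) (hψ : ContDiffOn ℝ (⊤ : ℕ∞) ψ (Set.Ico 0 1))
    (hψ0 : ψ 0 = 0) (hψ'0 : deriv ψ 0 = 1) (hψ''0 : deriv (deriv ψ) 0 = 0)
    (hψpos : ∀ r ∈ Set.Ioo (0:ℝ) 1, 0 < ψ r)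
    (δ : ℝ) (hδ : δ ∈ Set.Ioo (0:ℝ) (1/2))
    (hψ' : ∀ r ∈ Set.Icc (0:ℝ) δ, 0 < deriv ψ r)
    (α : ℝ) (hα1 : 1 ≤ α) (hα2 : α < 1 + Real.sqrt (((N : ℝ) - 1) / (p - 1))) :
    ∃ C : ℝ, 0 < C ∧ ∀ (f u : ℝ → ℝ),
      ContDiff ℝ 1 f →
      ContDiffOn ℝ 2 u (Set.Ioo 0 1) →
      (∀ r ∈ Set.Ioo (0:ℝ) 1, deriv u r < 0) →
      (∀ r ∈ Set.Ioo (0:ℝ) 1,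
        -(p - 1) * |deriv u r| ^ (p - 2) * deriv (deriv u) r
          - ((N : ℝ) - 1) * (deriv ψ r / ψ r) * |deriv u r| ^ (p - 2) * deriv u r
          = f (u r)) →
      (∀ ξ : ℝ → ℝ, ContDiff ℝ 1 ξ → tsupport ξ ⊆ Set.Ioo (0:ℝ) 1 →
        0 ≤ ∫ r in (0:ℝ)..1,
          ((p - 1) * |deriv u r| ^ (p - 2) * (deriv ξ r) ^ 2
            - deriv f (u r) * ξ r ^ 2) * ψ r ^ ((N : ℝ) - 1)) →
      ∫⁻ r in Set.Ioo (0:ℝ) δ,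
          ENNReal.ofReal (|deriv u r| ^ p * ψ r ^ ((N : ℝ) - 1 - 2 * α))
        ≤ ENNReal.ofReal C *
          ∫⁻ r in Set.Ioo (0:ℝ) δ,
            ENNReal.ofReal
              (|deriv u r| ^ p * ψ r ^ ((N : ℝ) - 1 - α) * (1 + ψ r ^ (1 - α))) := by
  have hN1 : (2:ℝ) ≤ N := by exact_mod_cast hN
  set n : ℝ := (N : ℝ) - 1 with hn
  obtain ⟨C, hC, hmain⟩ := interior_estimate (n := n) hp1 (by linarith) hψ hψ0 hψ'0 hψpos hδ hψ'
    hα1 hα2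
  obtain ⟨a, L, B, ha, hL, hB, hbd⟩ := warping_bounds hψ hψ0 hψ'0 hδ hψ'
  have hδ0 := hδ.1
  have hδ1 := hδ.2
  have hD : 0 < 2 / (a * δ) := by positivity
  refine ⟨C + 2 / (a * δ), by positivity, fun f u hf hu hu' heq hstab => ?_⟩
  have hδI : ∀ r ∈ Ioo 0 δ, r ∈ Ioo (0:ℝ) 1 := fun r hr => ⟨hr.1, by linarith [hr.2]⟩
  set g : ℝ → ℝ := fun r => |deriv u r| ^ p * ψ r ^ (n - 2 * α) with hg
  set H : ℝ → ℝ := fun r => g r * ψ r with hH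
  have hu1 : ContDiffOn ℝ 1 (deriv u) (Ioo 0 1) :=
    ((contDiffOn_succ_iff_deriv_of_isOpen (n := 1) isOpen_Ioo).1
      (by norm_num; exact hu)).2.2
  have cψ : ContinuousOn ψ (Ioo 0 1) := hψ.continuousOn.mono Ioo_subset_Ico_self
  have cg : ContinuousOn g (Ioo 0 1) :=
    (hu1.continuousOn.abs.rpow_const fun r hr => Or.inl (abs_pos.2 (hu' r hr).ne).ne').mul
      (cψ.rpow_const fun r hr => Or.inl (hψpos r hr).ne')
  have cH : ContinuousOn H (Ioo 0 1) := cg.mul cψ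
  have hg0 : ∀ r ∈ Ioo (0:ℝ) 1, 0 ≤ g r := fun r hr =>
    mul_nonneg (Real.rpow_nonneg (abs_nonneg _) _) (Real.rpow_nonneg (hψpos r hr).le _)
  have hH0 : ∀ r ∈ Ioo (0:ℝ) 1, 0 ≤ H r := fun r hr => mul_nonneg (hg0 r hr) (hψpos r hr).le
  set R := ∫⁻ r in Ioo (0:ℝ) δ, ENNReal.ofReal (H r) with hR
  have hHle : R ≤ ∫⁻ r in Ioo 0 δ,
      ENNReal.ofReal (|deriv u r| ^ p * ψ r ^ (n - α) * (1 + ψ r ^ (1 - α))) := by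
    refine setLIntegral_mono' measurableSet_Ioo fun r hr => ENNReal.ofReal_le_ofReal ?_
    have hs := hψpos r (hδI r hr)
    have h1 : ψ r ^ (n - 2 * α) * ψ r = ψ r ^ (n - α) * ψ r ^ (1 - α) := by
      rw [← Real.rpow_add_one hs.ne', ← Real.rpow_add hs]; ring_nf
    have h2 : 0 ≤ |deriv u r| ^ p * ψ r ^ (n - α) := by positivity
    simp only [hH, hg]
    rw [mul_assoc, h1, mul_add, ← mul_assoc]
    linarith
  refine le_trans ?_ (mul_le_mul_right hHle _)
  rcases eq_or_ne R ⊤ with htop | hfin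
  · rw [htop, ENNReal.mul_top (by rw [Ne, ENNReal.ofReal_eq_zero]; linarith)]
    exact le_top
  have hHnn : 0 ≤ᵐ[volume.restrict (Ioo 0 δ)] H :=
    (ae_restrict_iff' measurableSet_Ioo).2 (Eventually.of_forall fun r hr => hH0 r (hδI r hr))
  have hHint : IntegrableOn H (Ioo 0 δ) :=
    ⟨(cH.mono hδI).aestronglyMeasurable measurableSet_Ioo, by
      rw [hasFiniteIntegral_iff_ofReal hHnn]; exact lt_top_iff_ne_top.2 hfin⟩
  have hJ : ENNReal.ofReal (∫ r in Ioo 0 δ, H r) = R :=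
    ofReal_integral_eq_lintegral_ofReal hHint hHnn
  -- From here on the right-hand side is finite, so `interior_estimate` applies.
  have hcpt : ∀ t ∈ Ioo 0 (δ / 2), ∫⁻ r in Icc t (δ / 2), ENNReal.ofReal (g r)
      ≤ ENNReal.ofReal C * R := by
    intro t ht
    have hsub : Icc t (δ / 2) ⊆ Ioo 0 1 := fun r hr =>
      ⟨ht.1.trans_le hr.1, by linarith [hr.2]⟩
    rw [← ofReal_integral_eq_lintegral_ofReal (cg.mono hsub).integrableOn_Icc
      ((ae_restrict_iff' measurableSet_Icc).2 (Eventually.of_forall fun r hr => hg0 r (hsub hr))),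
      ← hJ, ← ENNReal.ofReal_mul hC.le]
    exact ENNReal.ofReal_le_ofReal (hmain f u hf hu hu' heq hstab hHint t ht)
  have hnear : ∫⁻ r in Ioc 0 (δ / 2), ENNReal.ofReal (g r) ≤ ENNReal.ofReal C * R := by
    have hU : Ioc 0 (δ / 2) = ⋃ k : ℕ, Icc (δ / 2 / (k + 2)) (δ / 2) := by
      ext r
      simp only [mem_Ioc, mem_iUnion, mem_Icc]
      constructor
      · rintro ⟨h0, h1⟩
        obtain ⟨k, hk⟩ := exists_nat_gt (δ / 2 / r)
        refine ⟨k, ?_, h1⟩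
        rw [div_lt_iff₀ h0] at hk
        rw [div_le_iff₀ (by positivity)]
        nlinarith
      · rintro ⟨k, h0, h1⟩
        exact ⟨lt_of_lt_of_le (by positivity) h0, h1⟩
    have hmono : Monotone fun k : ℕ => Icc (δ / 2 / ((k:ℝ) + 2)) (δ / 2) := by
      intro i j hij
      refine Icc_subset_Icc_left ?_
      gcongr
    rw [hU, setLIntegral_iUnion_of_directed _ (directed_of_isDirected_le hmono)]
    refine iSup_le fun k => hcpt _ ⟨by positivity, ?_⟩
    exact div_lt_self (by positivity) (by linarith [(Nat.cast_nonneg k : (0:ℝ) ≤ k)])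
  have hfar : ∫⁻ r in Ioo (δ / 2) δ, ENNReal.ofReal (g r) ≤ ENNReal.ofReal (2 / (a * δ)) * R := by
    have hsub : Ioo (δ / 2) δ ⊆ Ioo 0 δ := Ioo_subset_Ioo_left (by linarith)
    rw [hR, ← lintegral_const_mul' _ _ ENNReal.ofReal_ne_top]
    refine le_trans (setLIntegral_mono' measurableSet_Ioo fun r hr => ?_)
      (lintegral_mono_set hsub)
    rw [← ENNReal.ofReal_mul hD.le]
    refine ENNReal.ofReal_le_ofReal ?_
    have h1 := hg0 r (hδI r (hsub hr))
    have h2 : a * (δ / 2) ≤ ψ r :=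
      le_trans (by gcongr; exact hr.1.le) (hbd r ⟨(hsub hr).1, hr.2.le⟩).2.1
    calc g r = 2 / (a * δ) * (g r * (a * (δ / 2))) := by field_simp
      _ ≤ 2 / (a * δ) * (g r * ψ r) := by gcongr
  have hcover : Ioo 0 δ ⊆ Ioc 0 (δ / 2) ∪ Ioo (δ / 2) δ := fun r hr => by
    rcases le_or_gt r (δ / 2) with h | h
    · exact Or.inl ⟨hr.1, h⟩
    · exact Or.inr ⟨h, hr.2⟩
  calc ∫⁻ r in Ioo 0 δ, ENNReal.ofReal (g r)
      ≤ ∫⁻ r in Ioc 0 (δ / 2) ∪ Ioo (δ / 2) δ, ENNReal.ofReal (g r) := lintegral_mono_set hcover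
    _ ≤ _ := lintegral_union_le _ _ _
    _ ≤ ENNReal.ofReal C * R + ENNReal.ofReal (2 / (a * δ)) * R := add_le_add hnear hfar
    _ = ENNReal.ofReal (C + 2 / (a * δ)) * R := by
      rw [ENNReal.ofReal_add hC.le hD.le, add_mul]
end

section
/- Let u be a radial classical solution with u(r) > 0 and f(u(r)) ≥ 0 for all r ∈ (0,1), extending continuously to (0,1] with u(1) = 0. Then there exists a constant C, depending only on N, p and ψ, such that ψ(r)^{N−1} |u'(r)|^{p−1} ≤ C ∫₀^{1/2} u(s)^{p−1} ψ(s)^{N−1} ds for every r ∈ (0,1/2). -/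
/-!
Write `w = ψ^(N-1) |u'|^(p-1)` for the flux. The equation says `w' = ψ^(N-1) f(u) ≥ 0`, so `w` is
nondecreasing (`flux_monotoneOn`). By the mean value theorem there is `ξ ∈ (1/2, 3/4)` with
`u(1/2) ≥ u(1/2) - u(3/4) = |u'(ξ)| / 4`, and `|u'(ξ)|^(p-1) = w(ξ) / ψ(ξ)^(N-1) ≥ w(r) / M`
for `r < 1/2`, where `M` bounds `ψ^(N-1)`. Since `u ≥ u(1/2)` on `(0, 1/2)`, integrating
`u^(p-1) ψ^(N-1) ≥ 4^(-(p-1)) (w(r) / M) ψ^(N-1)` gives the estimate.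

The solution may be singular at the origin, so the right-hand integral has to be shown to converge.
This again follows from the monotonicity of `w`: it bounds `u'` from above near `0`, and, as `ψ(t)`
is comparable to `t` (`warping_comparable`), the integrand `u^(p-1) ψ^(N-1)` is bounded
(`weighted_power_bounded`).
-/

open MeasureTheory Set Filter

/-- A warping function is comparable to the identity: `ψ t / t` extends to a positive continuous
function on the compact interval `[0, 1]`, with value `ψ'(0) = 1` at the origin. -/
lemma warping_comparable (ψ : ℝ → ℝ) (hψ : ContinuousOn ψ (Icc 0 1))
    (hψ0 : ψ 0 = 0) (hψ'0 : deriv ψ 0 = 1) (hpos : ∀ r ∈ Ioc (0:ℝ) 1, 0 < ψ r) :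
    ∃ a b : ℝ, 0 < a ∧ 0 < b ∧ ∀ t ∈ Icc (0:ℝ) 1, a * t ≤ ψ t ∧ ψ t ≤ b * t := by
  have hd : DifferentiableAt ℝ ψ 0 := by
    by_contra h
    rw [deriv_zero_of_not_differentiableAt h] at hψ'0
    norm_num at hψ'0
  have hc : ContinuousOn (dslope ψ 0) (Icc 0 1) := by
    intro t ht
    by_cases h : t = 0
    · subst h
      exact (continuousAt_dslope_same.2 hd).continuousWithinAt
    · exact (continuousWithinAt_dslope_of_ne h).2 (hψ t ht)
  have hval : ∀ t : ℝ, ψ t = t * dslope ψ 0 t := by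
    intro t
    have := sub_smul_dslope ψ 0 t
    simp only [sub_zero, smul_eq_mul, hψ0] at this
    exact this.symm
  have hp : ∀ t ∈ Icc (0:ℝ) 1, 0 < dslope ψ 0 t := by
    intro t ht
    rcases ht.1.eq_or_lt with h | h
    · rw [← h, dslope_same, hψ'0]
      norm_num
    · have := hpos t ⟨h, ht.2⟩
      rw [hval t] at this
      exact pos_of_mul_pos_right this h.le
  have hne : (Icc (0:ℝ) 1).Nonempty := ⟨0, by norm_num⟩
  obtain ⟨x, hx, hmin⟩ := isCompact_Icc.exists_isMinOn hne hc
  obtain ⟨y, hy, hmax⟩ := isCompact_Icc.exists_isMaxOn hne hc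
  refine ⟨dslope ψ 0 x, dslope ψ 0 y, hp x hx, hp y hy, fun t ht => ?_⟩
  rw [hval t, mul_comm t]
  exact ⟨mul_le_mul_of_nonneg_right (hmin ht) ht.1, mul_le_mul_of_nonneg_right (hmax ht) ht.1⟩

/-- The flux `w = ψ^n |u'|^(p-1)` of a decreasing solution satisfies `w' = ψ^n f(u)`, hence is
nondecreasing when `f(u) ≥ 0`. -/
lemma flux_monotoneOn (n p : ℝ) (ψ f u : ℝ → ℝ)
    (hψ : ∀ r ∈ Ioo (0:ℝ) 1, DifferentiableAt ℝ ψ r)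
    (hpos : ∀ r ∈ Ioo (0:ℝ) 1, 0 < ψ r)
    (hu : ∀ r ∈ Ioo (0:ℝ) 1, DifferentiableAt ℝ (deriv u) r)
    (hu' : ∀ r ∈ Ioo (0:ℝ) 1, deriv u r < 0)
    (heq : ∀ r ∈ Ioo (0:ℝ) 1,
        -(p - 1) * |deriv u r| ^ (p - 2) * deriv (deriv u) r
          - n * (deriv ψ r / ψ r) * |deriv u r| ^ (p - 2) * deriv u r = f (u r))
    (hf : ∀ r ∈ Ioo (0:ℝ) 1, 0 ≤ f (u r)) :
    MonotoneOn (fun t => ψ t ^ n * |deriv u t| ^ (p - 1)) (Ioo 0 1) := by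
  have hmono : MonotoneOn (fun t => ψ t ^ n * (-deriv u t) ^ (p - 1)) (Ioo 0 1) := by
    have key : ∀ t ∈ Ioo (0:ℝ) 1,
        HasDerivAt (fun t => ψ t ^ n * (-deriv u t) ^ (p - 1)) (ψ t ^ n * f (u t)) t := by
      intro t ht
      have hv : 0 < -deriv u t := neg_pos.2 (hu' t ht)
      have h1 := (hψ t ht).hasDerivAt.rpow_const (p := n) (Or.inl (hpos t ht).ne')
      have h2 := (hu t ht).hasDerivAt.neg.rpow_const (p := p - 1) (Or.inl hv.ne')
      refine (h1.mul h2).congr_deriv ?_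
      have e := heq t ht
      rw [abs_of_neg (hu' t ht)] at e
      have hψn : ψ t ^ (n - 1) = ψ t ^ n / ψ t := Real.rpow_sub_one (hpos t ht).ne' n
      have hvq : (-deriv u t) ^ (p - 1) = (-deriv u t) ^ (p - 2) * (-deriv u t) := by
        rw [← Real.rpow_add_one hv.ne']
        congr 1
        ring
      have hp2 : p - 1 - 1 = p - 2 := by ring
      simp only [Pi.neg_apply]
      rw [hp2, ← e, hψn, hvq]
      ring
    refine monotoneOn_of_deriv_nonneg (convex_Ioo 0 1)
      (fun t ht => (key t ht).continuousAt.continuousWithinAt)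
      (fun t ht => ?_) (fun t ht => ?_)
    · rw [interior_Ioo] at ht
      exact (key t ht).differentiableAt.differentiableWithinAt
    · rw [interior_Ioo] at ht
      rw [(key t ht).deriv]
      exact mul_nonneg (Real.rpow_nonneg (hpos t ht).le _) (hf t ht)
  refine hmono.congr fun t ht => ?_
  simp only [abs_of_neg (hu' t ht)]

/-- A function with monotone flux has at most the singularity of the fundamental solution at the
origin, so that `u^q ψ^n` stays bounded there. -/
lemma weighted_power_bounded (n q a b : ℝ) (hn : 0 ≤ n) (hq : 0 < q) (ψ u : ℝ → ℝ)
    (ha : 0 < a) (hb : 0 < b) (hab : ∀ t ∈ Icc (0:ℝ) 1, a * t ≤ ψ t ∧ ψ t ≤ b * t)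
    (hu : ∀ r ∈ Ioo (0:ℝ) 1, DifferentiableAt ℝ u r)
    (hu' : ∀ r ∈ Ioo (0:ℝ) 1, deriv u r < 0)
    (hupos : ∀ r ∈ Ioo (0:ℝ) 1, 0 < u r)
    (hw : MonotoneOn (fun t => ψ t ^ n * |deriv u t| ^ q) (Ioo 0 1)) :
    ∃ K : ℝ, ∀ s ∈ Ioo (0:ℝ) (1/2), u s ^ q * ψ s ^ n ≤ K := by
  set A := u (1/2) with hA
  set W := ψ (1/2) ^ n * |deriv u (1/2)| ^ q with hW
  have hA0 : 0 < A := hupos _ (by norm_num)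
  refine ⟨2 ^ q * (A ^ q * b ^ n + (b / a) ^ n * W), fun s hs => ?_⟩
  obtain ⟨hs0, hs1⟩ := hs
  have hψs := hab s ⟨hs0.le, by linarith⟩
  have hψs0 : 0 ≤ ψ s := (mul_pos ha hs0).le.trans hψs.1
  obtain ⟨ξ, hξ, hξe⟩ := exists_deriv_eq_slope u hs1
    (fun t ht => (hu t ⟨by linarith [ht.1], by linarith [ht.2]⟩).continuousAt.continuousWithinAt)
    (fun t ht =>
      (hu t ⟨by linarith [ht.1], by linarith [ht.2]⟩).differentiableWithinAt)
  have hξ' : ξ ∈ Ioo (0:ℝ) 1 := ⟨by linarith [hξ.1], by linarith [hξ.2]⟩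
  have hψξ := hab ξ ⟨hξ'.1.le, hξ'.2.le⟩
  have hd := hu' ξ hξ'
  set d := |deriv u ξ| with hdd
  have hd0 : 0 ≤ d := abs_nonneg _
  have hle : u s ≤ A + d := by
    rw [eq_div_iff (by linarith)] at hξe
    have hde : d = -deriv u ξ := abs_of_neg hd
    nlinarith
  have hus : 0 < u s := hupos s ⟨hs0, by linarith⟩
  have hpow : u s ^ q ≤ 2 ^ q * (A ^ q + d ^ q) := by
    rcases le_total A d with h | h
    · calc u s ^ q ≤ (2 * d) ^ q := Real.rpow_le_rpow hus.le (by linarith) hq.le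
        _ = 2 ^ q * d ^ q := Real.mul_rpow (by norm_num) hd0
        _ ≤ _ := by
          have := Real.rpow_nonneg hA0.le q
          gcongr
          linarith
    · calc u s ^ q ≤ (2 * A) ^ q := Real.rpow_le_rpow hus.le (by linarith) hq.le
        _ = 2 ^ q * A ^ q := Real.mul_rpow (by norm_num) hA0.le
        _ ≤ _ := by
          have := Real.rpow_nonneg hd0 q
          gcongr
          linarith
  have hWξ : ψ ξ ^ n * d ^ q ≤ W :=
    hw hξ' (by norm_num) hξ.2.le
  have h1 : ψ s ^ n ≤ b ^ n := by
    refine Real.rpow_le_rpow hψs0 (hψs.2.trans ?_) hn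
    nlinarith
  have h2 : ψ s ^ n ≤ (b / a) ^ n * ψ ξ ^ n := by
    rw [← Real.mul_rpow (by positivity) ((mul_pos ha hξ'.1).le.trans hψξ.1)]
    refine Real.rpow_le_rpow hψs0 ?_ hn
    calc ψ s ≤ b * s := hψs.2
      _ ≤ b * ξ := by gcongr; exact hξ.1.le
      _ = b / a * (a * ξ) := by field_simp
      _ ≤ b / a * ψ ξ := by gcongr; exact hψξ.1
  have h3 : d ^ q * ψ s ^ n ≤ (b / a) ^ n * W := by
    calc d ^ q * ψ s ^ n ≤ d ^ q * ((b / a) ^ n * ψ ξ ^ n) := by gcongr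
      _ = (b / a) ^ n * (ψ ξ ^ n * d ^ q) := by ring
      _ ≤ _ := by gcongr
  calc u s ^ q * ψ s ^ n ≤ 2 ^ q * (A ^ q + d ^ q) * ψ s ^ n := by gcongr
    _ = 2 ^ q * (A ^ q * ψ s ^ n + d ^ q * ψ s ^ n) := by ring
    _ ≤ _ := by gcongr

/-- For a radial classical solution u with u > 0, f(u) ≥ 0 and
Dirichlet condition u(1) = 0, there is C = C(N,p,ψ) such that
ψ(r)^{N−1}|u'(r)|^{p−1} ≤ C ∫₀^{1/2} u^{p−1} ψ^{N−1} for all r ∈ (0,1/2). -/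
theorem flux_Linfty_bound
    (N : ℕ) (hN : 2 ≤ N) (p : ℝ) (hp1 : 1 < p) (hpN : p ≤ N)
    (ψ : ℝ → ℝ) (hψ : ContDiffOn ℝ (⊤ : ℕ∞) ψ (Set.Icc 0 1))
    (hψ0 : ψ 0 = 0) (hψ'0 : deriv ψ 0 = 1) (hψ''0 : deriv (deriv ψ) 0 = 0)
    (hψpos : ∀ r ∈ Set.Ioo (0:ℝ) 1, 0 < ψ r) (hψ1 : 0 < ψ 1) :
    ∃ C : ℝ, 0 < C ∧ ∀ (f u : ℝ → ℝ),
      ContDiff ℝ 1 f →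
      ContDiffOn ℝ 2 u (Set.Ioo 0 1) →
      (∀ r ∈ Set.Ioo (0:ℝ) 1, deriv u r < 0) →
      (∀ r ∈ Set.Ioo (0:ℝ) 1,
        -(p - 1) * |deriv u r| ^ (p - 2) * deriv (deriv u) r
          - ((N : ℝ) - 1) * (deriv ψ r / ψ r) * |deriv u r| ^ (p - 2) * deriv u r
          = f (u r)) →
      (∀ r ∈ Set.Ioo (0:ℝ) 1, 0 < u r) →
      (∀ r ∈ Set.Ioo (0:ℝ) 1, 0 ≤ f (u r)) →
      ContinuousOn u (Set.Ioc 0 1) →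
      u 1 = 0 →
      ∀ r ∈ Set.Ioo (0:ℝ) (1/2),
        ψ r ^ ((N : ℝ) - 1) * |deriv u r| ^ (p - 1)
          ≤ C * ∫ s in (0:ℝ)..(1/2 : ℝ), u s ^ (p - 1) * ψ s ^ ((N : ℝ) - 1) := by
  set n : ℝ := (N : ℝ) - 1 with hn
  have hn0 : 0 ≤ n := by
    have : (2:ℝ) ≤ N := by exact_mod_cast hN
    linarith
  set q : ℝ := p - 1 with hq
  have hq0 : 0 < q := by linarith
  have hψc := hψ.continuousOn
  have hpos' : ∀ r ∈ Ioc (0:ℝ) 1, 0 < ψ r := by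
    intro r hr
    rcases hr.2.eq_or_lt with h | h
    · rw [h]
      exact hψ1
    · exact hψpos r ⟨hr.1, h⟩
  obtain ⟨a, b, ha, hb, hab⟩ := warping_comparable ψ hψc hψ0 hψ'0 hpos'
  have hψn : ContinuousOn (fun s => ψ s ^ n) (Icc 0 1) :=
    hψc.rpow_const fun _ _ => Or.inr hn0
  have hsub : Icc (0:ℝ) (1/2) ⊆ Icc 0 1 := Icc_subset_Icc_right (by norm_num)
  have hψint : IntervalIntegrable (fun s => ψ s ^ n) volume 0 (1/2) :=
    ContinuousOn.intervalIntegrable_of_Icc (by norm_num) (hψn.mono hsub)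
  have hI : 0 < ∫ s in (0:ℝ)..(1/2), ψ s ^ n :=
    intervalIntegral.intervalIntegral_pos_of_pos_on hψint
      (fun x hx => Real.rpow_pos_of_pos (hψpos x ⟨hx.1, by linarith [hx.2]⟩) _) (by norm_num)
  set I := ∫ s in (0:ℝ)..(1/2), ψ s ^ n with hIdef
  refine ⟨4 ^ q * b ^ n / I, by positivity, ?_⟩
  intro f u _ hu hu' heq hupos hf _ _ r hr
  have hud : ∀ r ∈ Ioo (0:ℝ) 1, DifferentiableAt ℝ u r := fun t ht =>
    (hu.differentiableOn (by norm_num)).differentiableAt (isOpen_Ioo.mem_nhds ht)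
  have hudd : ∀ r ∈ Ioo (0:ℝ) 1, DifferentiableAt ℝ (deriv u) r := fun t ht =>
    ((hu.deriv_of_isOpen (m := 1) isOpen_Ioo (by norm_num)).differentiableOn
      (by norm_num)).differentiableAt (isOpen_Ioo.mem_nhds ht)
  have hψd : ∀ r ∈ Ioo (0:ℝ) 1, DifferentiableAt ℝ ψ r := fun t ht =>
    (hψ.differentiableOn (by simp)).differentiableAt (Icc_mem_nhds ht.1 ht.2)
  have hw := flux_monotoneOn n p ψ f u hψd hψpos hudd hu' heq hf
  have hanti : StrictAntiOn u (Ioo 0 1) :=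
    strictAntiOn_of_deriv_neg (convex_Ioo 0 1)
      (fun t ht => (hud t ht).continuousAt.continuousWithinAt)
      (fun t ht => hu' t (by rwa [interior_Ioo] at ht))
  obtain ⟨K, hK⟩ := weighted_power_bounded n q a b hn0 hq0 ψ u ha hb hab hud hu' hupos hw
  have hint : IntervalIntegrable (fun s => u s ^ q * ψ s ^ n) volume 0 (1/2) := by
    rw [intervalIntegrable_iff_integrableOn_Ioo_of_le (by norm_num)]
    have hcont : ContinuousOn (fun s => u s ^ q * ψ s ^ n) (Ioo 0 (1/2)) := by
      refine ContinuousOn.mul ?_ (hψn.mono (Ioo_subset_Icc_self.trans hsub))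
      exact ContinuousOn.rpow_const
        (fun t ht =>
          (hud t ⟨ht.1, by linarith [ht.2]⟩).continuousAt.continuousWithinAt)
        fun _ _ => Or.inr hq0.le
    refine IntegrableOn.of_bound (by simp) (hcont.aestronglyMeasurable measurableSet_Ioo) K ?_
    refine (ae_restrict_iff' measurableSet_Ioo).2 (Eventually.of_forall fun s hs => ?_)
    have hs' : s ∈ Ioo (0:ℝ) 1 := ⟨hs.1, by linarith [hs.2]⟩
    rw [Real.norm_of_nonneg
      (mul_nonneg (Real.rpow_nonneg (hupos s hs').le _) (Real.rpow_nonneg (hψpos s hs').le _))]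
    exact hK s hs
  have hr' : r ∈ Ioo (0:ℝ) 1 := ⟨hr.1, by linarith [hr.2]⟩
  obtain ⟨ξ, hξ, hξe⟩ := exists_deriv_eq_slope u (show (1/2:ℝ) < 3/4 by norm_num)
    (fun t ht => (hud t ⟨by linarith [ht.1], by linarith [ht.2]⟩).continuousAt.continuousWithinAt)
    (fun t ht =>
      (hud t ⟨by linarith [ht.1], by linarith [ht.2]⟩).differentiableWithinAt)
  have hξ' : ξ ∈ Ioo (0:ℝ) 1 := ⟨by linarith [hξ.1], by linarith [hξ.2]⟩
  have hd : |deriv u ξ| ≤ 4 * u (1/2) := by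
    have := hupos (3/4) (by norm_num)
    rw [eq_div_iff (by norm_num)] at hξe
    rw [abs_of_neg (hu' ξ hξ')]
    linarith
  have hu2 : 0 < u (1/2) := hupos _ (by norm_num)
  have hflux : ψ r ^ n * |deriv u r| ^ q ≤ 4 ^ q * b ^ n * u (1/2) ^ q := by
    calc ψ r ^ n * |deriv u r| ^ q ≤ ψ ξ ^ n * |deriv u ξ| ^ q :=
          hw hr' hξ' (by linarith [hr.2, hξ.1])
      _ ≤ b ^ n * (4 * u (1/2)) ^ q := by
          have hbξ : ψ ξ ≤ b := by
            have := (hab ξ ⟨hξ'.1.le, hξ'.2.le⟩).2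
            nlinarith [hξ'.2]
          have := (hψpos ξ hξ').le
          gcongr
      _ = _ := by
          rw [Real.mul_rpow (by norm_num) hu2.le]
          ring
  have hlow : u (1/2) ^ q * I ≤ ∫ s in (0:ℝ)..(1/2), u s ^ q * ψ s ^ n := by
    rw [hIdef, ← intervalIntegral.integral_const_mul]
    refine intervalIntegral.integral_mono_on_of_le_Ioo (by norm_num)
      (hψint.const_mul _) hint fun s hs => ?_
    have hs' : s ∈ Ioo (0:ℝ) 1 := ⟨hs.1, by linarith [hs.2]⟩
    have h1 : u (1/2) ≤ u s := (hanti hs' (by norm_num) hs.2).le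
    have h2 := Real.rpow_nonneg (hψpos s hs').le n
    gcongr
  calc ψ r ^ n * |deriv u r| ^ q ≤ 4 ^ q * b ^ n * u (1/2) ^ q := hflux
    _ = 4 ^ q * b ^ n / I * (u (1/2) ^ q * I) := by field_simp
    _ ≤ _ := by gcongr
end

section
/- Let u be a radial classical solution with u(r) > 0 and f(u(r)) ≥ 0 for all r ∈ (0,1), extending continuously to (0,1] with u(1) = 0. Then there exists a constant C, depending only on N, p and ψ, such that ∫₀^{1/4} f(u(r)) ψ(r)^{N−1} dr ≤ C ∫₀^{1/2} u(r)^{p−1} ψ(r)^{N−1} dr. -/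
/-!
The equation says exactly that the flux `w = ψ ^ (N - 1) * (-u') ^ (p - 1)` satisfies
`w' = f(u) ψ ^ (N - 1)` (`hasDerivAt_flux`). Hence `w` is nonnegative and nondecreasing, and
`∫₀^{1/4} f(u) ψ ^ (N - 1) ≤ w (1/4)` (`integral_le_flux`).

Conversely, for `r ∈ [1/4, 3/8]` the mean value theorem on `[r, 1/2]` gives `c ∈ (r, 1/2)` with
`u r ≥ -u' c / 8`, so that `w (1/4) ≤ w c ≤ (max ψ ^ (N - 1)) * 8 ^ (p - 1) * u r ^ (p - 1)`
(`flux_le`). Multiplying by `ψ r ^ (N - 1)`, bounded below on `[1/4, 3/8]`, and integrating over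
that interval bounds `w (1/4)` by `∫₀^{1/2} u ^ (p - 1) ψ ^ (N - 1)`.

The right-hand integral has to be a genuine one, since `u` may be singular at `0`. This is
`integrableOn_rhs`: the mean value theorem on `[r, δ]` gives `u r ≤ u δ - u' c`, and
`ψ r ≤ 4 ψ c` (because `ψ' 0 = 1`), so `(-u' c) ^ (p - 1) ψ r ^ (N - 1) ≤ 4 ^ (N - 1) w (1/2)` and
the integrand is bounded near `0`.
-/

open MeasureTheory Set Filter

/-- The flux `ψ ^ n * (-u') ^ q` of a radially decreasing function, with `n = N - 1` and
`q = p - 1`. -/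
noncomputable def flux (n q : ℝ) (ψ u : ℝ → ℝ) (r : ℝ) : ℝ :=
  ψ r ^ n * (-deriv u r) ^ q

/-- The radial equation in divergence form. -/
lemma hasDerivAt_flux {n q : ℝ} {ψ u f : ℝ → ℝ} {r : ℝ}
    (hψ : DifferentiableAt ℝ ψ r) (hψpos : 0 < ψ r)
    (hu : DifferentiableAt ℝ (deriv u) r) (hu' : deriv u r < 0)
    (heq : -q * |deriv u r| ^ (q - 1) * deriv (deriv u) r
          - n * (deriv ψ r / ψ r) * |deriv u r| ^ (q - 1) * deriv u r = f (u r)) :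
    HasDerivAt (flux n q ψ u) (f (u r) * ψ r ^ n) r := by
  have h1 := hψ.hasDerivAt.rpow_const (p := n) (Or.inl hψpos.ne')
  have h2 := hu.hasDerivAt.neg.rpow_const (p := q) (Or.inl (by simpa using hu'.ne))
  have h3 := h1.mul h2
  refine h3.congr_deriv ?_
  rw [← heq, abs_of_neg hu']
  simp only [Pi.neg_apply]
  have e1 : ψ r ^ (n - 1) = ψ r ^ n / ψ r := Real.rpow_sub_one hψpos.ne' n
  have e2 : (-deriv u r) ^ q = (-deriv u r) ^ (q - 1) * (-deriv u r) := by
    rw [Real.rpow_sub_one (by linarith), div_mul_cancel₀ _ (by linarith)]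
  rw [e1, e2]
  field_simp
  ring

lemma flux_nonneg {n q : ℝ} {ψ u : ℝ → ℝ} {r : ℝ} (hψpos : 0 < ψ r) (hu' : deriv u r < 0) :
    0 ≤ flux n q ψ u r :=
  mul_nonneg (Real.rpow_nonneg hψpos.le _) (Real.rpow_nonneg (by linarith) _)

lemma exists_mean_value {u : ℝ → ℝ} (hu : ∀ r ∈ Ioo (0 : ℝ) 1, DifferentiableAt ℝ u r)
    {a b : ℝ} (ha : 0 < a) (hab : a < b) (hb : b < 1) :
    ∃ c ∈ Ioo a b, u a = u b + (-deriv u c) * (b - a) := by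
  obtain ⟨c, hc, h⟩ := exists_deriv_eq_slope u hab
    (fun x hx => (hu x ⟨by linarith [hx.1], by linarith [hx.2]⟩).continuousAt.continuousWithinAt)
    (fun x hx => (hu x ⟨by linarith [hx.1], by linarith [hx.2]⟩).differentiableWithinAt)
  refine ⟨c, hc, ?_⟩
  rw [h]
  field_simp [(sub_pos.2 hab).ne']
  ring

/-- If `w' = g` and `w ≥ 0` on `(0, 1)`, then `∫₀ᵇ g ≤ w b`, even without integrability of `g`
at `0`: there the integral is `0` by convention. -/
lemma integral_le_flux {w g : ℝ → ℝ} {b : ℝ} (hb : 0 < b) (hb1 : b < 1)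
    (hw : ∀ r ∈ Ioo (0 : ℝ) 1, HasDerivAt w (g r) r) (hw0 : ∀ r ∈ Ioo (0 : ℝ) 1, 0 ≤ w r)
    (hg : ContinuousOn g (Ioo 0 1)) :
    ∫ r in (0 : ℝ)..b, g r ≤ w b := by
  by_cases hint : IntervalIntegrable g volume 0 b
  · have hcont : ContinuousWithinAt (fun ε => ∫ r in ε..b, g r) (Icc 0 b) 0 := by
      have := intervalIntegral.continuousOn_primitive_interval_left (a := 0) (b := b) (f := g)
        (μ := volume) (by
          rw [uIcc_of_le hb.le]
          exact (intervalIntegrable_iff_integrableOn_Icc_of_le hb.le).1 hint)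
      rw [uIcc_of_le hb.le] at this
      exact this 0 ⟨le_rfl, hb.le⟩
    have ht : Tendsto (fun ε => ∫ r in ε..b, g r) (nhdsWithin 0 (Ioo 0 b))
        (nhds (∫ r in (0 : ℝ)..b, g r)) :=
      hcont.tendsto.mono_left (nhdsWithin_mono _ Ioo_subset_Icc_self)
    have : (nhdsWithin (0 : ℝ) (Ioo 0 b)).NeBot := by
      rw [nhdsWithin_Ioo_eq_nhdsGT hb]; infer_instance
    refine le_of_tendsto ht ?_
    filter_upwards [self_mem_nhdsWithin] with ε hε
    have hsub : ∀ x ∈ uIcc ε b, x ∈ Ioo (0 : ℝ) 1 := by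
      intro x hx
      rw [uIcc_of_le hε.2.le] at hx
      exact ⟨by linarith [hx.1, hε.1], by linarith [hx.2]⟩
    rw [intervalIntegral.integral_eq_sub_of_hasDerivAt (fun x hx => hw x (hsub x hx))
      (hg.mono hsub).intervalIntegrable]
    linarith [hw0 ε (hsub ε left_mem_uIcc)]
  · rw [intervalIntegral.integral_undef hint]
    exact hw0 b ⟨hb, hb1⟩

/-- The flux at `1/4` is controlled pointwise by `u ^ q` on `[1/4, 3/8]`, `M` being an upper bound
for `ψ ^ n`. -/
lemma flux_le {n q M : ℝ} {ψ u : ℝ → ℝ} (hq : 0 < q)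
    (hu : ∀ r ∈ Ioo (0 : ℝ) 1, DifferentiableAt ℝ u r)
    (hu' : ∀ r ∈ Ioo (0 : ℝ) 1, deriv u r < 0) (hupos : ∀ r ∈ Ioo (0 : ℝ) 1, 0 < u r)
    (hmono : MonotoneOn (flux n q ψ u) (Ioo 0 1))
    (hM0 : 0 ≤ M) (hM : ∀ r ∈ Icc (1 / 4 : ℝ) (1 / 2), ψ r ^ n ≤ M)
    {r : ℝ} (hr : r ∈ Icc (1 / 4 : ℝ) (3 / 8)) :
    flux n q ψ u (1 / 4) ≤ M * 8 ^ q * u r ^ q := by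
  obtain ⟨c, hc, h⟩ := exists_mean_value hu (a := r) (b := 1 / 2) (by linarith [hr.1])
    (by linarith [hr.2]) (by norm_num)
  have hc01 : c ∈ Ioo (0 : ℝ) 1 := ⟨by linarith [hr.1, hc.1], by linarith [hc.2]⟩
  have hd := hu' c hc01
  have hle : -deriv u c ≤ 8 * u r := by
    nlinarith [hupos (1 / 2) (by norm_num), hr.2]
  have hur := hupos r ⟨by linarith [hr.1], by linarith [hr.2]⟩
  calc flux n q ψ u (1 / 4) ≤ flux n q ψ u c :=
        hmono (by norm_num) hc01 (by linarith [hr.1, hc.1])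
    _ ≤ M * (8 * u r) ^ q :=
        mul_le_mul (hM c ⟨by linarith [hr.1, hc.1], hc.2.le⟩)
          (Real.rpow_le_rpow (by linarith) hle hq.le) (Real.rpow_nonneg (by linarith) _) hM0
    _ = M * 8 ^ q * u r ^ q := by
        rw [Real.mul_rpow (by norm_num) hur.le]; ring

/-- A function vanishing at `0` with derivative `1` there satisfies `r/2 ≤ ψ r ≤ 2r` for small
`r > 0`, hence is almost increasing near `0`. -/
lemma exists_almost_increasing {ψ : ℝ → ℝ} (hψ0 : ψ 0 = 0) (hψ'0 : deriv ψ 0 = 1) :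
    ∃ δ ∈ Ioo (0 : ℝ) (1 / 2), ∀ r s, 0 < r → r ≤ s → s ≤ δ → ψ r ≤ 4 * ψ s := by
  have hd : HasDerivAt ψ 1 0 := by
    rw [← hψ'0]
    exact (differentiableAt_of_deriv_ne_zero (by rw [hψ'0]; norm_num)).hasDerivAt
  have h := (hasDerivAt_iff_isLittleO.1 hd).bound (show (0 : ℝ) < 1 / 2 by norm_num)
  obtain ⟨ε, hε, hb⟩ := Metric.eventually_nhds_iff.1 h
  have key : ∀ r, 0 < r → r < ε → r / 2 ≤ ψ r ∧ ψ r ≤ 2 * r := by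
    intro r hr hrε
    have := hb (y := r) (by rwa [Real.dist_eq, sub_zero, abs_of_pos hr])
    simp only [hψ0, sub_zero, smul_eq_mul, mul_one, Real.norm_eq_abs, abs_of_pos hr] at this
    have := abs_le.1 this
    constructor <;> linarith [this.1, this.2]
  refine ⟨min (ε / 2) (1 / 4), ⟨by positivity, (min_le_right _ _).trans_lt (by norm_num)⟩, ?_⟩
  intro r s hr hrs hs
  have hsε : s < ε := by linarith [hs.trans (min_le_left _ _)]
  linarith [(key r hr (by linarith)).2, (key s (by linarith) hsε).1]

lemma add_rpow_le_two_rpow {a b q : ℝ} (ha : 0 ≤ a) (hb : 0 ≤ b) (hq : 0 < q) :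
    (a + b) ^ q ≤ 2 ^ q * (a ^ q + b ^ q) := by
  have ha' := Real.rpow_nonneg ha q
  have hb' := Real.rpow_nonneg hb q
  have h2 : (0 : ℝ) ≤ 2 ^ q := by positivity
  rcases le_total a b with h | h
  · calc (a + b) ^ q ≤ (2 * b) ^ q := Real.rpow_le_rpow (by linarith) (by linarith) hq.le
      _ = 2 ^ q * b ^ q := Real.mul_rpow (by norm_num) hb
      _ ≤ _ := by nlinarith
  · calc (a + b) ^ q ≤ (2 * a) ^ q := Real.rpow_le_rpow (by linarith) (by linarith) hq.le
      _ = 2 ^ q * a ^ q := Real.mul_rpow (by norm_num) ha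
      _ ≤ _ := by nlinarith

/-- The integrand `u ^ q * ψ ^ n` is integrable up to the possible singularity of `u` at `0`, where
it is bounded because the flux is. -/
lemma integrableOn_rhs {n q : ℝ} {ψ u : ℝ → ℝ} (hn : 0 < n) (hq : 0 < q)
    (hψ : ContinuousOn ψ (Icc 0 1)) (hψ0 : ψ 0 = 0) (hψ'0 : deriv ψ 0 = 1)
    (hψpos : ∀ r ∈ Ioo (0 : ℝ) 1, 0 < ψ r)
    (hu : ∀ r ∈ Ioo (0 : ℝ) 1, DifferentiableAt ℝ u r)
    (hu' : ∀ r ∈ Ioo (0 : ℝ) 1, deriv u r < 0) (hupos : ∀ r ∈ Ioo (0 : ℝ) 1, 0 < u r)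
    (hmono : MonotoneOn (flux n q ψ u) (Ioo 0 1)) :
    IntegrableOn (fun r => u r ^ q * ψ r ^ n) (Ioc 0 (1 / 2)) := by
  obtain ⟨δ, hδ, hψδ⟩ := exists_almost_increasing hψ0 hψ'0
  have hδ01 : δ ∈ Ioo (0 : ℝ) 1 := ⟨hδ.1, by linarith [hδ.2]⟩
  have hcont : ContinuousOn (fun r => u r ^ q * ψ r ^ n) (Ioo 0 1) := by
    have hcu : ContinuousOn u (Ioo 0 1) := fun x hx => (hu x hx).continuousAt.continuousWithinAt
    exact (hcu.rpow_const fun x hx => Or.inl (hupos x hx).ne').mul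
      ((hψ.mono Ioo_subset_Icc_self).rpow_const fun x hx => Or.inl (hψpos x hx).ne')
  have hfar : IntegrableOn (fun r => u r ^ q * ψ r ^ n) (Icc δ (1 / 2)) :=
    (hcont.mono fun x hx => ⟨by linarith [hδ.1, hx.1], by linarith [hx.2]⟩).integrableOn_Icc
  have hnear : IntegrableOn (fun r => u r ^ q * ψ r ^ n) (Ioo 0 δ) := by
    refine IntegrableOn.of_bound (by simp)
      ((hcont.mono fun x hx => ⟨hx.1, by linarith [hx.2, hδ01.2]⟩).aestronglyMeasurable
        measurableSet_Ioo)
      (2 ^ q * (u δ ^ q * (4 * ψ δ) ^ n + 4 ^ n * flux n q ψ u (1 / 2))) ?_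
    refine (ae_restrict_iff' measurableSet_Ioo).2 (Eventually.of_forall fun r hr => ?_)
    have hr01 : r ∈ Ioo (0 : ℝ) 1 := ⟨hr.1, by linarith [hr.2, hδ01.2]⟩
    have hur := hupos r hr01
    have huδ := hupos δ hδ01
    have hψr := hψpos r hr01
    obtain ⟨c, hc, h⟩ := exists_mean_value hu hr.1 hr.2 hδ01.2
    have hc01 : c ∈ Ioo (0 : ℝ) 1 := ⟨by linarith [hr.1, hc.1], by linarith [hc.2, hδ01.2]⟩
    have hd := hu' c hc01
    have hψc := hψpos c hc01
    have hle : u r ≤ u δ + -deriv u c := by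
      nlinarith [hδ.2, hr.1]
    have h1 : u r ^ q ≤ 2 ^ q * (u δ ^ q + (-deriv u c) ^ q) :=
      (Real.rpow_le_rpow hur.le hle hq.le).trans
        (add_rpow_le_two_rpow huδ.le (by linarith) hq)
    have h2 : ψ r ^ n ≤ (4 * ψ δ) ^ n :=
      Real.rpow_le_rpow hψr.le (hψδ r δ hr.1 hr.2.le le_rfl) hn.le
    have h3 : ψ r ^ n ≤ 4 ^ n * ψ c ^ n := by
      rw [← Real.mul_rpow (by norm_num) hψc.le]
      exact Real.rpow_le_rpow hψr.le (hψδ r c hr.1 hc.1.le hc.2.le) hn.le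
    have h4 : flux n q ψ u c ≤ flux n q ψ u (1 / 2) :=
      hmono hc01 (by norm_num) (by linarith [hc.2, hδ.2])
    have hdq : 0 ≤ (-deriv u c) ^ q := Real.rpow_nonneg (by linarith) _
    have huq : 0 ≤ u δ ^ q := Real.rpow_nonneg huδ.le _
    have hψn : 0 ≤ ψ r ^ n := Real.rpow_nonneg hψr.le _
    rw [Real.norm_of_nonneg (mul_nonneg (Real.rpow_nonneg hur.le _) hψn)]
    calc u r ^ q * ψ r ^ n ≤ 2 ^ q * (u δ ^ q + (-deriv u c) ^ q) * ψ r ^ n :=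
          mul_le_mul_of_nonneg_right h1 hψn
      _ = 2 ^ q * (u δ ^ q * ψ r ^ n + (-deriv u c) ^ q * ψ r ^ n) := by ring
      _ ≤ 2 ^ q * (u δ ^ q * (4 * ψ δ) ^ n + (-deriv u c) ^ q * (4 ^ n * ψ c ^ n)) := by
          gcongr
      _ = 2 ^ q * (u δ ^ q * (4 * ψ δ) ^ n + 4 ^ n * flux n q ψ u c) := by
          unfold flux; ring
      _ ≤ _ := by gcongr
  refine (hnear.union hfar).mono_set fun x hx => ?_
  rcases lt_or_ge x δ with h | h
  · exact Or.inl ⟨hx.1, h⟩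
  · exact Or.inr ⟨h, hx.2⟩




/-- For a radial classical solution u with u > 0, f(u) ≥ 0 and
Dirichlet condition u(1) = 0, there is C = C(N,p,ψ) such that
∫₀^{1/4} f(u) ψ^{N−1} ≤ C ∫₀^{1/2} u^{p−1} ψ^{N−1}. -/
theorem L1_nonlinearity_bound
    (N : ℕ) (hN : 2 ≤ N) (p : ℝ) (hp1 : 1 < p) (hpN : p ≤ N)
    (ψ : ℝ → ℝ) (hψ : ContDiffOn ℝ (⊤ : ℕ∞) ψ (Set.Icc 0 1))
    (hψ0 : ψ 0 = 0) (hψ'0 : deriv ψ 0 = 1) (hψ''0 : deriv (deriv ψ) 0 = 0)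
    (hψpos : ∀ r ∈ Set.Ioo (0:ℝ) 1, 0 < ψ r) (hψ1 : 0 < ψ 1) :
    ∃ C : ℝ, 0 < C ∧ ∀ (f u : ℝ → ℝ),
      ContDiff ℝ 1 f →
      ContDiffOn ℝ 2 u (Set.Ioo 0 1) →
      (∀ r ∈ Set.Ioo (0:ℝ) 1, deriv u r < 0) →
      (∀ r ∈ Set.Ioo (0:ℝ) 1,
        -(p - 1) * |deriv u r| ^ (p - 2) * deriv (deriv u) r
          - ((N : ℝ) - 1) * (deriv ψ r / ψ r) * |deriv u r| ^ (p - 2) * deriv u r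
          = f (u r)) →
      (∀ r ∈ Set.Ioo (0:ℝ) 1, 0 < u r) →
      (∀ r ∈ Set.Ioo (0:ℝ) 1, 0 ≤ f (u r)) →
      ContinuousOn u (Set.Ioc 0 1) →
      u 1 = 0 →
      ∫ r in (0:ℝ)..(1/4 : ℝ), f (u r) * ψ r ^ ((N : ℝ) - 1)
        ≤ C * ∫ r in (0:ℝ)..(1/2 : ℝ), u r ^ (p - 1) * ψ r ^ ((N : ℝ) - 1) := by
  have hn : (0 : ℝ) < (N : ℝ) - 1 := by
    have : (2 : ℝ) ≤ N := by exact_mod_cast hN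
    linarith
  have hq : 0 < p - 1 := by linarith
  have hψc : ContinuousOn ψ (Icc 0 1) := hψ.continuousOn
  have hψd : ∀ r ∈ Ioo (0 : ℝ) 1, DifferentiableAt ℝ ψ r := fun r hr =>
    (hψ.contDiffAt (Icc_mem_nhds hr.1 hr.2)).differentiableAt (by simp)
  have hψnc : ContinuousOn (fun r => ψ r ^ ((N : ℝ) - 1)) (Ioo 0 1) :=
    (hψc.mono Ioo_subset_Icc_self).rpow_const fun x hx => Or.inl (hψpos x hx).ne'
  have hψn : ContinuousOn (fun r => ψ r ^ ((N : ℝ) - 1)) (Icc (1 / 4) (1 / 2)) :=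
    hψnc.mono fun x hx => ⟨by linarith [hx.1], by linarith [hx.2]⟩
  have hne : (Icc (1 / 4 : ℝ) (1 / 2)).Nonempty := ⟨1 / 4, by norm_num⟩
  obtain ⟨a, ha, hmax⟩ := isCompact_Icc.exists_isMaxOn hne hψn
  obtain ⟨b, hb, hmin⟩ := isCompact_Icc.exists_isMinOn hne hψn
  set M := ψ a ^ ((N : ℝ) - 1) with hMdef
  set m := ψ b ^ ((N : ℝ) - 1) with hmdef
  have hM0 : 0 < M :=
    Real.rpow_pos_of_pos (hψpos a ⟨by linarith [ha.1], by linarith [ha.2]⟩) _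
  have hm0 : 0 < m :=
    Real.rpow_pos_of_pos (hψpos b ⟨by linarith [hb.1], by linarith [hb.2]⟩) _
  have hM : ∀ r ∈ Icc (1 / 4 : ℝ) (1 / 2), ψ r ^ ((N : ℝ) - 1) ≤ M := fun r hr => hmax hr
  have hm : ∀ r ∈ Icc (1 / 4 : ℝ) (1 / 2), m ≤ ψ r ^ ((N : ℝ) - 1) := fun r hr => hmin hr
  refine ⟨8 * (M * 8 ^ (p - 1)) / m, by positivity, ?_⟩
  intro f u hf hu hu' heq hupos hfpos _ _
  have hud : ∀ r ∈ Ioo (0 : ℝ) 1, DifferentiableAt ℝ u r := fun r hr =>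
    (hu.contDiffAt (isOpen_Ioo.mem_nhds hr)).differentiableAt (by norm_num)
  have hudd : ∀ r ∈ Ioo (0 : ℝ) 1, DifferentiableAt ℝ (deriv u) r := fun r hr =>
    ((hu.deriv_of_isOpen (m := 1) isOpen_Ioo (by norm_num)).contDiffAt
      (isOpen_Ioo.mem_nhds hr)).differentiableAt (by norm_num)
  have hw : ∀ r ∈ Ioo (0 : ℝ) 1, HasDerivAt (flux ((N : ℝ) - 1) (p - 1) ψ u)
      (f (u r) * ψ r ^ ((N : ℝ) - 1)) r := fun r hr =>
    hasDerivAt_flux (hψd r hr) (hψpos r hr) (hudd r hr) (hu' r hr) (by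
      rw [show p - 1 - 1 = p - 2 by ring]; exact heq r hr)
  have hw0 : ∀ r ∈ Ioo (0 : ℝ) 1, 0 ≤ flux ((N : ℝ) - 1) (p - 1) ψ u r := fun r hr =>
    flux_nonneg (hψpos r hr) (hu' r hr)
  have hmono : MonotoneOn (flux ((N : ℝ) - 1) (p - 1) ψ u) (Ioo 0 1) := by
    refine monotoneOn_of_deriv_nonneg (convex_Ioo 0 1)
      (fun x hx => (hw x hx).continuousAt.continuousWithinAt) ?_ ?_ <;> rw [interior_Ioo]
    · exact fun x hx => (hw x hx).differentiableAt.differentiableWithinAt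
    · intro x hx
      rw [(hw x hx).deriv]
      exact mul_nonneg (hfpos x hx) (Real.rpow_nonneg (hψpos x hx).le _)
  have hL := integral_le_flux (b := 1 / 4) (by norm_num) (by norm_num) hw hw0
    ((hf.continuous.comp_continuousOn hu.continuousOn).mul hψnc)
  have hint := integrableOn_rhs hn hq hψc hψ0 hψ'0 hψpos hud hu' hupos hmono
  set w₀ := flux ((N : ℝ) - 1) (p - 1) ψ u (1 / 4) with hw₀
  have hR : w₀ * m / (M * 8 ^ (p - 1)) * (1 / 8)
      ≤ ∫ r in (0:ℝ)..(1/2 : ℝ), u r ^ (p - 1) * ψ r ^ ((N : ℝ) - 1) := by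
    rw [intervalIntegral.integral_of_le (by norm_num)]
    have hsub : Icc (1 / 4 : ℝ) (3 / 8) ⊆ Ioc 0 (1 / 2) := fun x hx =>
      ⟨by linarith [hx.1], by linarith [hx.2]⟩
    calc w₀ * m / (M * 8 ^ (p - 1)) * (1 / 8)
        = ∫ r in Icc (1 / 4 : ℝ) (3 / 8), w₀ * m / (M * 8 ^ (p - 1)) := by
          simp; norm_num; ring
      _ ≤ ∫ r in Icc (1 / 4 : ℝ) (3 / 8), u r ^ (p - 1) * ψ r ^ ((N : ℝ) - 1) := by
          refine setIntegral_mono_on (by simp) (hint.mono_set hsub) measurableSet_Icc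
            fun r hr => ?_
          have h1 := flux_le hq hud hu' hupos hmono hM0.le hM hr
          have h2 := hm r ⟨hr.1, by linarith [hr.2]⟩
          rw [div_le_iff₀ (by positivity)]
          calc w₀ * m ≤ (M * 8 ^ (p - 1) * u r ^ (p - 1)) * ψ r ^ ((N : ℝ) - 1) :=
                mul_le_mul h1 h2 hm0.le ((hw0 _ (by norm_num)).trans h1)
            _ = _ := by ring
      _ ≤ _ := by
          refine setIntegral_mono_set hint ?_ hsub.eventuallyLE
          refine (ae_restrict_iff' measurableSet_Ioc).2 (Eventually.of_forall fun r hr => ?_)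
          have hr01 : r ∈ Ioo (0 : ℝ) 1 := ⟨hr.1, by linarith [hr.2]⟩
          exact mul_nonneg (Real.rpow_nonneg (hupos r hr01).le _)
            (Real.rpow_nonneg (hψpos r hr01).le _)
  refine hL.trans ?_
  calc w₀ = 8 * (M * 8 ^ (p - 1)) / m * (w₀ * m / (M * 8 ^ (p - 1)) * (1 / 8)) := by
        have : (0 : ℝ) < 8 ^ (p - 1) := by positivity
        field_simp
    _ ≤ _ := by gcongr
end

section
/- Let h : [0,∞) → ℝ be a C¹ increasing function with h(0) > 0 and lim_{t→∞} h(t)/t^{p−1} = +∞, and fix λ₀ > 0. Then there exists a constant C, depending on N, p, ψ, h and λ₀ but not on λ, such that for every λ ≥ λ₀ and every radial classical solution u of the equation with nonlinearity f = λh (i.e. f(s) = λ h(s)) that satisfies u(r) > 0 on (0,1) and extends continuously to (0,1] with u(1) = 0, one has ∫₀¹ u(r)^{p−1} ψ(r)^{N−1} dr + ∫₀¹ h(u(r)) ψ(r)^{N−1} dr ≤ C. -/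
open MeasureTheory Set Filter

/-!
Write `w = ψ ^ (N - 1)` and let `G = w * |u'| ^ (p - 1)` be the flux of a solution. The equation says
`G' = λ h(u) w > 0`, so `G` is positive and increasing, while `u` is decreasing.

* Between `1/4` and `1/2`, the growth of `G` together with `u ≥ u(1/2)` gives
  `G(1/2) ≥ c λ h(u(1/2))` (`flux_half_lower`).
* On `(1/2, 1)` one has `|u'| ^ (p - 1) ≥ G(1/2) / max w`, and `u(1) = 0`, so the mean value theorem
  gives `G(1/2) ≤ max w * (2 u(1/2)) ^ (p - 1)` (`flux_half_upper`).

Hence `h(t) / t ^ (p - 1)` at `t = u(1/2)` is bounded in terms of `λ₀` only, and superhomogeneity of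
`h` bounds `u(1/2)` and then `G(1/2) / λ`. On `(0, 1/2)` the integral of `h(u) w` is at most
`G(1/2) / λ`; on `(1/2, 1)` the integrand is at most `h(u(1/2)) max w`. Finally
`t ^ (p - 1) ≤ h(t) + const`, which takes care of the other integral. Integrals up to the possible
singularity at `0` are recovered as limits of integrals over `[s, 1]`
(`integral_le_of_forall_truncated`).
-/

/-- A bound on the integrals over all `[s, 1]` passes to `[0, 1]`. Integrability need not be assumed:
without it the integral is `0` by convention, which is why `0 ≤ C` is required. -/
lemma integral_le_of_forall_truncated {f : ℝ → ℝ} {C : ℝ} (hC : 0 ≤ C)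
    (hf : ∀ s ∈ Ioo (0:ℝ) (1/2), ∫ r in s..1, f r ≤ C) : ∫ r in (0:ℝ)..1, f r ≤ C := by
  by_cases hi : IntervalIntegrable f volume 0 1
  · have hcont : ContinuousOn (fun s => ∫ r in s..1, f r) (Icc 0 1) := by
      have h1 : ContinuousOn (fun s => ∫ r in (1:ℝ)..s, f r) (uIcc 0 1) :=
        intervalIntegral.continuousOn_primitive_interval' hi (by simp)
      rw [uIcc_of_le zero_le_one] at h1
      refine h1.neg.congr fun s _ => ?_
      exact intervalIntegral.integral_symm _ _
    have ht : Tendsto (fun s => ∫ r in s..1, f r) (nhdsWithin 0 (Ioo 0 (1/2)))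
        (nhds (∫ r in (0:ℝ)..1, f r)) :=
      (hcont 0 (by simp)).mono_left
        (nhdsWithin_mono _ fun x hx => ⟨hx.1.le, by linarith [hx.2]⟩)
    have : (nhdsWithin (0:ℝ) (Ioo 0 (1/2))).NeBot := by
      rw [nhdsWithin_Ioo_eq_nhdsGT (by norm_num)]
      infer_instance
    exact le_of_tendsto ht (eventually_mem_nhdsWithin.mono hf)
  · rw [intervalIntegral.integral_undef hi]
    exact hC

/-- The equation in divergence form: the flux `ψ ^ n * |u'| ^ (p - 1)` has derivative `ψ ^ n * F`,
where `F` is the right-hand side of the equation. -/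
lemma hasDerivAt_flux_s12 {ψ v : ℝ → ℝ} {ψ' v' n p F r : ℝ}
    (hψ : HasDerivAt ψ ψ' r) (hv : HasDerivAt v v' r) (hψr : 0 < ψ r) (hvr : v r < 0)
    (heq : -(p - 1) * |v r| ^ (p - 2) * v' - n * (ψ' / ψ r) * |v r| ^ (p - 2) * v r = F) :
    HasDerivAt (fun r => ψ r ^ n * (-v r) ^ (p - 1)) (F * ψ r ^ n) r := by
  have h1 := hψ.rpow_const (p := n) (Or.inl hψr.ne')
  have h2 := hv.neg.rpow_const (p := p - 1) (Or.inl (by simpa using hvr.ne))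
  refine (h1.mul h2).congr_deriv ?_
  have e1 : (-v r) ^ (p - 1) = (-v r) ^ (p - 2) * (-v r) := by
    rw [← Real.rpow_add_one (by linarith)]
    congr 1
    ring
  have e2 : ψ r ^ (n - 1) = ψ r ^ n / ψ r := Real.rpow_sub_one hψr.ne' n
  simp only [Pi.neg_apply]
  rw [e1, e2, ← heq, abs_of_neg hvr, show p - 1 - 1 = p - 2 by ring]
  field_simp
  ring

/-- Since `u` decreases, the growth of the flux on `[1/4, 1/2]` is governed by `h (u (1/2))`. -/
lemma flux_half_lower {G w u h : ℝ → ℝ} {lam m : ℝ} (hlam : 0 < lam)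
    (hG : ∀ r ∈ Ioo (0:ℝ) 1, HasDerivAt G (lam * h (u r) * w r) r)
    (hG0 : ∀ r ∈ Ioo (0:ℝ) 1, 0 ≤ G r) (hu : AntitoneOn u (Ioc 0 1))
    (hu0 : ∀ r ∈ Ioo (0:ℝ) 1, 0 < u r)
    (hmono : StrictMonoOn h (Ici 0)) (hh0 : 0 < h 0) (hm : 0 < m)
    (hmw : ∀ r ∈ Icc (1/4:ℝ) (1/2), m ≤ w r) :
    lam * h (u (1/2)) * m / 4 ≤ G (1/2) := by
  obtain ⟨ξ, hξ, hd⟩ := exists_hasDerivAt_eq_slope G (fun r => lam * h (u r) * w r)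
    (show (1/4:ℝ) < 1/2 by norm_num)
    (fun r hr => (hG r ⟨by linarith [hr.1], by linarith [hr.2]⟩).continuousAt.continuousWithinAt)
    (fun r hr => hG r ⟨by linarith [hr.1], by linarith [hr.2]⟩)
  have hhalf : 0 < u (1/2) := hu0 _ (by norm_num)
  have hξu : u (1/2) ≤ u ξ :=
    hu ⟨by linarith [hξ.1], by linarith [hξ.2]⟩ (by norm_num) hξ.2.le
  have hhu : h (u (1/2)) ≤ h (u ξ) :=
    hmono.monotoneOn hhalf.le (hhalf.le.trans hξu) hξu
  have hpos : 0 < h (u (1/2)) :=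
    hh0.trans_le (hmono.monotoneOn self_mem_Ici hhalf.le hhalf.le)
  have key : lam * h (u (1/2)) * m ≤ lam * h (u ξ) * w ξ :=
    mul_le_mul (mul_le_mul_of_nonneg_left hhu hlam.le) (hmw ξ ⟨hξ.1.le, hξ.2.le⟩) hm.le
      (mul_nonneg hlam.le (hpos.le.trans hhu))
  have h4 := hG0 (1/4) (by norm_num)
  rw [eq_div_iff (by norm_num)] at hd
  linarith

/-- Since the flux increases and `u 1 = 0`, the descent of `u` on `[1/2, 1]` controls the flux at
`1/2`. -/
lemma flux_half_upper {w u : ℝ → ℝ} {p B : ℝ}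
    (hG : MonotoneOn (fun r => w r * (-deriv u r) ^ (p - 1)) (Ioo 0 1))
    (hu : ∀ r ∈ Ioo (0:ℝ) 1, deriv u r < 0) (huc : ContinuousOn u (Ioc 0 1)) (hu1 : u 1 = 0)
    (hwB : ∀ r ∈ Icc (0:ℝ) 1, w r ≤ B) :
    w (1/2) * (-deriv u (1/2)) ^ (p - 1) ≤ B * (2 * u (1/2)) ^ (p - 1) := by
  obtain ⟨ξ, hξ, hd⟩ := exists_deriv_eq_slope u (show (1/2:ℝ) < 1 by norm_num)
    (huc.mono fun r hr => ⟨by linarith [hr.1], hr.2⟩)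
    (fun r hr => (differentiableAt_of_deriv_ne_zero
      (hu r ⟨by linarith [hr.1], hr.2⟩).ne).differentiableWithinAt)
  have hξ' : ξ ∈ Ioo (0:ℝ) 1 := ⟨by linarith [hξ.1], hξ.2⟩
  have e : -deriv u ξ = 2 * u (1/2) := by
    rw [hd, hu1]
    ring
  have h1 := hG (show (1/2:ℝ) ∈ Ioo (0:ℝ) 1 by norm_num) hξ' hξ.1.le
  simp only at h1
  refine h1.trans ?_
  rw [← e]
  exact mul_le_mul_of_nonneg_right (hwB ξ ⟨hξ'.1.le, hξ'.2.le⟩)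
    (Real.rpow_nonneg (by linarith [hu ξ hξ']) _)

/-- Uniform (in λ ≥ λ₀) L¹ bounds for u^{p−1} and h(u) for radial
classical Dirichlet solutions of the Gelfand-type problem with nonlinearity λh,
where h is C¹, increasing, h(0) > 0 and superhomogeneous of order p−1. -/
theorem uniform_L1_bounds
    (N : ℕ) (hN : 2 ≤ N) (p : ℝ) (hp1 : 1 < p) (hpN : p ≤ N)
    (ψ : ℝ → ℝ) (hψ : ContDiffOn ℝ (⊤ : ℕ∞) ψ (Set.Icc 0 1))
    (hψ0 : ψ 0 = 0) (hψ'0 : deriv ψ 0 = 1) (hψ''0 : deriv (deriv ψ) 0 = 0)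
    (hψpos : ∀ r ∈ Set.Ioo (0:ℝ) 1, 0 < ψ r) (hψ1 : 0 < ψ 1)
    (h : ℝ → ℝ) (hh : ContDiffOn ℝ 1 h (Set.Ici 0))
    (hmono : StrictMonoOn h (Set.Ici 0)) (hh0 : 0 < h 0)
    (hsuper : Tendsto (fun t => h t / t ^ (p - 1)) atTop atTop)
    (lam₀ : ℝ) (hlam₀ : 0 < lam₀) :
    ∃ C : ℝ, 0 < C ∧ ∀ (lam : ℝ), lam₀ ≤ lam → ∀ u : ℝ → ℝ,
      ContDiffOn ℝ 2 u (Set.Ioo 0 1) →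
      (∀ r ∈ Set.Ioo (0:ℝ) 1, deriv u r < 0) →
      (∀ r ∈ Set.Ioo (0:ℝ) 1,
        -(p - 1) * |deriv u r| ^ (p - 2) * deriv (deriv u) r
          - ((N : ℝ) - 1) * (deriv ψ r / ψ r) * |deriv u r| ^ (p - 2) * deriv u r
          = lam * h (u r)) →
      (∀ r ∈ Set.Ioo (0:ℝ) 1, 0 < u r) →
      ContinuousOn u (Set.Ioc 0 1) →
      u 1 = 0 →
      (∫ r in (0:ℝ)..1, u r ^ (p - 1) * ψ r ^ ((N : ℝ) - 1))
        + (∫ r in (0:ℝ)..1, h (u r) * ψ r ^ ((N : ℝ) - 1)) ≤ C := by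
  have hN1 : (0:ℝ) ≤ (N:ℝ) - 1 := by
    have : (2:ℝ) ≤ N := by exact_mod_cast hN
    linarith
  have hp : 0 < p - 1 := by linarith
  set w : ℝ → ℝ := fun r => ψ r ^ ((N:ℝ) - 1) with hw
  have hwc : ContinuousOn w (Icc 0 1) := hψ.continuousOn.rpow_const fun _ _ => Or.inr hN1
  have hwpos : ∀ r ∈ Ioc (0:ℝ) 1, 0 < w r := by
    intro r hr
    rcases hr.2.lt_or_eq with h1 | h1
    · exact Real.rpow_pos_of_pos (hψpos r ⟨hr.1, h1⟩) _
    · exact h1 ▸ Real.rpow_pos_of_pos hψ1 _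
  obtain ⟨B, hB⟩ : ∃ B, ∀ r ∈ Icc (0:ℝ) 1, w r ≤ B := by
    obtain ⟨B, hB⟩ := isCompact_Icc.bddAbove_image hwc
    exact ⟨B, fun r hr => hB ⟨r, hr, rfl⟩⟩
  have hBpos : 0 < B := (hwpos 1 (by simp)).trans_le (hB 1 (by simp))
  obtain ⟨m, hm, hmw⟩ : ∃ m, 0 < m ∧ ∀ r ∈ Icc (1/4:ℝ) (1/2), m ≤ w r := by
    obtain ⟨x, hx, hmin⟩ := isCompact_Icc.exists_isMinOn
      (nonempty_Icc.2 (show (1/4:ℝ) ≤ 1/2 by norm_num))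
      (hwc.mono fun r hr => ⟨by linarith [hr.1], by linarith [hr.2]⟩)
    exact ⟨w x, hwpos x ⟨by linarith [hx.1], by linarith [hx.2]⟩, fun r hr => hmin hr⟩
  -- `A` is the bound that the two estimates of the flux at `1/2` give for `h t / t ^ (p - 1)`.
  set A : ℝ := B * 2 ^ (p - 1) * 4 / (lam₀ * m) with hA
  obtain ⟨T, hT1, hTA, hTle⟩ : ∃ T : ℝ, 1 ≤ T ∧ (∀ t, T ≤ t → A < h t / t ^ (p - 1)) ∧
      (∀ t, T ≤ t → t ^ (p - 1) ≤ h t) := by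
    obtain ⟨T, hT⟩ := eventually_atTop.1
      ((hsuper.eventually_gt_atTop A).and (hsuper.eventually_ge_atTop 1))
    refine ⟨max T 1, le_max_right _ _, fun t ht => (hT t ((le_max_left _ _).trans ht)).1,
      fun t ht => ?_⟩
    have h1 := (hT t ((le_max_left _ _).trans ht)).2
    have ht0 : 0 < t := by linarith [(le_max_right T 1).trans ht]
    rwa [le_div_iff₀ (Real.rpow_pos_of_pos ht0 _), one_mul] at h1
  have hT0 : (0:ℝ) ≤ T := by linarith
  have hhpos : ∀ t, 0 ≤ t → 0 < h t := fun t ht =>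
    hh0.trans_le (hmono.monotoneOn self_mem_Ici ht ht)
  set C₁ : ℝ := B * (2 * T) ^ (p - 1) / lam₀ + h T * B with hC₁
  have hC₁pos : 0 < C₁ := by
    have := hhpos T hT0
    positivity
  have hTp : (0:ℝ) ≤ T ^ (p - 1) := Real.rpow_nonneg hT0 _
  refine ⟨(T ^ (p - 1) * B + C₁) + C₁, by positivity, ?_⟩
  intro lam hlam u hu hu' heq hupos huc hu1
  have hlam0 : 0 < lam := hlam₀.trans_le hlam
  have hanti : AntitoneOn u (Ioc 0 1) := by
    refine antitoneOn_of_deriv_nonpos (convex_Ioc 0 1) huc ?_ ?_ <;> rw [interior_Ioc]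
    · exact hu.differentiableOn (by norm_num)
    · exact fun r hr => (hu' r hr).le
  have hunn : ∀ r ∈ Ioc (0:ℝ) 1, 0 ≤ u r := fun r hr => by
    rcases hr.2.lt_or_eq with h1 | h1
    · exact (hupos r ⟨hr.1, h1⟩).le
    · rw [h1, hu1]
  set G : ℝ → ℝ := fun r => w r * (-deriv u r) ^ (p - 1) with hGdef
  have hG : ∀ r ∈ Ioo (0:ℝ) 1, HasDerivAt G (lam * h (u r) * w r) r := by
    intro r hr
    have h1 : HasDerivAt ψ (deriv ψ r) r :=
      ((hψ.contDiffAt (Icc_mem_nhds hr.1 hr.2)).differentiableAt (by simp)).hasDerivAt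
    have h2 : HasDerivAt (deriv u) (deriv (deriv u) r) r :=
      (((hu.deriv_of_isOpen (m := 1) isOpen_Ioo (by norm_num)).contDiffAt
        (isOpen_Ioo.mem_nhds hr)).differentiableAt (by norm_num)).hasDerivAt
    exact hasDerivAt_flux_s12 h1 h2 (hψpos r hr) (hu' r hr) (heq r hr)
  have hG0 : ∀ r ∈ Ioo (0:ℝ) 1, 0 ≤ G r := fun r hr =>
    mul_nonneg (hwpos r ⟨hr.1, hr.2.le⟩).le (Real.rpow_nonneg (by linarith [hu' r hr]) _)
  have hGmono : MonotoneOn G (Ioo 0 1) := by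
    refine monotoneOn_of_deriv_nonneg (convex_Ioo 0 1)
      (fun r hr => (hG r hr).continuousAt.continuousWithinAt) ?_ ?_ <;> rw [interior_Ioo]
    · exact fun r hr => (hG r hr).differentiableAt.differentiableWithinAt
    · intro r hr
      rw [(hG r hr).deriv]
      exact mul_nonneg (mul_nonneg hlam0.le (hhpos _ (hupos r hr).le).le)
        (hwpos r ⟨hr.1, hr.2.le⟩).le
  have hlow := flux_half_lower hlam0 hG hG0 hanti hupos hmono hh0 hm hmw
  have hup : G (1/2) ≤ B * (2 * u (1/2)) ^ (p - 1) := flux_half_upper hGmono hu' huc hu1 hB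
  have hhalf : 0 < u (1/2) := hupos _ (by norm_num)
  have huT : u (1/2) < T := by
    by_contra! hcon
    have h1 := hTA _ hcon
    rw [lt_div_iff₀ (Real.rpow_pos_of_pos hhalf _), hA, div_mul_eq_mul_div,
      div_lt_iff₀ (by positivity)] at h1
    rw [Real.mul_rpow (by norm_num) hhalf.le] at hup
    have h2 : lam₀ * (h (u (1/2)) * m) ≤ lam * (h (u (1/2)) * m) :=
      mul_le_mul_of_nonneg_right hlam (mul_pos (hhpos _ hhalf.le) hm).le
    linarith
  have hGlam : G (1/2) / lam ≤ B * (2 * T) ^ (p - 1) / lam₀ := by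
    have h1 : (2 * u (1/2)) ^ (p - 1) ≤ (2 * T) ^ (p - 1) :=
      Real.rpow_le_rpow (by positivity) (by linarith) hp.le
    have h2 : G (1/2) ≤ B * (2 * T) ^ (p - 1) :=
      hup.trans (mul_le_mul_of_nonneg_left h1 hBpos.le)
    exact div_le_div₀ (by positivity) h2 hlam₀ hlam
  have hsub : ∀ {s : ℝ}, 0 < s → Icc s 1 ⊆ Ioc (0:ℝ) 1 := fun hs r hr =>
    ⟨hs.trans_le hr.1, hr.2⟩
  have hhuw : ContinuousOn (fun r => h (u r) * w r) (Ioc 0 1) :=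
    (hh.continuousOn.comp huc hunn).mul (hwc.mono Ioc_subset_Icc_self)
  have hint : ∀ {a b : ℝ}, 0 < a → a ≤ b → b ≤ 1 → ∀ {f : ℝ → ℝ}, ContinuousOn f (Ioc 0 1) →
      IntervalIntegrable f volume a b := fun ha hab hb f hf =>
    (hf.mono fun r hr => ⟨ha.trans_le hr.1, hr.2.trans hb⟩).intervalIntegrable_of_Icc hab
  have hbound : ∀ s ∈ Ioo (0:ℝ) (1/2), ∫ r in s..1, h (u r) * w r ≤ C₁ := by
    intro s hs
    have hi1 := hint hs.1 hs.2.le (by norm_num) hhuw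
    have hi2 := hint (a := 1/2) (b := 1) (by norm_num) (by norm_num) le_rfl hhuw
    rw [← intervalIntegral.integral_add_adjacent_intervals hi1 hi2]
    refine add_le_add ?_ ?_
    · have hFTC : ∫ r in s..(1/2), lam * (h (u r) * w r) = G (1/2) - G s := by
        refine intervalIntegral.integral_eq_sub_of_hasDerivAt (fun r hr => ?_) (hi1.const_mul _)
        rw [uIcc_of_le hs.2.le] at hr
        rw [← mul_assoc]
        exact hG r ⟨hs.1.trans_le hr.1, by linarith [hr.2]⟩
      rw [intervalIntegral.integral_const_mul] at hFTC
      refine le_trans ?_ hGlam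
      rw [le_div_iff₀ hlam0, mul_comm, hFTC]
      linarith [hG0 s ⟨hs.1, by linarith [hs.2]⟩]
    · have hc : ∫ r in (1/2:ℝ)..1, h (u r) * w r ≤ ∫ r in (1/2:ℝ)..1, h T * B := by
        refine intervalIntegral.integral_mono_on (by norm_num) hi2 (by simp) fun r hr => ?_
        have hr' : r ∈ Ioc (0:ℝ) 1 := hsub (by norm_num) hr
        have hurT : u r ≤ T := (hanti (by norm_num) hr' hr.1).trans huT.le
        exact mul_le_mul (hmono.monotoneOn (hunn r hr') hT0 hurT)
          (hB r (Ioc_subset_Icc_self hr')) (hwpos r hr').le (hhpos T hT0).le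
      rw [intervalIntegral.integral_const, smul_eq_mul] at hc
      have := mul_pos (hhpos T hT0) hBpos
      linarith
  refine add_le_add (integral_le_of_forall_truncated (by positivity) fun s hs => ?_)
    (integral_le_of_forall_truncated hC₁pos.le hbound)
  have hs1 : s ≤ 1 := by linarith [hs.2]
  have hcw : ContinuousOn (fun r => u r ^ (p - 1) * w r) (Ioc 0 1) :=
    (huc.rpow_const fun _ _ => Or.inr hp.le).mul (hwc.mono Ioc_subset_Icc_self)
  have hih := hint hs.1 hs1 le_rfl hhuw
  have hc : ∫ r in s..1, u r ^ (p - 1) * w r ≤ ∫ r in s..1, (T ^ (p - 1) * B + h (u r) * w r) := by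
    refine intervalIntegral.integral_mono_on hs1 (hint hs.1 hs1 le_rfl hcw)
      (intervalIntegrable_const.add hih) fun r hr => ?_
    have hr' := hsub hs.1 hr
    have hwr := (hwpos r hr').le
    rcases le_total T (u r) with h1 | h1
    · have := mul_le_mul_of_nonneg_right (hTle _ h1) hwr
      have := mul_nonneg hTp hBpos.le
      linarith
    · have := mul_le_mul (Real.rpow_le_rpow (hunn r hr') h1 hp.le)
        (hB r (Ioc_subset_Icc_self hr')) hwr hTp
      have := mul_nonneg (hhpos _ (hunn r hr')).le hwr
      linarith
  refine hc.trans ?_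
  rw [intervalIntegral.integral_add intervalIntegrable_const hih, intervalIntegral.integral_const,
    smul_eq_mul]
  refine add_le_add ?_ (hbound s hs)
  exact mul_le_of_le_one_left (mul_nonneg hTp hBpos.le) (by linarith [hs.1])
end

section
/- Let u be a semi-stable radial classical solution with u(r) > 0 and f(u(r)) ≥ 0 for all r ∈ (0,1), extending continuously to (0,1] with u(1) = 0. Then there exists a constant C, depending only on N, p and ψ, such that ∫₀¹ |u'(r)|^p ψ(r)^{N−1} dr ≤ C ( ∫₀¹ f(u(r)) ψ(r)^{N−1} dr ) ( ∫₀¹ u(r)^{p−1} ψ(r)^{N−1} dr )^{1/(p−1)}. -/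
open MeasureTheory Set Filter

/-!
Write `v = -u' > 0`, `n = N - 1`, `w = ψ ^ n`, `κ = (ψ'² - ψ ψ'') / ψ² = -(ψ'/ψ)'`. The equation
says that the flux `Φ = v ^ (p - 1) * w` satisfies `Φ' = f(u) w`, so `Φ` is nondecreasing and the
energy density is `v ^ p * w = v * Φ`.

*Reduction to an outer region.* Testing semi-stability with `ξ = v η` and integrating by parts
(`stability_form`) gives `0 ≤ ∫ v ^ p w ((p - 1) η'² - n κ η²)`. Near the origin `κ ≥ 1/r² - L/r`
(`warping_bounds`), and `p - 1 ≤ n`, so the profile `η = r / (r + δ)` makes the bracket at most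
`-1/16` on `(δ, r₀)` and nonpositive on `(0, δ]`. After cutting it off near `0` and beyond `2 r₀`
and letting the inner cutoff and then `δ` tend to `0`, the energy on `(0, r₀)` is bounded by a
constant times the energy on `(r₀, 1)` (`hardy_core`). The bounded slope of `η` for fixed `δ` is
what lets the inner cutoff be removed when only `∫ v ^ p w < ∞` is known.

*The outer region.* If the energy is finite then `Φ` tends to `0` at the origin, for otherwise
`v ^ p w` would dominate a multiple of `1/r`; this is where `p ≤ N` enters a second time. Hence
`Φ ≤ ∫ f(u) w` (`flux_le_source`), and integrating `v Φ` over `(r₀, 1)` gives at most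
`u(r₀) ∫ f(u) w` (`tail_energy_le`). Since `u` is decreasing,
`u(r₀) ^ (p - 1) * ∫₀^{r₀} w ≤ ∫ u ^ (p - 1) w`.

Integrals of non-integrable functions are `0` in Mathlib. For the left-hand side this makes the
inequality trivial; for the right-hand side it has to be excluded, which is the content of
`source_intervalIntegrable` and `mass_intervalIntegrable`.
-/

/-! ### Functions supported in a compact subinterval of `(0, 1)` -/

lemma contDiff_of_zero_off {k : WithTop ℕ∞} {h : ℝ → ℝ} {a b : ℝ} (ha : 0 < a) (hb : b < 1)
    (hh : ContDiffOn ℝ k h (Ioo 0 1)) (h0 : ∀ x, x ∉ Icc a b → h x = 0) : ContDiff ℝ k h := by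
  rw [contDiff_iff_contDiffAt]
  intro x
  by_cases hx : x ∈ Icc a b
  · exact hh.contDiffAt (Ioo_mem_nhds (ha.trans_le hx.1) (hx.2.trans_lt hb))
  · have : h =ᶠ[nhds x] fun _ => 0 := by
      filter_upwards [isClosed_Icc.isOpen_compl.mem_nhds hx] with y hy using h0 y hy
    exact contDiffAt_const.congr_of_eventuallyEq this

lemma deriv_zero_off {h : ℝ → ℝ} {a b : ℝ} (h0 : ∀ x, x ∉ Icc a b → h x = 0) :
    ∀ x, x ∉ Icc a b → deriv h x = 0 := by
  intro x hx
  have : h =ᶠ[nhds x] fun _ => 0 := by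
    filter_upwards [isClosed_Icc.isOpen_compl.mem_nhds hx] with y hy using h0 y hy
  rw [this.deriv_eq]; simp

/-! ### The warping function near the origin -/

/-- Two-sided linear bounds for the warping function on `(0, 1)`, and a lower bound for
`-(ψ'/ψ)'` near the origin with the sharp leading term `1 / r²`. The radius `r₀` is small enough
that `L / r` is at most half of `1 / r²` on `(0, 2 r₀]`. -/
lemma warping_bounds_s13 (ψ : ℝ → ℝ) (hψ : ContDiffOn ℝ (⊤ : ℕ∞) ψ (Set.Icc 0 1))
    (hψ0 : ψ 0 = 0) (hψ'0 : deriv ψ 0 = 1)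
    (hψpos : ∀ r ∈ Set.Ioo (0:ℝ) 1, 0 < ψ r) (hψ1 : 0 < ψ 1) :
    ∃ r₀ L m M : ℝ, 0 < r₀ ∧ 2 * r₀ < 1 ∧ 0 < L ∧ L * (2 * r₀) ≤ 1 / 2 ∧ 0 < m ∧ 0 < M ∧
      (∀ r ∈ Ioo (0:ℝ) 1, m * r ≤ ψ r ∧ ψ r ≤ M * r) ∧
      ∀ r ∈ Ioc (0:ℝ) (2 * r₀), 1 / r ^ 2 - L / r ≤
        ((deriv ψ r) ^ 2 - ψ r * deriv (deriv ψ) r) / ψ r ^ 2 := by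
  have hU : UniqueDiffOn ℝ (Icc (0:ℝ) 1) := uniqueDiffOn_Icc one_pos
  have hC1 : ContDiffOn ℝ 1 (derivWithin ψ (Icc 0 1)) (Icc 0 1) :=
    hψ.derivWithin hU (by norm_cast)
  have hC2 : ContinuousOn (derivWithin (derivWithin ψ (Icc 0 1)) (Icc 0 1)) (Icc 0 1) :=
    hC1.continuousOn_derivWithin hU le_rfl
  have hd : DifferentiableOn ℝ ψ (Icc 0 1) := hψ.differentiableOn (by simp)
  have hd1 : DifferentiableOn ℝ (derivWithin ψ (Icc 0 1)) (Icc 0 1) :=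
    hC1.differentiableOn (by simp)
  have e0 : derivWithin ψ (Icc 0 1) 0 = 1 := by
    rw [DifferentiableAt.derivWithin _ (hU 0 (by simp)), hψ'0]
    exact differentiableAt_of_deriv_ne_zero (by rw [hψ'0]; norm_num)
  have e1 : ∀ r ∈ Ioo (0:ℝ) 1, deriv ψ r = derivWithin ψ (Icc 0 1) r := fun r hr =>
    (derivWithin_of_mem_nhds (Icc_mem_nhds hr.1 hr.2)).symm
  have e2 : ∀ r ∈ Ioo (0:ℝ) 1,
      deriv (deriv ψ) r = derivWithin (derivWithin ψ (Icc 0 1)) (Icc 0 1) r := by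
    intro r hr
    rw [derivWithin_of_mem_nhds (Icc_mem_nhds hr.1 hr.2)]
    apply Filter.EventuallyEq.deriv_eq
    filter_upwards [Ioo_mem_nhds hr.1 hr.2] with y hy using e1 y hy
  obtain ⟨B₀, hB₀⟩ := isCompact_Icc.exists_bound_of_continuousOn hC2
  obtain ⟨B, hB1, hB⟩ : ∃ B : ℝ, 1 ≤ B ∧
      ∀ r ∈ Icc (0:ℝ) 1, ‖derivWithin (derivWithin ψ (Icc 0 1)) (Icc 0 1) r‖ ≤ B :=
    ⟨max 1 B₀, le_max_left _ _, fun r hr => (hB₀ r hr).trans (le_max_right _ _)⟩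
  have b1 : ∀ r ∈ Icc (0:ℝ) 1, |derivWithin ψ (Icc 0 1) r - 1| ≤ B * r := by
    intro r hr
    have := (convex_Icc (0:ℝ) 1).norm_image_sub_le_of_norm_derivWithin_le hd1 hB
      (left_mem_Icc.2 zero_le_one) hr
    rwa [e0, sub_zero, Real.norm_eq_abs, Real.norm_eq_abs, abs_of_nonneg hr.1] at this
  have b0 : ∀ r ∈ Icc (0:ℝ) 1, |ψ r - r| ≤ B * r * r := by
    intro r hr
    have hsub : Icc 0 r ⊆ Icc (0:ℝ) 1 := Icc_subset_Icc_right hr.2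
    have := (convex_Icc (0:ℝ) r).norm_image_sub_le_of_norm_hasDerivWithin_le
      (f := fun s => ψ s - s) (f' := fun s => derivWithin ψ (Icc 0 1) s - 1) (C := B * r)
      (fun s hs => ((hd s (hsub hs)).hasDerivWithinAt.mono hsub).sub
        (hasDerivWithinAt_id _ _))
      (fun s hs => (b1 s (hsub hs)).trans (mul_le_mul_of_nonneg_left hs.2 (by linarith)))
      (left_mem_Icc.2 hr.1) (right_mem_Icc.2 hr.1)
    simpa [hψ0, abs_of_nonneg hr.1] using this
  have hBp : 0 < B := by linarith
  have hr0 : 2 * (1 / (96 * B)) ≤ 1 / 48 := by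
    rw [mul_one_div, div_le_div_iff₀ (by positivity) (by norm_num)]; linarith
  have hBr : B * (2 * (1 / (96 * B))) = 1 / 48 := by field_simp; norm_num
  have key : ∀ r ∈ Ioc (0:ℝ) (2 * (1 / (96 * B))), 0 < r ∧ r < 1 ∧ B * r ≤ 1 / 48 := by
    intro r hr
    refine ⟨hr.1, by linarith [hr.2], ?_⟩
    rw [← hBr]; exact mul_le_mul_of_nonneg_left hr.2 hBp.le
  have hlow : ∀ r ∈ Ioc (0:ℝ) (2 * (1 / (96 * B))), r / 2 ≤ ψ r := by
    intro r hr
    obtain ⟨h1, h2, h3⟩ := key r hr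
    have := (abs_le.1 (b0 r ⟨h1.le, h2.le⟩)).1
    nlinarith
  obtain ⟨x₀, hx₀, hmin⟩ := (isCompact_Icc (a := 2 * (1 / (96 * B))) (b := (1:ℝ))).exists_isMinOn
    ⟨1, by constructor <;> linarith⟩
    (hψ.continuousOn.mono (Icc_subset_Icc_left (by positivity)))
  have hx₀pos : 0 < ψ x₀ := by
    have : 0 < 2 * (1 / (96 * B)) := by positivity
    rcases eq_or_lt_of_le hx₀.2 with h | h
    · rwa [h]
    · exact hψpos x₀ ⟨this.trans_le hx₀.1, h⟩
  refine ⟨1 / (96 * B), 24 * B, min (1 / 2) (ψ x₀), 1 + B, by positivity, by linarith,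
    by positivity, ?_, lt_min (by norm_num) hx₀pos, by positivity, ?_, ?_⟩
  · nlinarith
  · intro r hr
    constructor
    · rcases le_or_gt r (2 * (1 / (96 * B))) with h | h
      · have := hlow r ⟨hr.1, h⟩
        have := mul_le_mul_of_nonneg_right (min_le_left (1 / 2) (ψ x₀)) hr.1.le
        linarith
      · have h1 : ψ x₀ ≤ ψ r := hmin ⟨h.le, hr.2.le⟩
        have h2 := mul_le_mul_of_nonneg_right (min_le_right (1 / 2) (ψ x₀)) hr.1.le
        nlinarith [hr.1, hr.2]
    · have := (abs_le.1 (b0 r ⟨hr.1.le, hr.2.le⟩)).2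
      have := mul_le_mul_of_nonneg_left hr.2.le (mul_nonneg hBp.le hr.1.le)
      linarith
  · intro r hr
    obtain ⟨h1, h2, h3⟩ := key r hr
    have hI : r ∈ Ioo (0:ℝ) 1 := ⟨h1, h2⟩
    rw [e1 r hI, e2 r hI]
    have c0 := b0 r ⟨h1.le, h2.le⟩
    have c1 := b1 r ⟨h1.le, h2.le⟩
    have c2 := hB r ⟨h1.le, h2.le⟩
    have c3 := hlow r hr
    rw [Real.norm_eq_abs] at c2
    rw [abs_le] at c0 c1 c2
    have hψp := hψpos r hI
    generalize derivWithin (derivWithin ψ (Icc 0 1)) (Icc 0 1) r = ψ2 at *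
    generalize derivWithin ψ (Icc 0 1) r = ψ1 at *
    generalize ψ r = ψ0 at *
    set t := B * r with ht
    have ht0 : 0 ≤ t := by positivity
    have d1 : ψ0 ≤ r * (1 + t) := by linarith [c0.2]
    have d2 : (1 - t) ^ 2 ≤ ψ1 ^ 2 := by
      apply pow_le_pow_left₀ <;> linarith [c1.1]
    have d3 : ψ0 * ψ2 ≤ 2 * t := by
      have : ψ0 * ψ2 ≤ ψ0 * B := mul_le_mul_of_nonneg_left c2.2 hψp.le
      have : ψ0 * B ≤ (2 * r) * B := mul_le_mul_of_nonneg_right (by nlinarith) hBp.le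
      linarith
    have d4 : ψ0 ^ 2 ≤ r ^ 2 * (1 + t) ^ 2 := by
      rw [← mul_pow]; exact pow_le_pow_left₀ hψp.le d1 2
    have d5 : r ^ 2 / 4 ≤ ψ0 ^ 2 := by
      have := pow_le_pow_left₀ (by positivity) c3 2
      linarith [this, (by ring : (r / 2) ^ 2 = r ^ 2 / 4)]
    rw [le_div_iff₀ (by positivity)]
    have e : (1 / r ^ 2 - 24 * B / r) * ψ0 ^ 2 = ψ0 ^ 2 / r ^ 2 - 24 * t * (ψ0 ^ 2 / r ^ 2) := by
      rw [ht]; field_simp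
    rw [e]
    have f1 : ψ0 ^ 2 / r ^ 2 ≤ (1 + t) ^ 2 := by
      rw [div_le_iff₀ (by positivity)]; linarith
    have f2 : 1 / 4 ≤ ψ0 ^ 2 / r ^ 2 := by
      rw [le_div_iff₀ (by positivity)]; linarith
    nlinarith

/-! ### The stability inequality for radial derivatives -/

/-- Semi-stability tested with `ξ = -u' η`. The equation turns the quadratic form into
`∫ |u'| ^ p ψ ^ n ((p - 1) η'² - n κ η²)`, the difference of the two integrands being the derivative
of the compactly supported function `(p - 1) (-u') ^ (p - 2) (-u'') ψ ^ n (-u') η²`. -/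
lemma stability_form {n p : ℝ} {ψ f u : ℝ → ℝ}
    (hψ : ContDiffOn ℝ (⊤ : ℕ∞) ψ (Ioo 0 1)) (hψpos : ∀ r ∈ Ioo (0:ℝ) 1, 0 < ψ r)
    (hf : ContDiff ℝ 1 f) (hu : ContDiffOn ℝ 2 u (Ioo 0 1))
    (hu' : ∀ r ∈ Ioo (0:ℝ) 1, deriv u r < 0)
    (heq : ∀ r ∈ Ioo (0:ℝ) 1,
        -(p - 1) * |deriv u r| ^ (p - 2) * deriv (deriv u) r
          - n * (deriv ψ r / ψ r) * |deriv u r| ^ (p - 2) * deriv u r = f (u r))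
    (hst : ∀ ξ : ℝ → ℝ, ContDiff ℝ 1 ξ → tsupport ξ ⊆ Ioo (0:ℝ) 1 →
        0 ≤ ∫ r in (0:ℝ)..1,
          ((p - 1) * |deriv u r| ^ (p - 2) * (deriv ξ r) ^ 2
            - deriv f (u r) * ξ r ^ 2) * ψ r ^ n)
    {η : ℝ → ℝ} {a b : ℝ} (ha : 0 < a) (hb : b < 1) (hη : ContDiffOn ℝ 1 η (Ioo 0 1))
    (hη0 : ∀ x, x ∉ Icc a b → η x = 0) :
    Continuous (fun r => |deriv u r| ^ p * ψ r ^ n * ((p - 1) * (deriv η r) ^ 2 -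
        n * (((deriv ψ r) ^ 2 - ψ r * deriv (deriv ψ) r) / ψ r ^ 2) * η r ^ 2)) ∧
    0 ≤ ∫ r in (0:ℝ)..1, |deriv u r| ^ p * ψ r ^ n * ((p - 1) * (deriv η r) ^ 2 -
        n * (((deriv ψ r) ^ 2 - ψ r * deriv (deriv ψ) r) / ψ r ^ 2) * η r ^ 2) := by
  have hO : IsOpen (Ioo (0:ℝ) 1) := isOpen_Ioo
  have cu' : ContDiffOn ℝ 1 (deriv u) (Ioo 0 1) := hu.deriv_of_isOpen hO (by norm_num)
  have cu'' : ContinuousOn (deriv (deriv u)) (Ioo 0 1) :=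
    cu'.continuousOn_deriv_of_isOpen hO le_rfl
  have cu : ContDiffOn ℝ 1 u (Ioo 0 1) := hu.of_le (by norm_num)
  have cψ : ContDiffOn ℝ 1 ψ (Ioo 0 1) := hψ.of_le (by norm_cast)
  have cψ' : ContDiffOn ℝ 1 (deriv ψ) (Ioo 0 1) := hψ.deriv_of_isOpen hO (by norm_cast)
  have cψ'' : ContinuousOn (deriv (deriv ψ)) (Ioo 0 1) :=
    cψ'.continuousOn_deriv_of_isOpen hO le_rfl
  have cη' : ContinuousOn (deriv η) (Ioo 0 1) := hη.continuousOn_deriv_of_isOpen hO le_rfl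
  have cf' : Continuous (deriv f) := hf.continuous_deriv le_rfl
  have hdη := deriv_zero_off hη0
  have cw : ContDiffOn ℝ 1 (fun r => ψ r ^ n) (Ioo 0 1) :=
    cψ.rpow_const_of_ne fun r hr => (hψpos r hr).ne'
  have hcont : ∀ {g : ℝ → ℝ}, ContinuousOn g (Ioo 0 1) → (∀ x, x ∉ Icc a b → g x = 0) →
      Continuous g := fun hg hg0 =>
    (contDiff_of_zero_off (k := 0) ha hb (contDiffOn_zero.2 hg) hg0).continuous
  have cabs : ContinuousOn (fun r => |deriv u r|) (Ioo 0 1) := cu'.continuousOn.abs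
  have cabsp : ∀ q : ℝ, ContinuousOn (fun r => |deriv u r| ^ q) (Ioo 0 1) := fun q =>
    cabs.rpow_const fun r hr => Or.inl (abs_pos.2 (hu' r hr).ne).ne'
  have cE : Continuous (fun r => |deriv u r| ^ p * ψ r ^ n * ((p - 1) * (deriv η r) ^ 2 -
        n * (((deriv ψ r) ^ 2 - ψ r * deriv (deriv ψ) r) / ψ r ^ 2) * η r ^ 2)) := by
    refine hcont ?_ fun x hx => by simp [hη0 x hx, hdη x hx]
    refine ((cabsp p).mul cw.continuousOn).mul (((cη'.pow 2).const_mul _).sub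
      ((ContinuousOn.const_mul ?_ _).mul (hη.continuousOn.pow 2)))
    exact ((cψ'.continuousOn.pow 2).sub (cψ.continuousOn.mul cψ'')).div
      (cψ.continuousOn.pow 2) fun r hr => pow_ne_zero 2 (hψpos r hr).ne'
  refine ⟨cE, ?_⟩
  have cξ : ContDiff ℝ 1 (fun r => -deriv u r * η r) :=
    contDiff_of_zero_off ha hb (cu'.neg.mul hη) fun x hx => by simp [hη0 x hx]
  have hsupp : tsupport (fun r => -deriv u r * η r) ⊆ Ioo (0:ℝ) 1 := by
    refine Subset.trans (closure_minimal (fun x hx => ?_) isClosed_Icc)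
      (Icc_subset_Ioo ha hb)
    by_contra h
    exact hx (by simp [hη0 x h])
  have hQ := hst _ cξ hsupp
  have cG : ContDiff ℝ 1 (fun r => ψ r ^ n * (f (u r) -
      n * ((-deriv u r) ^ (p - 1) * (deriv ψ r / ψ r))) * (-deriv u r) * η r ^ 2) := by
    refine contDiff_of_zero_off ha hb ?_ fun x hx => by simp [hη0 x hx]
    have c1 : ContDiffOn ℝ 1 (fun r => f (u r)) (Ioo 0 1) := hf.comp_contDiffOn cu
    have c2 : ContDiffOn ℝ 1 (fun r => (-deriv u r) ^ (p - 1)) (Ioo 0 1) :=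
      cu'.neg.rpow_const_of_ne fun r hr => (neg_pos.2 (hu' r hr)).ne'
    have c3 : ContDiffOn ℝ 1 (fun r => deriv ψ r / ψ r) (Ioo 0 1) :=
      cψ'.div cψ fun r hr => (hψpos r hr).ne'
    exact ((cw.mul (c1.sub (contDiffOn_const.mul (c2.mul c3)))).mul cu'.neg).mul (hη.pow 2)
  -- The factor multiplying `ψ ^ n` is `(p - 1) v ^ (p - 2) v'` by the equation; written without
  -- `v'`, it is visibly of class C¹ although `u` is only C².
  set G : ℝ → ℝ := fun r => ψ r ^ n * (f (u r) -
      n * ((-deriv u r) ^ (p - 1) * (deriv ψ r / ψ r))) * (-deriv u r) * η r ^ 2 with hG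
  have hGint : ∫ r in (0:ℝ)..1, deriv G r = 0 := by
    rw [intervalIntegral.integral_deriv_eq_sub (fun x _ => cG.differentiable (by simp) x)
      ((cG.continuous_deriv le_rfl).intervalIntegrable _ _)]
    have h1 : η 1 = 0 := hη0 1 fun h => absurd h.2 (by linarith)
    have h2 : η 0 = 0 := hη0 0 fun h => absurd h.1 (by linarith)
    simp [hG, h1, h2]
  have hpt : ∀ r ∈ Ioo (0:ℝ) 1,
      ((p - 1) * |deriv u r| ^ (p - 2) * (deriv (fun r => -deriv u r * η r) r) ^ 2
            - deriv f (u r) * (-deriv u r * η r) ^ 2) * ψ r ^ n =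
      |deriv u r| ^ p * ψ r ^ n * ((p - 1) * (deriv η r) ^ 2 -
        n * (((deriv ψ r) ^ 2 - ψ r * deriv (deriv ψ) r) / ψ r ^ 2) * η r ^ 2) + deriv G r := by
    intro r hr
    have hm : Ioo (0:ℝ) 1 ∈ nhds r := hO.mem_nhds hr
    have hv : 0 < -deriv u r := neg_pos.2 (hu' r hr)
    have hψr := hψpos r hr
    have d_u : HasDerivAt u (deriv u r) r :=
      ((cu.differentiableOn (by simp)).differentiableAt hm).hasDerivAt
    have d_v : HasDerivAt (fun r => -deriv u r) (-deriv (deriv u) r) r :=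
      ((cu'.differentiableOn (by simp)).differentiableAt hm).hasDerivAt.neg
    have d_η : HasDerivAt η (deriv η r) r :=
      ((hη.differentiableOn (by simp)).differentiableAt hm).hasDerivAt
    have d_ψ : HasDerivAt ψ (deriv ψ r) r :=
      ((cψ.differentiableOn (by simp)).differentiableAt hm).hasDerivAt
    have d_ψ' : HasDerivAt (deriv ψ) (deriv (deriv ψ) r) r :=
      ((cψ'.differentiableOn (by simp)).differentiableAt hm).hasDerivAt
    have d_f : HasDerivAt f (deriv f (u r)) (u r) :=
      ((hf.differentiable (by simp)) _).hasDerivAt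
    have d_fu := d_f.comp r d_u
    have d_w := d_ψ.rpow_const (p := n) (Or.inl hψr.ne')
    have d_vp := d_v.rpow_const (p := p - 1) (Or.inl hv.ne')
    have d_h := d_ψ'.div d_ψ hψr.ne'
    have d_G := ((d_w.mul (d_fu.sub ((d_vp.mul d_h).const_mul n))).mul d_v).mul (d_η.pow 2)
    have d_ξ := d_v.mul d_η
    have eξ : deriv (fun r => -deriv u r * η r) r = _ := d_ξ.deriv
    have eG : deriv G r = _ := d_G.deriv
    rw [eξ, eG]
    have hode := heq r hr
    have habs : |deriv u r| = -deriv u r := abs_of_neg (hu' r hr)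
    simp only [Pi.mul_apply, Pi.sub_apply, Pi.div_apply, Pi.pow_apply, Function.comp_apply]
    rw [habs] at hode ⊢
    rw [← hode]
    have q1 : (-deriv u r) ^ (p - 1) = (-deriv u r) ^ (p - 2) * (-deriv u r) := by
      rw [show p - 1 = (p - 2) + 1 by ring, Real.rpow_add_one hv.ne']
    have q2 : (-deriv u r) ^ p = (-deriv u r) ^ (p - 2) * (-deriv u r) ^ 2 := by
      conv_lhs => rw [show p = (p - 2) + 2 by ring, Real.rpow_add hv]
      norm_num
    have q3 : ψ r ^ (n - 1) = ψ r ^ n / ψ r := Real.rpow_sub_one hψr.ne' n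
    have q4 : (p - 1 - 1) = p - 2 := by ring
    rw [q4, q1, q2, q3]
    generalize (-deriv u r) ^ (p - 2) = P
    generalize ψ r ^ n = W
    field_simp
    ring
  have hcong : ∫ r in (0:ℝ)..1,
      ((p - 1) * |deriv u r| ^ (p - 2) * (deriv (fun r => -deriv u r * η r) r) ^ 2
            - deriv f (u r) * (-deriv u r * η r) ^ 2) * ψ r ^ n =
      ∫ r in (0:ℝ)..1, (|deriv u r| ^ p * ψ r ^ n * ((p - 1) * (deriv η r) ^ 2 -
        n * (((deriv ψ r) ^ 2 - ψ r * deriv (deriv ψ) r) / ψ r ^ 2) * η r ^ 2) + deriv G r) := by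
    rw [intervalIntegral.integral_of_le zero_le_one, intervalIntegral.integral_of_le zero_le_one,
      integral_Ioc_eq_integral_Ioo, integral_Ioc_eq_integral_Ioo]
    exact setIntegral_congr_fun measurableSet_Ioo hpt
  rw [hcong, intervalIntegral.integral_add (cE.intervalIntegrable _ _)
    ((cG.continuous_deriv le_rfl).intervalIntegrable _ _), hGint, add_zero] at hQ
  exact hQ

/-! ### The Hardy-type estimate near the origin -/

lemma smoothTransition_deriv_zero {x : ℝ} (hx : x ≤ 0 ∨ 1 ≤ x) :
    deriv Real.smoothTransition x = 0 := by
  rcases hx with hx | hx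
  · apply IsLocalMin.deriv_eq_zero
    refine Eventually.of_forall fun y => ?_
    rw [Real.smoothTransition.zero_of_nonpos hx]; exact Real.smoothTransition.nonneg y
  · apply IsLocalMax.deriv_eq_zero
    refine Eventually.of_forall fun y => ?_
    rw [Real.smoothTransition.one_of_one_le hx]; exact Real.smoothTransition.le_one y

lemma smoothTransition_deriv_bound : ∃ D : ℝ, 0 < D ∧ ∀ x, |deriv Real.smoothTransition x| ≤ D := by
  have hc : Continuous (deriv Real.smoothTransition) :=
    (Real.smoothTransition.contDiff (n := 1)).continuous_deriv le_rfl
  obtain ⟨D, hD⟩ := (isCompact_Icc (a := (0:ℝ)) (b := 1)).exists_bound_of_continuousOn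
    hc.continuousOn
  refine ⟨max D 1, by positivity, fun x => ?_⟩
  by_cases hx : x ∈ Icc (0:ℝ) 1
  · exact (hD x hx).trans (le_max_left _ _)
  · rw [smoothTransition_deriv_zero, abs_zero]
    · positivity
    · by_contra! h
      exact hx ⟨h.1.le, h.2.le⟩

/-- The test profile `r / (r + δ)`, cut off smoothly so as to vanish for `r ≤ ε` and for `r ≥ 2 r₀`
and to be unchanged for `2 ε ≤ r ≤ r₀`. -/
noncomputable def cutProfile (r₀ δ ε : ℝ) (r : ℝ) : ℝ :=
  r / (r + δ) * (Real.smoothTransition (2 - r / r₀) * Real.smoothTransition (r / ε - 1))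

lemma cutProfile_hasDerivAt (r₀ ε : ℝ) {δ r : ℝ} (hδ : 0 < δ) (hr : 0 < r) :
    HasDerivAt (cutProfile r₀ δ ε)
      (δ / (r + δ) ^ 2 * (Real.smoothTransition (2 - r / r₀) * Real.smoothTransition (r / ε - 1)) +
        r / (r + δ) * (deriv Real.smoothTransition (2 - r / r₀) * (-(1 / r₀)) *
          Real.smoothTransition (r / ε - 1) + Real.smoothTransition (2 - r / r₀) *
          (deriv Real.smoothTransition (r / ε - 1) * (1 / ε)))) r := by
  have hS : ∀ x, HasDerivAt Real.smoothTransition (deriv Real.smoothTransition x) x := fun x =>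
    ((Real.smoothTransition.contDiff (n := 1)).differentiable (by simp) x).hasDerivAt
  have h1 : HasDerivAt (fun r => r / (r + δ)) (δ / (r + δ) ^ 2) r := by
    have h := (hasDerivAt_id r).div ((hasDerivAt_id r).add_const δ)
      (by simp only [id]; positivity)
    rw [show (1 * (id r + δ) - id r * 1) / (id r + δ) ^ 2 = δ / (r + δ) ^ 2 by simp] at h
    exact h
  have h2 : HasDerivAt (fun r => Real.smoothTransition (2 - r / r₀)) _ r :=
    (hS _).comp r (((hasDerivAt_id r).div_const r₀).const_sub 2)
  have h3 : HasDerivAt (fun r => Real.smoothTransition (r / ε - 1)) _ r :=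
    (hS _).comp r (((hasDerivAt_id r).div_const ε).sub_const 1)
  exact h1.mul (h2.mul h3)

lemma cutProfile_contDiffOn (r₀ ε : ℝ) {δ : ℝ} (hδ : 0 < δ) :
    ContDiffOn ℝ 1 (cutProfile r₀ δ ε) (Ioo 0 1) := by
  have hS : ContDiff ℝ 1 Real.smoothTransition := Real.smoothTransition.contDiff
  refine (contDiffOn_id.div (contDiffOn_id.add contDiffOn_const) fun r hr => ?_).mul
    (ContDiff.contDiffOn ?_)
  · have := hr.1
    simp only [id]; positivity
  · exact (hS.comp (contDiff_const.sub (contDiff_id.div_const r₀))).mul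
      (hS.comp ((contDiff_id.div_const ε).sub contDiff_const))

lemma cutProfile_zero_off {r₀ δ ε : ℝ} (hr₀ : 0 < r₀) (hε : 0 < ε) :
    ∀ x, x ∉ Icc ε (2 * r₀) → cutProfile r₀ δ ε x = 0 := by
  intro x hx
  unfold cutProfile
  rcases lt_or_ge x ε with h | h
  · rw [Real.smoothTransition.zero_of_nonpos (x := x / ε - 1)]
    · simp
    · rw [sub_nonpos, div_le_one hε]; exact h.le
  · have : 2 * r₀ < x := by by_contra! h'; exact hx ⟨h, h'⟩
    rw [Real.smoothTransition.zero_of_nonpos (x := 2 - x / r₀)]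
    · simp
    · rw [sub_nonpos, le_div_iff₀ hr₀]; exact this.le

/-- A weight `V` for which the quadratic form `∫ V ((p - 1) η'² - n κ η²)` is nonnegative carries on
`(0, r₀)` at most a constant times its mass on `(r₀, 1)`; the constant does not depend on `V`. -/
lemma hardy_core {n p r₀ L : ℝ} {κ : ℝ → ℝ} (hn : 1 ≤ n) (hp : 1 < p) (hpn : p - 1 ≤ n)
    (hr₀ : 0 < r₀) (hr₀' : 2 * r₀ < 1) (hL : 0 < L) (hLr : L * (2 * r₀) ≤ 1 / 2)
    (hκ : ∀ r ∈ Ioc (0:ℝ) (2 * r₀), 1 / r ^ 2 - L / r ≤ κ r) :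
    ∃ K : ℝ, 0 < K ∧ ∀ V : ℝ → ℝ, (∀ r ∈ Ioo (0:ℝ) 1, 0 ≤ V r) →
      IntervalIntegrable V volume 0 1 →
      (∀ (η : ℝ → ℝ) (a b : ℝ), 0 < a → b < 1 → ContDiffOn ℝ 1 η (Ioo 0 1) →
        (∀ x, x ∉ Icc a b → η x = 0) →
        Continuous (fun r => V r * ((p - 1) * (deriv η r) ^ 2 - n * κ r * η r ^ 2)) ∧
        0 ≤ ∫ r in (0:ℝ)..1, V r * ((p - 1) * (deriv η r) ^ 2 - n * κ r * η r ^ 2)) →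
      ∫ r in (0:ℝ)..r₀, V r ≤ K * ∫ r in r₀..1, V r := by
  obtain ⟨D, hD, hDb⟩ := smoothTransition_deriv_bound
  set K' := (p - 1) * ((1 + D) / r₀) ^ 2 with hK'
  have hp' : 0 < p - 1 := by linarith
  have hK'0 : 0 < K' := by positivity
  refine ⟨16 * K', by positivity, fun V hV hVi hst => ?_⟩
  have hκ0 : ∀ r ∈ Ioc (0:ℝ) (2 * r₀), 0 ≤ κ r := by
    intro r hr
    refine le_trans ?_ (hκ r hr)
    have h0 := hr.1
    have : 1 / r ^ 2 - L / r = (1 - L * r) / r ^ 2 := by field_simp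
    rw [this]
    apply div_nonneg _ (by positivity)
    nlinarith [hr.2]
  have hsub : ∀ {a b : ℝ}, 0 ≤ a → a ≤ b → b ≤ 1 → IntervalIntegrable V volume a b := by
    intro a b h1 h2 h3
    apply hVi.mono_set
    rw [uIcc_of_le h2, uIcc_of_le zero_le_one]; exact Icc_subset_Icc h1 h3
  -- The inequality obtained by testing with the profile of parameters `δ`, `ε`
  have main : ∀ δ ε : ℝ, 0 < ε → 2 * ε < δ → δ < r₀ →
      (1 / 16) * ∫ r in δ..r₀, V r ≤ K' * (∫ r in r₀..(2 * r₀), V r) +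
        (p - 1) * ((1 + 2 * D) / δ) ^ 2 * ∫ r in (0:ℝ)..(2 * ε), V r := by
    intro δ ε hε hεδ hδr
    have hδ : 0 < δ := by linarith
    obtain ⟨hEc, hE⟩ := hst (cutProfile r₀ δ ε) ε (2 * r₀) hε hr₀'
      (cutProfile_contDiffOn r₀ ε hδ) (cutProfile_zero_off hr₀ hε)
    set W : ℝ → ℝ := fun r => (p - 1) * (deriv (cutProfile r₀ δ ε) r) ^ 2 -
      n * κ r * cutProfile r₀ δ ε r ^ 2 with hW
    have s1 : ∀ r, r ≤ r₀ → 1 ≤ 2 - r / r₀ := fun r h => by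
      have := (div_le_one hr₀).2 h; linarith
    have s1' : ∀ r, r₀ * 2 ≤ r → 2 - r / r₀ ≤ 0 := fun r h => by
      have := (le_div_iff₀ hr₀).2 (by linarith : 2 * r₀ ≤ r); linarith
    have s2 : ∀ r, 2 * ε ≤ r → 1 ≤ r / ε - 1 := fun r h => by
      have := (le_div_iff₀ hε).2 h; linarith
    have S0 := Real.smoothTransition.nonneg
    have S1 := Real.smoothTransition.le_one
    have w1 : ∀ r ∈ Ioo 0 (2 * ε), W r ≤ (p - 1) * ((1 + 2 * D) / δ) ^ 2 := by
      intro r hr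
      have hr0 := hr.1
      have hκr := hκ0 r ⟨hr.1, by linarith [hr.2]⟩
      have : 0 ≤ n * κ r * cutProfile r₀ δ ε r ^ 2 := by positivity
      refine le_trans (sub_le_self _ this) (mul_le_mul_of_nonneg_left ?_ hp'.le)
      rw [(cutProfile_hasDerivAt r₀ ε hδ hr0).deriv]
      have hs := s1 r (by linarith [hr.2])
      rw [Real.smoothTransition.one_of_one_le hs, smoothTransition_deriv_zero (Or.inr hs)]
      simp only [one_mul, zero_mul, zero_add]
      apply sq_le_sq'
      · have := S0 (r / ε - 1)
        have h1 : r / (r + δ) * (deriv Real.smoothTransition (r / ε - 1) * (1 / ε)) ≥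
            - (2 * D / δ) := by
          have h2 := (abs_le.1 (hDb (r / ε - 1))).1
          have h3 : r / (r + δ) ≤ 2 * ε / δ :=
            div_le_div₀ (by positivity) hr.2.le hδ (by linarith)
          calc - (2 * D / δ) = - ((2 * ε / δ) * (D * (1 / ε))) := by field_simp
            _ ≤ - (r / (r + δ) * (D * (1 / ε))) := by
              apply neg_le_neg; exact mul_le_mul_of_nonneg_right h3 (by positivity)
            _ = r / (r + δ) * (-D * (1 / ε)) := by ring
            _ ≤ _ := by gcongr
        have h4 : 0 ≤ δ / (r + δ) ^ 2 * Real.smoothTransition (r / ε - 1) := by positivity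
        have h5 : (1 + 2 * D) / δ = 1 / δ + 2 * D / δ := by ring
        have h6 : 0 < 1 / δ := by positivity
        linarith
      · have h1 : r / (r + δ) * (deriv Real.smoothTransition (r / ε - 1) * (1 / ε)) ≤
            2 * D / δ := by
          have h2 := (abs_le.1 (hDb (r / ε - 1))).2
          have h3 : r / (r + δ) ≤ 2 * ε / δ :=
            div_le_div₀ (by positivity) hr.2.le hδ (by linarith)
          calc r / (r + δ) * (deriv Real.smoothTransition (r / ε - 1) * (1 / ε)) 
              ≤ r / (r + δ) * (D * (1 / ε)) := by gcongr
            _ ≤ (2 * ε / δ) * (D * (1 / ε)) := by gcongr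
            _ = _ := by field_simp
        have h4 : δ / (r + δ) ^ 2 * Real.smoothTransition (r / ε - 1) ≤ 1 / δ := by
          calc _ ≤ δ / (r + δ) ^ 2 * 1 := by gcongr; exact S1 _
            _ ≤ δ / δ ^ 2 * 1 := by gcongr; linarith
            _ = 1 / δ := by field_simp
        have h5 : (1 + 2 * D) / δ = 1 / δ + 2 * D / δ := by ring
        linarith
    have w2 : ∀ r, 2 * ε ≤ r → r ≤ r₀ → W r ≤ -(r * (1 / (2 * (r + δ) ^ 3))) := by
      intro r h1 h2
      have hr0 : 0 < r := by linarith
      have hWr : W r = (p - 1) * (δ / (r + δ) ^ 2) ^ 2 - n * κ r * (r / (r + δ)) ^ 2 := by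
        simp only [hW]
        rw [(cutProfile_hasDerivAt r₀ ε hδ hr0).deriv, cutProfile,
          Real.smoothTransition.one_of_one_le (s1 r h2),
          smoothTransition_deriv_zero (Or.inr (s1 r h2)),
          Real.smoothTransition.one_of_one_le (s2 r h1),
          smoothTransition_deriv_zero (Or.inr (s2 r h1))]
        simp
      rw [hWr]
      have hk := hκ r ⟨hr0, by linarith⟩
      have a1 : (p - 1) * (δ / (r + δ) ^ 2) ^ 2 ≤ n * (δ / (r + δ) ^ 2) ^ 2 := by gcongr
      have a2 : n * (1 / r ^ 2 - L / r) * (r / (r + δ)) ^ 2 ≤ n * κ r * (r / (r + δ)) ^ 2 := by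
        gcongr
      have a3 : n * (1 / r ^ 2 - L / r) * (r / (r + δ)) ^ 2 - n * (δ / (r + δ) ^ 2) ^ 2 =
          n * (r / (r + δ) ^ 4 * (r + 2 * δ - L * (r + δ) ^ 2)) := by
        field_simp
        ring
      have a4 : (r + δ) / 2 ≤ r + 2 * δ - L * (r + δ) ^ 2 := by
        have : L * (r + δ) ≤ 1 / 2 := by nlinarith
        have : L * (r + δ) * (r + δ) ≤ 1 / 2 * (r + δ) := by gcongr
        nlinarith
      have a5 : r * (1 / (2 * (r + δ) ^ 3)) ≤
          r / (r + δ) ^ 4 * (r + 2 * δ - L * (r + δ) ^ 2) := by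
        calc _ = r / (r + δ) ^ 4 * ((r + δ) / 2) := by field_simp
          _ ≤ _ := by gcongr
      have a6 : 0 ≤ r * (1 / (2 * (r + δ) ^ 3)) := by positivity
      have a7 : r / (r + δ) ^ 4 * (r + 2 * δ - L * (r + δ) ^ 2) ≤
          n * (r / (r + δ) ^ 4 * (r + 2 * δ - L * (r + δ) ^ 2)) :=
        le_mul_of_one_le_left (a6.trans a5) hn
      linarith
    have w3 : ∀ r, δ ≤ r → r ≤ r₀ → W r ≤ -(1 / 16) := by
      intro r h1 h2
      refine (w2 r (by linarith) h2).trans (neg_le_neg ?_)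
      have hr0 : 0 < r := by linarith
      calc (1:ℝ) / 16 ≤ 1 / (16 * r ^ 2) := by
            apply one_div_le_one_div_of_le (by positivity); nlinarith
        _ = r * (1 / (2 * (2 * r) ^ 3)) := by field_simp; norm_num
        _ ≤ _ := by gcongr; linarith
    have w4 : ∀ r, r₀ ≤ r → r ≤ 2 * r₀ → W r ≤ K' := by
      intro r h1 h2
      have hr0 : 0 < r := by linarith
      have hκr := hκ0 r ⟨hr0, h2⟩
      have : 0 ≤ n * κ r * cutProfile r₀ δ ε r ^ 2 := by positivity
      refine le_trans (sub_le_self _ this) (mul_le_mul_of_nonneg_left ?_ hp'.le)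
      rw [(cutProfile_hasDerivAt r₀ ε hδ hr0).deriv]
      have hs := s2 r (by linarith)
      rw [Real.smoothTransition.one_of_one_le hs, smoothTransition_deriv_zero (Or.inr hs)]
      simp only [mul_one, zero_mul, mul_zero, add_zero]
      rw [← sq_abs]
      apply pow_le_pow_left₀ (abs_nonneg _)
      have b1 : |δ / (r + δ) ^ 2 * Real.smoothTransition (2 - r / r₀)| ≤ 1 / r₀ := by
        rw [abs_of_nonneg (mul_nonneg (by positivity) (S0 _))]
        calc _ ≤ δ / (r + δ) ^ 2 * 1 := by gcongr; exact S1 _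
          _ ≤ (r + δ) / (r + δ) ^ 2 * 1 := by gcongr; linarith
          _ = 1 / (r + δ) := by field_simp
          _ ≤ 1 / r₀ := by gcongr; linarith
      have b2 : |r / (r + δ) * (deriv Real.smoothTransition (2 - r / r₀) * (-(1 / r₀)))|
          ≤ D / r₀ := by
        rw [abs_mul, abs_mul, abs_neg, abs_of_pos (by positivity : 0 < 1 / r₀),
          abs_of_pos (by positivity : 0 < r / (r + δ))]
        have : r / (r + δ) ≤ 1 := (div_le_one (by positivity)).2 (by linarith)
        calc _ ≤ 1 * (D * (1 / r₀)) := by gcongr; exact hDb _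
          _ = _ := by ring
      refine (abs_add_le _ _).trans ((add_le_add b1 b2).trans (le_of_eq (by ring)))
    have w5 : ∀ r, 2 * r₀ ≤ r → W r = 0 := by
      intro r h1
      have hr0 : 0 < r := by linarith
      simp only [hW]
      have hs := s1' r (by linarith)
      rw [(cutProfile_hasDerivAt r₀ ε hδ hr0).deriv, cutProfile,
          Real.smoothTransition.zero_of_nonpos hs, smoothTransition_deriv_zero (Or.inl hs)]
      simp
    have hEi : ∀ a b : ℝ, IntervalIntegrable (fun r => V r * W r) volume a b :=
      fun a b => hEc.intervalIntegrable a b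
    have mono : ∀ a b c : ℝ, 0 ≤ a → a ≤ b → b ≤ 1 → (∀ r ∈ Ioo a b, W r ≤ c) →
        ∫ r in a..b, V r * W r ≤ c * ∫ r in a..b, V r := by
      intro a b c h1 h2 h3 h4
      rw [← intervalIntegral.integral_const_mul]
      refine intervalIntegral.integral_mono_on_of_le_Ioo h2 (hEi a b)
        ((hsub h1 h2 h3).const_mul c) fun r hr => ?_
      rw [mul_comm]
      exact mul_le_mul_of_nonneg_right (h4 r hr) (hV r ⟨h1.trans_lt hr.1, hr.2.trans_le h3⟩)
    have i1 := mono 0 (2 * ε) _ le_rfl (by linarith) (by linarith) w1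
    have i2 := mono (2 * ε) δ 0 (by linarith) (by linarith) (by linarith) fun r hr =>
      (w2 r hr.1.le (by linarith [hr.2])).trans (neg_nonpos.2 (by
        have : 0 < r := by linarith [hr.1]
        positivity))
    have i3 := mono δ r₀ _ hδ.le hδr.le (by linarith) fun r hr => w3 r hr.1.le hr.2.le
    have i4 := mono r₀ (2 * r₀) _ hr₀.le (by linarith) (by linarith) fun r hr =>
      w4 r hr.1.le hr.2.le
    have i5 := mono (2 * r₀) 1 0 (by linarith) (by linarith) (by linarith) fun r hr =>
      (w5 r hr.1.le).le
    have hsplit : ∫ r in (0:ℝ)..1, V r * W r = (∫ r in (0:ℝ)..(2 * ε), V r * W r) +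
        (∫ r in (2 * ε)..δ, V r * W r) + (∫ r in δ..r₀, V r * W r) +
        (∫ r in r₀..(2 * r₀), V r * W r) + ∫ r in (2 * r₀)..1, V r * W r := by
      rw [intervalIntegral.integral_add_adjacent_intervals (hEi _ _) (hEi _ _),
        intervalIntegral.integral_add_adjacent_intervals (hEi _ _) (hEi _ _),
        intervalIntegral.integral_add_adjacent_intervals (hEi _ _) (hEi _ _),
        intervalIntegral.integral_add_adjacent_intervals (hEi _ _) (hEi _ _)]
    have hE' : 0 ≤ ∫ r in (0:ℝ)..1, V r * W r := hE
    rw [hsplit] at hE'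
    linarith
  have hprim : ContinuousOn (fun x => ∫ r in (0:ℝ)..x, V r) (Icc 0 1) := by
    have := intervalIntegral.continuousOn_primitive_interval (f := V) (μ := volume)
      (a := (0:ℝ)) (b := 1) ((intervalIntegrable_iff_integrableOn_Icc_of_le zero_le_one).1 hVi
        |> fun h => by rwa [uIcc_of_le zero_le_one])
    rwa [uIcc_of_le zero_le_one] at this
  have hlim : Tendsto (fun x => ∫ r in (0:ℝ)..x, V r) (nhdsWithin 0 (Ioi 0)) (nhds 0) := by
    have h := hprim 0 (by simp)
    have h' := h.mono_left (nhdsWithin_le_of_mem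
      (Icc_mem_nhdsGT (zero_lt_one)) : nhdsWithin (0:ℝ) (Ioi 0) ≤ nhdsWithin 0 (Icc 0 1))
    simpa using h'
  have main2 : ∀ δ : ℝ, 0 < δ → δ < r₀ →
      (1 / 16) * ∫ r in δ..r₀, V r ≤ K' * ∫ r in r₀..(2 * r₀), V r := by
    intro δ hδ hδr
    have hl : Tendsto (fun x => K' * (∫ r in r₀..(2 * r₀), V r) +
        (p - 1) * ((1 + 2 * D) / δ) ^ 2 * ∫ r in (0:ℝ)..x, V r) (nhdsWithin 0 (Ioi 0))
        (nhds (K' * (∫ r in r₀..(2 * r₀), V r) + (p - 1) * ((1 + 2 * D) / δ) ^ 2 * 0)) :=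
      (hlim.const_mul _).const_add _
    rw [mul_zero, add_zero] at hl
    refine ge_of_tendsto hl ?_
    filter_upwards [Ioo_mem_nhdsGT hδ] with x hx
    have := main δ (x / 2) (by linarith [hx.1]) (by linarith [hx.2]) hδr
    rwa [mul_div_cancel₀ x (two_ne_zero)] at this
  have main3 : (1 / 16) * ∫ r in (0:ℝ)..r₀, V r ≤ K' * ∫ r in r₀..(2 * r₀), V r := by
    have hl : Tendsto (fun x => (1 / 16) * ((∫ r in (0:ℝ)..r₀, V r) - ∫ r in (0:ℝ)..x, V r))
        (nhdsWithin 0 (Ioi 0)) (nhds ((1 / 16) * ((∫ r in (0:ℝ)..r₀, V r) - 0))) :=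
      (hlim.const_sub _).const_mul _
    rw [sub_zero] at hl
    refine le_of_tendsto hl ?_
    filter_upwards [Ioo_mem_nhdsGT hr₀] with x hx
    rw [intervalIntegral.integral_interval_sub_left (hsub le_rfl hr₀.le (by linarith))
      (hsub le_rfl hx.1.le (by linarith [hx.2]))]
    exact main2 x hx.1 hx.2
  have hnn : 0 ≤ ∫ r in (2 * r₀)..1, V r := by
    have := intervalIntegral.integral_mono_on_of_le_Ioo (f := fun _ => (0:ℝ)) hr₀'.le
      (by simp) (hsub (by linarith) hr₀'.le le_rfl)
      (fun r hr => hV r ⟨by linarith [hr.1], hr.2⟩)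
    simpa using this
  have hadd := intervalIntegral.integral_add_adjacent_intervals
    (hsub hr₀.le (by linarith : r₀ ≤ 2 * r₀) hr₀'.le) (hsub (by linarith) hr₀'.le le_rfl)
  rw [← hadd]
  have := mul_nonneg hK'0.le hnn
  linarith

/-! ### Integrals over subintervals of `(0, 1)` -/

lemma integral_nonneg_of_Ioo {g : ℝ → ℝ} {a b : ℝ} (hab : a ≤ b)
    (hg : ∀ r ∈ Ioo a b, 0 ≤ g r) : 0 ≤ ∫ r in a..b, g r := by
  rw [intervalIntegral.integral_of_le hab, integral_Ioc_eq_integral_Ioo]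
  exact setIntegral_nonneg measurableSet_Ioo hg

lemma intervalIntegrable_sub_unit {g : ℝ → ℝ} (hg : IntervalIntegrable g volume 0 1) {a b : ℝ}
    (h1 : 0 ≤ a) (h2 : a ≤ b) (h3 : b ≤ 1) : IntervalIntegrable g volume a b := by
  apply hg.mono_set
  rw [uIcc_of_le h2, uIcc_of_le zero_le_one]; exact Icc_subset_Icc h1 h3

lemma integral_sub_unit_le {g : ℝ → ℝ} (hg : IntervalIntegrable g volume 0 1)
    (hg0 : ∀ r ∈ Ioo (0:ℝ) 1, 0 ≤ g r) {a b : ℝ} (h1 : 0 ≤ a) (h2 : a ≤ b) (h3 : b ≤ 1) :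
    ∫ r in a..b, g r ≤ ∫ r in (0:ℝ)..1, g r := by
  have e1 := intervalIntegral.integral_add_adjacent_intervals
    (intervalIntegrable_sub_unit hg le_rfl h1 (h2.trans h3)) (intervalIntegrable_sub_unit hg h1 h2 h3)
  have e2 := intervalIntegral.integral_add_adjacent_intervals
    (intervalIntegrable_sub_unit hg le_rfl (h1.trans h2) h3)
    (intervalIntegrable_sub_unit hg (h1.trans h2) h3 le_rfl)
  have := integral_nonneg_of_Ioo h1 fun r hr => hg0 r ⟨hr.1, by linarith [hr.2]⟩
  have := integral_nonneg_of_Ioo h3 fun r hr => hg0 r ⟨by linarith [hr.1], hr.2⟩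
  linarith

/-! ### The flux -/

/-- The equation in divergence form: the derivative of the flux `(-u') ^ (p - 1) ψ ^ n` is the source
`f(u) ψ ^ n`. -/
lemma flux_hasDerivAt {n p : ℝ} {ψ f u : ℝ → ℝ}
    (hψ : ContDiffOn ℝ (⊤ : ℕ∞) ψ (Ioo 0 1)) (hψpos : ∀ r ∈ Ioo (0:ℝ) 1, 0 < ψ r)
    (hu : ContDiffOn ℝ 2 u (Ioo 0 1)) (hu' : ∀ r ∈ Ioo (0:ℝ) 1, deriv u r < 0)
    (heq : ∀ r ∈ Ioo (0:ℝ) 1,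
        -(p - 1) * |deriv u r| ^ (p - 2) * deriv (deriv u) r
          - n * (deriv ψ r / ψ r) * |deriv u r| ^ (p - 2) * deriv u r = f (u r))
    {r : ℝ} (hr : r ∈ Ioo (0:ℝ) 1) :
    HasDerivAt (fun r => (-deriv u r) ^ (p - 1) * ψ r ^ n) (f (u r) * ψ r ^ n) r := by
  have hO : IsOpen (Ioo (0:ℝ) 1) := isOpen_Ioo
  have hm : Ioo (0:ℝ) 1 ∈ nhds r := hO.mem_nhds hr
  have cu' : ContDiffOn ℝ 1 (deriv u) (Ioo 0 1) := hu.deriv_of_isOpen hO (by norm_num)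
  have hv : 0 < -deriv u r := neg_pos.2 (hu' r hr)
  have hψr := hψpos r hr
  have d_v : HasDerivAt (fun r => -deriv u r) (-deriv (deriv u) r) r :=
    ((cu'.differentiableOn (by simp)).differentiableAt hm).hasDerivAt.neg
  have d_ψ : HasDerivAt ψ (deriv ψ r) r :=
    ((hψ.differentiableOn (by simp)).differentiableAt hm).hasDerivAt
  refine ((d_v.rpow_const (p := p - 1) (Or.inl hv.ne')).mul
    (d_ψ.rpow_const (p := n) (Or.inl hψr.ne'))).congr_deriv ?_
  have hode := heq r hr
  have habs : |deriv u r| = -deriv u r := abs_of_neg (hu' r hr)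
  rw [habs] at hode
  rw [← hode]
  have q1 : (-deriv u r) ^ (p - 1) = (-deriv u r) ^ (p - 2) * (-deriv u r) := by
    rw [show p - 1 = (p - 2) + 1 by ring, Real.rpow_add_one hv.ne']
  have q3 : ψ r ^ (n - 1) = ψ r ^ n / ψ r := Real.rpow_sub_one hψr.ne' n
  have q4 : (p - 1 - 1) = p - 2 := by ring
  rw [q4, q1, q3]
  generalize (-deriv u r) ^ (p - 2) = P
  generalize ψ r ^ n = W
  field_simp
  ring

/-- The source is integrable up to the origin, being the nonnegative derivative of a function that is
bounded below there. -/
lemma source_intervalIntegrable {Φ g : ℝ → ℝ} (hΦ : ∀ r ∈ Ioo (0:ℝ) 1, HasDerivAt Φ (g r) r)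
    (hΦ0 : ∀ r ∈ Ioo (0:ℝ) 1, 0 ≤ Φ r) (hg : ContinuousOn g (Ioc 0 1))
    (hg0 : ∀ r ∈ Ioo (0:ℝ) 1, 0 ≤ g r) : IntervalIntegrable g volume 0 1 := by
  have hI : ∀ a b : ℝ, 0 < a → a ≤ b → b ≤ 1 → IntervalIntegrable g volume a b := by
    intro a b h1 h2 h3
    apply ContinuousOn.intervalIntegrable
    rw [uIcc_of_le h2]
    exact hg.mono fun x hx => ⟨h1.trans_le hx.1, hx.2.trans h3⟩
  refine IntervalIntegrable.trans (b := 1 / 2) ?_ (hI _ _ (by norm_num) (by norm_num) le_rfl)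
  rw [intervalIntegrable_iff_integrableOn_Ioc_of_le (by norm_num)]
  have hk : ∀ k : ℕ, (0:ℝ) < 1 / (k + 2 : ℝ) ∧ 1 / (k + 2 : ℝ) ≤ 1 / 2 := fun k =>
    ⟨by positivity, by
      apply one_div_le_one_div_of_le (by norm_num)
      have : (0:ℝ) ≤ k := k.cast_nonneg
      linarith⟩
  refine integrableOn_Ioc_of_intervalIntegral_norm_bounded_left (l := atTop)
    (a := fun k : ℕ => 1 / (k + 2 : ℝ)) (I := Φ (1 / 2)) (fun k => ?_) ?_
    (Eventually.of_forall fun k => ?_)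
  · rw [← intervalIntegrable_iff_integrableOn_Ioc_of_le (hk k).2]
    exact hI _ _ (hk k).1 (hk k).2 (by norm_num)
  · have := (tendsto_one_div_add_atTop_nhds_zero_nat (𝕜 := ℝ)).comp (tendsto_add_atTop_nat 1)
    refine this.congr fun k => ?_
    simp only [Function.comp_apply]; push_cast; ring
  · have hc : ∫ x in Ioc (1 / (k + 2 : ℝ)) (1 / 2), ‖g x‖ =
        ∫ x in Ioc (1 / (k + 2 : ℝ)) (1 / 2), g x :=
      setIntegral_congr_fun measurableSet_Ioc fun x hx => Real.norm_of_nonneg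
        (hg0 x ⟨(hk k).1.trans hx.1, by linarith [hx.2]⟩)
    rw [hc, ← intervalIntegral.integral_of_le (hk k).2,
      intervalIntegral.integral_eq_sub_of_hasDerivAt (f := Φ) (fun x hx => ?_)
        (hI _ _ (hk k).1 (hk k).2 (by norm_num))]
    · have := hΦ0 (1 / (k + 2 : ℝ)) ⟨(hk k).1, by linarith [(hk k).2]⟩
      linarith
    · rw [uIcc_of_le (hk k).2] at hx
      exact hΦ x ⟨(hk k).1.trans_le hx.1, by linarith [hx.2]⟩

lemma flux_le_add {Φ g : ℝ → ℝ} (hΦ : ∀ r ∈ Ioo (0:ℝ) 1, HasDerivAt Φ (g r) r)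
    (hg0 : ∀ r ∈ Ioo (0:ℝ) 1, 0 ≤ g r) (hgi : IntervalIntegrable g volume 0 1)
    {s r : ℝ} (hs : s ∈ Ioo (0:ℝ) 1) (hr : r ∈ Ioo (0:ℝ) 1) :
    Φ r ≤ Φ s + ∫ r in (0:ℝ)..1, g r := by
  have key : ∀ {a b : ℝ}, 0 < a → a ≤ b → b < 1 → ∫ x in a..b, g x = Φ b - Φ a := by
    intro a b h1 h2 h3
    apply intervalIntegral.integral_eq_sub_of_hasDerivAt (fun x hx => ?_)
      (intervalIntegrable_sub_unit hgi h1.le h2 h3.le)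
    rw [uIcc_of_le h2] at hx
    exact hΦ x ⟨h1.trans_le hx.1, hx.2.trans_lt h3⟩
  rcases le_total s r with h | h
  · have := integral_sub_unit_le hgi hg0 hs.1.le h hr.2.le
    rw [key hs.1 h hr.2] at this
    linarith
  · have h1 := key hr.1 h hs.2
    have h2 := integral_nonneg_of_Ioo h fun x hx => hg0 x ⟨hr.1.trans hx.1, hx.2.trans hs.2⟩
    have h3 := integral_nonneg_of_Ioo zero_le_one hg0
    linarith

/-- When the energy density `v Φ` is integrable, the flux is bounded by the total source. Otherwise
`Φ ≥ c > 0` near the origin, and then `v ≥ d / r` there since `w ≤ (M r) ^ n` and `p - 1 ≤ n`, so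
that `v Φ ≥ c d / r` would not be integrable. -/
lemma flux_le_source {n p M : ℝ} {v w Φ g : ℝ → ℝ} (hp : 1 < p) (hpn : p - 1 ≤ n) (hM : 0 < M)
    (hv : ∀ r ∈ Ioo (0:ℝ) 1, 0 < v r) (hw : ∀ r ∈ Ioo (0:ℝ) 1, 0 < w r ∧ w r ≤ (M * r) ^ n)
    (hΦv : ∀ r ∈ Ioo (0:ℝ) 1, Φ r = v r ^ (p - 1) * w r)
    (hadd : ∀ s ∈ Ioo (0:ℝ) 1, ∀ r ∈ Ioo (0:ℝ) 1, Φ r ≤ Φ s + ∫ r in (0:ℝ)..1, g r)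
    (hV : IntervalIntegrable (fun r => v r * Φ r) volume 0 1)
    {r : ℝ} (hr : r ∈ Ioo (0:ℝ) 1) : Φ r ≤ ∫ r in (0:ℝ)..1, g r := by
  by_contra! hlt
  have hp' : 0 < p - 1 := by linarith
  set c := Φ r - ∫ r in (0:ℝ)..1, g r with hc
  have hc0 : 0 < c := by linarith
  have hcs : ∀ s ∈ Ioo (0:ℝ) 1, c ≤ Φ s := fun s hs => by linarith [hadd s hs r hr]
  have hMn : 0 < M ^ n := Real.rpow_pos_of_pos hM n
  set d := (c / M ^ n) ^ (p - 1)⁻¹ with hd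
  have hd0 : 0 < d := Real.rpow_pos_of_pos (by positivity) _
  have hvs : ∀ s ∈ Ioo (0:ℝ) 1, d ≤ v s * s := by
    intro s hs
    have hs0 := hs.1
    have hvs := hv s hs
    rw [hd, Real.rpow_inv_le_iff_of_pos (by positivity) (by positivity) hp',
      Real.mul_rpow hvs.le hs0.le, div_le_iff₀ hMn]
    have h1 := hcs s hs
    rw [hΦv s hs] at h1
    have h2 : s ^ n ≤ s ^ (p - 1) := Real.rpow_le_rpow_of_exponent_ge hs0 hs.2.le hpn
    have h3 := (hw s hs).2
    rw [Real.mul_rpow hM.le hs0.le] at h3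
    have hvp : 0 < v s ^ (p - 1) := Real.rpow_pos_of_pos hvs _
    calc c ≤ v s ^ (p - 1) * w s := h1
      _ ≤ v s ^ (p - 1) * (M ^ n * s ^ n) := by gcongr
      _ ≤ v s ^ (p - 1) * (M ^ n * s ^ (p - 1)) := by gcongr
      _ = _ := by ring
  have hinv : IntervalIntegrable (fun s : ℝ => s⁻¹) volume 0 r := by
    refine (((intervalIntegrable_sub_unit hV le_rfl hr.1.le hr.2.le).const_mul
      (1 / (c * d)))).mono_fun' measurable_inv.aestronglyMeasurable ?_
    rw [uIoc_of_le hr.1.le]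
    refine (ae_restrict_iff' measurableSet_Ioc).2 (Eventually.of_forall fun s hs => ?_)
    have hs' : s ∈ Ioo (0:ℝ) 1 := ⟨hs.1, hs.2.trans_lt hr.2⟩
    have hs0 := hs.1
    simp only [norm_inv, Real.norm_of_nonneg hs0.le]
    have h1 := hvs s hs'
    have h2 := hcs s hs'
    have h3 : c * d ≤ Φ s * (v s * s) := mul_le_mul h2 h1 hd0.le (hc0.le.trans h2)
    rw [inv_eq_one_div, div_le_iff₀ hs0, one_div, mul_assoc, ← div_eq_inv_mul,
      le_div_iff₀ (by positivity)]
    linarith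
  rw [intervalIntegrable_inv_iff] at hinv
  rcases hinv with h | h
  · exact hr.1.ne h
  · exact h left_mem_uIcc

/-- The function `u ^ (p - 1) w` is bounded: by the mean value theorem on `[r, 1]`, `u(r) ≤ -u'(s)`
for some `s > r`, and the bound on the flux gives `(-u'(s)) ^ (p - 1) ≤ B / w(s) ≤ B / (m r) ^ n`. -/
lemma mass_intervalIntegrable {n p m M B : ℝ} {u w Φ : ℝ → ℝ} (hn : 0 ≤ n) (hp : 1 < p)
    (hm : 0 < m) (hM : 0 < M)
    (hu : DifferentiableOn ℝ u (Ioo 0 1)) (hu' : ∀ r ∈ Ioo (0:ℝ) 1, deriv u r < 0)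
    (hu0 : ∀ r ∈ Ioo (0:ℝ) 1, 0 < u r) (huc : ContinuousOn u (Ioc 0 1)) (hu1 : u 1 = 0)
    (hwc : ContinuousOn w (Ioo 0 1))
    (hw : ∀ r ∈ Ioo (0:ℝ) 1, (m * r) ^ n ≤ w r ∧ w r ≤ (M * r) ^ n)
    (hΦv : ∀ r ∈ Ioo (0:ℝ) 1, Φ r = (-deriv u r) ^ (p - 1) * w r)
    (hΦB : ∀ r ∈ Ioo (0:ℝ) 1, Φ r ≤ B) :
    IntervalIntegrable (fun r => u r ^ (p - 1) * w r) volume 0 1 := by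
  have hp' : 0 < p - 1 := by linarith
  rw [intervalIntegrable_iff_integrableOn_Ioo_of_le zero_le_one]
  have hc : ContinuousOn (fun r => u r ^ (p - 1) * w r) (Ioo 0 1) :=
    (hu.continuousOn.rpow_const fun r hr => Or.inr hp'.le).mul hwc
  refine IntegrableOn.of_bound (by simp) (hc.aestronglyMeasurable measurableSet_Ioo)
    (B / m ^ n * M ^ n) ?_
  refine (ae_restrict_iff' measurableSet_Ioo).2 (Eventually.of_forall fun r hr => ?_)
  have hr0 := hr.1
  have hmn : 0 < m ^ n := Real.rpow_pos_of_pos hm n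
  have hMn : 0 < M ^ n := Real.rpow_pos_of_pos hM n
  have hrn : 0 < r ^ n := Real.rpow_pos_of_pos hr0 n
  obtain ⟨hw1, hw2⟩ := hw r hr
  rw [Real.mul_rpow hm.le hr0.le] at hw1
  rw [Real.mul_rpow hM.le hr0.le] at hw2
  have hw0 : 0 < w r := lt_of_lt_of_le (by positivity) hw1
  have hur := hu0 r hr
  have hup : 0 < u r ^ (p - 1) := Real.rpow_pos_of_pos hur _
  rw [Real.norm_of_nonneg (by positivity)]
  obtain ⟨s, hs, hslope⟩ := exists_deriv_eq_slope u hr.2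
    (huc.mono fun x hx => ⟨hr0.trans_le hx.1, hx.2⟩)
    (hu.mono fun x hx => ⟨hr0.trans hx.1, hx.2⟩)
  have hs' : s ∈ Ioo (0:ℝ) 1 := ⟨hr0.trans hs.1, hs.2⟩
  have hus := hu' s hs'
  have hle : u r ≤ -deriv u s := by
    have h1r : 0 < 1 - r := by linarith [hr.2]
    rw [hslope, hu1, zero_sub, neg_div, neg_neg, le_div_iff₀ h1r]
    nlinarith
  have hws := (hw s hs').1
  have hΦs := hΦB s hs'
  rw [hΦv s hs'] at hΦs
  have hms : m ^ n * r ^ n ≤ w s := by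
    rw [← Real.mul_rpow hm.le hr0.le]
    refine le_trans (Real.rpow_le_rpow (by positivity) ?_ hn) hws
    have := hs.1.le
    gcongr
  have h1 : u r ^ (p - 1) * (m ^ n * r ^ n) ≤ B := by
    refine le_trans ?_ hΦs
    have h2 : u r ^ (p - 1) ≤ (-deriv u s) ^ (p - 1) := Real.rpow_le_rpow hur.le hle hp'.le
    have h3 : 0 ≤ (-deriv u s) ^ (p - 1) := hup.le.trans h2
    gcongr
  calc u r ^ (p - 1) * w r ≤ u r ^ (p - 1) * (M ^ n * r ^ n) := by gcongr
    _ = u r ^ (p - 1) * (m ^ n * r ^ n) / m ^ n * M ^ n := by field_simp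
    _ ≤ B / m ^ n * M ^ n := by gcongr

/-- The integral of `-u' Φ` is first bounded on `(r₀, b)` with `b < 1`, as `u` need not be
differentiable at `1`. -/
lemma tail_energy_le {u Φ : ℝ → ℝ} {F r₀ : ℝ} (hr₀ : r₀ ∈ Ioo (0:ℝ) 1) (hF : 0 ≤ F)
    (hu : ContDiffOn ℝ 2 u (Ioo 0 1)) (hu' : ∀ r ∈ Ioo (0:ℝ) 1, deriv u r < 0)
    (hu0 : ∀ r ∈ Ioo (0:ℝ) 1, 0 < u r) (hΦF : ∀ r ∈ Ioo (0:ℝ) 1, Φ r ≤ F)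
    (hV : IntervalIntegrable (fun r => -deriv u r * Φ r) volume 0 1) :
    ∫ r in r₀..1, -deriv u r * Φ r ≤ F * u r₀ := by
  have hV1 := intervalIntegrable_sub_unit hV hr₀.1.le hr₀.2.le le_rfl
  have hprim := intervalIntegral.continuousOn_primitive_interval
    (f := fun r => -deriv u r * Φ r) (μ := volume) (a := r₀) (b := 1)
    (by rwa [uIcc_of_le hr₀.2.le, ← intervalIntegrable_iff_integrableOn_Icc_of_le hr₀.2.le])
  rw [uIcc_of_le hr₀.2.le] at hprim
  have hlim : Tendsto (fun x => ∫ r in r₀..x, -deriv u r * Φ r) (nhdsWithin 1 (Iio 1))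
      (nhds (∫ r in r₀..1, -deriv u r * Φ r)) :=
    (hprim 1 (right_mem_Icc.2 hr₀.2.le)).mono_left (nhdsWithin_le_of_mem (Icc_mem_nhdsLT hr₀.2))
  refine le_of_tendsto hlim ?_
  filter_upwards [Ioo_mem_nhdsLT hr₀.2] with b hb
  have cu' : ContinuousOn (deriv u) (Ioo 0 1) :=
    hu.continuousOn_deriv_of_isOpen isOpen_Ioo (by norm_num)
  have hsub : Icc r₀ b ⊆ Ioo (0:ℝ) 1 := fun x hx => ⟨hr₀.1.trans_le hx.1, hx.2.trans_lt hb.2⟩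
  have hi : IntervalIntegrable (deriv u) volume r₀ b := by
    apply ContinuousOn.intervalIntegrable
    rw [uIcc_of_le hb.1.le]; exact cu'.mono hsub
  calc ∫ r in r₀..b, -deriv u r * Φ r ≤ ∫ r in r₀..b, -deriv u r * F := by
        refine intervalIntegral.integral_mono_on hb.1.le
          (intervalIntegrable_sub_unit hV hr₀.1.le hb.1.le hb.2.le) (hi.neg.mul_const F)
          fun x hx => ?_
        exact mul_le_mul_of_nonneg_left (hΦF x (hsub hx)) (neg_pos.2 (hu' x (hsub hx))).le
    _ = F * (u r₀ - u b) := by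
        rw [intervalIntegral.integral_mul_const, intervalIntegral.integral_neg,
          intervalIntegral.integral_eq_sub_of_hasDerivAt (f := u) (fun x hx => ?_) hi]
        · ring
        · rw [uIcc_of_le hb.1.le] at hx
          exact ((hu.differentiableOn (by norm_num)).differentiableAt
            (isOpen_Ioo.mem_nhds (hsub hx))).hasDerivAt
    _ ≤ F * u r₀ := by
        have := hu0 b (hsub (right_mem_Icc.2 hb.1.le))
        exact mul_le_mul_of_nonneg_left (by linarith) hF

/-! ### The energy estimate -/

/-- Energy estimate for semi-stable radial classical Dirichlet
solutions: ∫₀¹ |u'|^p ψ^{N−1} ≤ C (∫₀¹ f(u) ψ^{N−1}) (∫₀¹ u^{p−1} ψ^{N−1})^{1/(p−1)},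
with C depending only on N, p and ψ. -/
theorem energy_estimate
    (N : ℕ) (hN : 2 ≤ N) (p : ℝ) (hp1 : 1 < p) (hpN : p ≤ N)
    (ψ : ℝ → ℝ) (hψ : ContDiffOn ℝ (⊤ : ℕ∞) ψ (Set.Icc 0 1))
    (hψ0 : ψ 0 = 0) (hψ'0 : deriv ψ 0 = 1) (hψ''0 : deriv (deriv ψ) 0 = 0)
    (hψpos : ∀ r ∈ Set.Ioo (0:ℝ) 1, 0 < ψ r) (hψ1 : 0 < ψ 1) :
    ∃ C : ℝ, 0 < C ∧ ∀ (f u : ℝ → ℝ),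
      ContDiff ℝ 1 f →
      ContDiffOn ℝ 2 u (Set.Ioo 0 1) →
      (∀ r ∈ Set.Ioo (0:ℝ) 1, deriv u r < 0) →
      (∀ r ∈ Set.Ioo (0:ℝ) 1,
        -(p - 1) * |deriv u r| ^ (p - 2) * deriv (deriv u) r
          - ((N : ℝ) - 1) * (deriv ψ r / ψ r) * |deriv u r| ^ (p - 2) * deriv u r
          = f (u r)) →
      (∀ r ∈ Set.Ioo (0:ℝ) 1, 0 < u r) →
      (∀ r ∈ Set.Ioo (0:ℝ) 1, 0 ≤ f (u r)) →
      ContinuousOn u (Set.Ioc 0 1) →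
      u 1 = 0 →
      (∀ ξ : ℝ → ℝ, ContDiff ℝ 1 ξ → tsupport ξ ⊆ Set.Ioo (0:ℝ) 1 →
        0 ≤ ∫ r in (0:ℝ)..1,
          ((p - 1) * |deriv u r| ^ (p - 2) * (deriv ξ r) ^ 2
            - deriv f (u r) * ξ r ^ 2) * ψ r ^ ((N : ℝ) - 1)) →
      ∫ r in (0:ℝ)..1, |deriv u r| ^ p * ψ r ^ ((N : ℝ) - 1)
        ≤ C * (∫ r in (0:ℝ)..1, f (u r) * ψ r ^ ((N : ℝ) - 1))
            * (∫ r in (0:ℝ)..1, u r ^ (p - 1) * ψ r ^ ((N : ℝ) - 1)) ^ (1 / (p - 1)) := by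
  have hn : (1:ℝ) ≤ (N:ℝ) - 1 := by
    have : (2:ℝ) ≤ N := by exact_mod_cast hN
    linarith
  have hp' : 0 < p - 1 := by linarith
  have hpn : p - 1 ≤ (N:ℝ) - 1 := by linarith
  generalize (N:ℝ) - 1 = n at hn hpn ⊢
  obtain ⟨r₀, L, m, M, hr₀, hr₀', hL, hLr, hm, hM, hbd, hκ⟩ :=
    warping_bounds_s13 ψ hψ hψ0 hψ'0 hψpos hψ1
  obtain ⟨K, hK, hcore⟩ := hardy_core hn hp1 hpn hr₀ hr₀' hL hLr hκ
  have hψO : ContDiffOn ℝ (⊤ : ℕ∞) ψ (Ioo 0 1) := hψ.mono Ioo_subset_Icc_self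
  have hψnn : ∀ r ∈ Icc (0:ℝ) 1, 0 ≤ ψ r := by
    intro r hr
    rcases eq_or_lt_of_le hr.1 with h | h
    · rw [← h, hψ0]
    rcases eq_or_lt_of_le hr.2 with h' | h'
    · rw [h']; exact hψ1.le
    · exact (hψpos r ⟨h, h'⟩).le
  have hwc : ContinuousOn (fun r => ψ r ^ n) (Icc 0 1) :=
    hψ.continuousOn.rpow_const fun r _ => Or.inr (by linarith)
  have hwpos : ∀ r ∈ Ioo (0:ℝ) 1, 0 < ψ r ^ n := fun r hr => Real.rpow_pos_of_pos (hψpos r hr) n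
  have hwbd : ∀ r ∈ Ioo (0:ℝ) 1, (m * r) ^ n ≤ ψ r ^ n ∧ ψ r ^ n ≤ (M * r) ^ n := by
    intro r hr
    have := hr.1
    exact ⟨Real.rpow_le_rpow (by positivity) (hbd r hr).1 (by linarith),
      Real.rpow_le_rpow (hψpos r hr).le (hbd r hr).2 (by linarith)⟩
  have hwi : IntervalIntegrable (fun r => ψ r ^ n) volume 0 1 :=
    ContinuousOn.intervalIntegrable (by rwa [uIcc_of_le zero_le_one])
  set W₀ := ∫ r in (0:ℝ)..r₀, ψ r ^ n with hW₀
  have hW₀pos : 0 < W₀ := intervalIntegral.intervalIntegral_pos_of_pos_on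
    (intervalIntegrable_sub_unit hwi le_rfl hr₀.le (by linarith))
    (fun x hx => hwpos x ⟨hx.1, by linarith [hx.2]⟩) hr₀
  refine ⟨(K + 1) * (1 / W₀) ^ (1 / (p - 1)), by positivity, ?_⟩
  intro f u hf hu hu' heq hu0 hfu huc hu1 hst
  have hU0 : 0 ≤ ∫ r in (0:ℝ)..1, u r ^ (p - 1) * ψ r ^ n :=
    integral_nonneg_of_Ioo zero_le_one fun r hr =>
      mul_nonneg (Real.rpow_nonneg (hu0 r hr).le _) (hwpos r hr).le
  have hg0 : ∀ r ∈ Ioo (0:ℝ) 1, 0 ≤ f (u r) * ψ r ^ n := fun r hr =>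
    mul_nonneg (hfu r hr) (hwpos r hr).le
  have hF0 : 0 ≤ ∫ r in (0:ℝ)..1, f (u r) * ψ r ^ n := integral_nonneg_of_Ioo zero_le_one hg0
  by_cases hVi : IntervalIntegrable (fun r => |deriv u r| ^ p * ψ r ^ n) volume 0 1
  swap
  · -- a divergent energy integral has the value `0` by convention
    rw [intervalIntegral.integral_undef hVi]
    positivity
  have hv : ∀ r ∈ Ioo (0:ℝ) 1, 0 < -deriv u r := fun r hr => neg_pos.2 (hu' r hr)
  set Φ : ℝ → ℝ := fun r => (-deriv u r) ^ (p - 1) * ψ r ^ n with hΦ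
  have hVΦ : ∀ r ∈ Ioo (0:ℝ) 1, |deriv u r| ^ p * ψ r ^ n = -deriv u r * Φ r := by
    intro r hr
    have : (-deriv u r) ^ p = (-deriv u r) ^ (p - 1) * (-deriv u r) := by
      rw [← Real.rpow_add_one (hv r hr).ne']; ring_nf
    rw [abs_of_neg (hu' r hr), this, hΦ]
    ring
  have hdΦ : ∀ r ∈ Ioo (0:ℝ) 1, HasDerivAt Φ (f (u r) * ψ r ^ n) r := fun r hr =>
    flux_hasDerivAt hψO hψpos hu hu' heq hr
  have hgi : IntervalIntegrable (fun r => f (u r) * ψ r ^ n) volume 0 1 := by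
    refine source_intervalIntegrable hdΦ (fun r hr =>
      mul_nonneg (Real.rpow_nonneg (hv r hr).le _) (hwpos r hr).le) ?_ hg0
    exact (hf.continuous.comp_continuousOn huc).mul (hwc.mono Ioc_subset_Icc_self)
  have hVi' : IntervalIntegrable (fun r => -deriv u r * Φ r) volume 0 1 := by
    rw [intervalIntegrable_iff_integrableOn_Ioo_of_le zero_le_one] at hVi ⊢
    exact hVi.congr_fun hVΦ measurableSet_Ioo
  have hΦF : ∀ r ∈ Ioo (0:ℝ) 1, Φ r ≤ ∫ r in (0:ℝ)..1, f (u r) * ψ r ^ n := fun r hr =>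
    flux_le_source hp1 hpn hM hv (fun r hr => ⟨hwpos r hr, (hwbd r hr).2⟩) (fun _ _ => rfl)
      (fun s hs r hr => flux_le_add hdΦ hg0 hgi hs hr) hVi' hr
  have hUi : IntervalIntegrable (fun r => u r ^ (p - 1) * ψ r ^ n) volume 0 1 :=
    mass_intervalIntegrable (by linarith) hp1 hm hM (hu.differentiableOn (by norm_num)) hu' hu0 huc
      hu1 (hwc.mono Ioo_subset_Icc_self) hwbd (fun _ _ => rfl) hΦF
  have hr₀I : r₀ ∈ Ioo (0:ℝ) 1 := ⟨hr₀, by linarith⟩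
  have hinner := hcore (fun r => |deriv u r| ^ p * ψ r ^ n)
    (fun r hr => mul_nonneg (Real.rpow_nonneg (abs_nonneg _) _) (hwpos r hr).le) hVi
    (fun η a b ha hb hη hη0 => stability_form hψO hψpos hf hu hu' heq hst ha hb hη hη0)
  have htail : ∫ r in r₀..1, |deriv u r| ^ p * ψ r ^ n ≤
      (∫ r in (0:ℝ)..1, f (u r) * ψ r ^ n) * u r₀ := by
    refine le_of_eq_of_le ?_ (tail_energy_le hr₀I hF0 hu hu' hu0 hΦF hVi')
    rw [intervalIntegral.integral_of_le hr₀I.2.le, intervalIntegral.integral_of_le hr₀I.2.le,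
      integral_Ioc_eq_integral_Ioo, integral_Ioc_eq_integral_Ioo]
    exact setIntegral_congr_fun measurableSet_Ioo fun r hr => hVΦ r ⟨hr₀.trans hr.1, hr.2⟩
  have hanti : StrictAntiOn u (Ioo 0 1) := strictAntiOn_of_deriv_neg (convex_Ioo 0 1)
    hu.continuousOn (by rwa [interior_Ioo])
  have hmass : u r₀ ^ (p - 1) * W₀ ≤ ∫ r in (0:ℝ)..1, u r ^ (p - 1) * ψ r ^ n := by
    refine le_trans ?_ (integral_sub_unit_le hUi (fun r hr =>
      mul_nonneg (Real.rpow_nonneg (hu0 r hr).le _) (hwpos r hr).le) le_rfl hr₀.le hr₀I.2.le)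
    rw [hW₀, ← intervalIntegral.integral_const_mul]
    refine intervalIntegral.integral_mono_on_of_le_Ioo hr₀.le
      ((intervalIntegrable_sub_unit hwi le_rfl hr₀.le hr₀I.2.le).const_mul _)
      (intervalIntegrable_sub_unit hUi le_rfl hr₀.le hr₀I.2.le) fun r hr => ?_
    have hrI : r ∈ Ioo (0:ℝ) 1 := ⟨hr.1, hr.2.trans hr₀I.2⟩
    exact mul_le_mul_of_nonneg_right
      (Real.rpow_le_rpow (hu0 r₀ hr₀I).le (hanti hrI hr₀I hr.2).le hp'.le) (hwpos r hrI).le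
  have hu_r₀ : u r₀ ≤ (1 / W₀) ^ (1 / (p - 1)) *
      (∫ r in (0:ℝ)..1, u r ^ (p - 1) * ψ r ^ n) ^ (1 / (p - 1)) := by
    rw [← Real.mul_rpow (by positivity) hU0, one_div (p - 1),
      Real.le_rpow_inv_iff_of_pos (hu0 r₀ hr₀I).le (by positivity) hp', one_div_mul_eq_div,
      le_div_iff₀ hW₀pos]
    exact hmass
  rw [← intervalIntegral.integral_add_adjacent_intervals
    (intervalIntegrable_sub_unit hVi le_rfl hr₀.le hr₀I.2.le)
    (intervalIntegrable_sub_unit hVi hr₀.le hr₀I.2.le le_rfl)]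
  calc _ ≤ (K + 1) * ∫ r in r₀..1, |deriv u r| ^ p * ψ r ^ n := by linarith
    _ ≤ (K + 1) * ((∫ r in (0:ℝ)..1, f (u r) * ψ r ^ n) * ((1 / W₀) ^ (1 / (p - 1)) *
        (∫ r in (0:ℝ)..1, u r ^ (p - 1) * ψ r ^ n) ^ (1 / (p - 1)))) := by
      refine mul_le_mul_of_nonneg_left (htail.trans ?_) (by linarith)
      exact mul_le_mul_of_nonneg_left hu_r₀ hF0
    _ = _ := by ring
end
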